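/- arXiv:1601.01629 — 3 statements merged into one kernel-verified Lean document; each statement's English description precedes it below -/
import Mathlib

section
/- For every integer n ≥ 1 there exists a constant C_n > 0 (depending only on n) such that for every finite set X of points in ℝ^n and every integer D ≥ 1, there exists a non-zero polynomial p ∈ ℝ[X₁,…,X_n] of total degree at most D such that every connected component of ℝ^n \ Z(p) contains at most C_n · D^(−n) · |X| points of X. -/
/-!
The potential is the number of ordered pairs of points of `X` lying in a common large cell. To
decrease it one need not bisect the large cells simultaneously by the ham sandwich theorem; a
polynomial giving equal signs to at most two thirds of the pairs suffices. Such a polynomial exists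
among those vanishing at one node from each cell: as an alternating form in its nodes and its
argument, it changes sign when a node and a tested point of the same cell are exchanged. Hence, when
three points of a cell take turns as the node, the other two cannot have equal signs every time, and
some choice of nodes does as well as the average. Nodes in degenerate position are handled by
perturbation and compactness.

If all cells have at most `2 T` points, then the potential is at most `2 T * #X`, whereas `k` cells
of more than `T` points contribute at least `k T ^ 2`. As each factor multiplies the potential by
at most `2 / 3`, the degrees needed to remove these cells form a geometric series of sum
`O((#X / T) ^ (1 / n))`. Halving `T` successively from `#X` to `#X / 2 ^ j` gives another one, of
sum `O(2 ^ (j / n))`.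
-/

namespace PolynomialPartitioning

open Finset MvPolynomial

section WeakHamSandwich

/-- The ordered pairs of points of `A` at which `f` takes nonzero values of the same sign. A
function bisecting `A` would have about `#A ^ 2 / 2` of them. -/
def sameSignPairs {P R : Type*} [Zero R] [Mul R] [LT R] [DecidableLT R] (f : P → R)
    (A : Finset P) : Finset (P × P) :=
  {z ∈ A ×ˢ A | 0 < f z.1 * f z.2}

lemma mem_sameSignPairs {P R : Type*} [Zero R] [Mul R] [LT R] [DecidableLT R] {f : P → R}
    {A : Finset P} {z : P × P} :
    z ∈ sameSignPairs f A ↔ (z.1 ∈ A ∧ z.2 ∈ A) ∧ 0 < f z.1 * f z.2 := by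
  simp only [sameSignPairs, mem_filter, mem_product]

lemma card_sameSignPairs_coe {P R : Type*} [Zero R] [Mul R] [LT R] [DecidableLT R] (f : P → R)
    (A : Finset P) :
    #(sameSignPairs (fun x : A => f x) univ) = #(sameSignPairs f A) :=
  card_bij (fun z _ => (z.1, z.2))
    (fun z hz => mem_sameSignPairs.2 ⟨⟨z.1.2, z.2.2⟩, (mem_sameSignPairs.1 hz).2⟩)
    (fun _ _ _ _ h => Prod.ext (Subtype.ext (congrArg Prod.fst h))
      (Subtype.ext (congrArg Prod.snd h)))
    (fun z hz => by
      obtain ⟨⟨hz₁, hz₂⟩, hpos⟩ := mem_sameSignPairs.1 hz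
      exact ⟨(⟨z.1, hz₁⟩, ⟨z.2, hz₂⟩), mem_sameSignPairs.2 ⟨by simp, hpos⟩, rfl⟩)

lemma three_mul_card_le_of_perm {β : Type*} [Fintype β] (σ : Equiv.Perm β) (s : Finset β)
    (h : ∀ b, ¬(b ∈ s ∧ σ b ∈ s ∧ σ (σ b) ∈ s)) : 3 * #s ≤ 2 * Fintype.card β := by
  classical
  let χ : β → ℕ := fun b => if b ∈ s then 1 else 0
  have sum_χ : ∑ b, χ b = #s := by simp [χ]
  have sum_χ_σ : ∑ b, χ (σ b) = #s := (Equiv.sum_comp σ χ).trans sum_χ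
  have sum_χ_σσ : ∑ b, χ (σ (σ b)) = #s := (Equiv.sum_comp σ fun b => χ (σ b)).trans sum_χ_σ
  calc 3 * #s = ∑ b, (χ b + χ (σ b) + χ (σ (σ b))) := by
        rw [sum_add_distrib, sum_add_distrib, sum_χ, sum_χ_σ, sum_χ_σσ]; ring
    _ ≤ ∑ _b : β, 2 := sum_le_sum fun b _ => by
        have := h b
        simp only [χ]
        split_ifs <;> first | omega | tauto
    _ = 2 * Fintype.card β := by simp [mul_comm]

variable {ι R V : Type*} [DecidableEq ι] [CommRing R] [AddCommGroup V] [Module R V]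

/-- The linear form `z ↦ φ (z, w)`, where the alternating map `φ` takes `z` in the slot `none`
and the `w i` in the slots `some i`. It vanishes at every `w i`. -/
def interpolant (φ : V [⋀^Option ι]→ₗ[R] R) (w : ι → V) : V →ₗ[R] R :=
  φ.toMultilinearMap.toLinearMap (fun o => o.elim 0 w) none

lemma interpolant_apply (φ : V [⋀^Option ι]→ₗ[R] R) (w : ι → V) (z : V) :
    interpolant φ w z = φ (fun o => o.elim z w) := by
  change φ (Function.update _ none z) = _
  congr 1
  ext (_ | i) <;> simp

lemma interpolant_update_swap (φ : V [⋀^Option ι]→ₗ[R] R) (w : ι → V) (i : ι) (y z : V) :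
    interpolant φ (Function.update w i y) z = -interpolant φ (Function.update w i z) y := by
  rw [interpolant_apply, interpolant_apply,
    ← φ.map_swap _ (Option.some_ne_none i).symm]
  congr 1
  ext (_ | j)
  · simp
  · obtain rfl | hj := eq_or_ne j i
    · simp
    · have : Equiv.swap none (some i) (some j) = some j :=
        Equiv.swap_apply_of_ne_of_ne (by simp) (by simpa using hj)
      simp [this, hj]

variable {α : ι → Type*}

/-- Cyclic rotation of the three points `r i`, `y`, `z` in a transversal `r` with two further
points `y`, `z` of the `i`-th set: each of them takes its turn in the transversal. -/
def rotateAt (i : ι) : Equiv.Perm ((∀ j, α j) × α i × α i) where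
  toFun a := (Function.update a.1 i a.2.1, a.2.2, a.1 i)
  invFun a := (Function.update a.1 i a.2.2, a.1 i, a.2.1)
  left_inv a := by simp
  right_inv a := by simp

variable [LinearOrder R] [IsStrictOrderedRing R] [Fintype ι] [∀ i, Fintype (α i)]

-- Each of the three points `r i`, `y`, `z` in turn serves as the node and the other two as
-- the tested pair; antisymmetry prevents the three tested pairs from all having equal signs.
lemma three_mul_sum_card_sameSignPairs_interpolant_le (φ : V [⋀^Option ι]→ₗ[R] R)
    (v : ∀ i, α i → V) (i : ι) :
    3 * ∑ r : ∀ j, α j, #(sameSignPairs (fun x => interpolant φ (fun j => v j (r j)) (v i x)) univ)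
      ≤ ∑ _r : ∀ j, α j, 2 * Fintype.card (α i) ^ 2 := by
  let F (r : ∀ j, α j) (x : α i) : R := interpolant φ (fun j => v j (r j)) (v i x)
  let s : Finset ((∀ j, α j) × α i × α i) := {a | 0 < F a.1 a.2.1 * F a.1 a.2.2}
  have card_s : #s = ∑ r, #(sameSignPairs (F r) univ) := by
    simp only [s, card_filter, Fintype.sum_prod_type, sameSignPairs, univ_product_univ]
  have F_swap (r : ∀ j, α j) (y z : α i) :
      F (Function.update r i y) z = -F (Function.update r i z) y := by
    have update_comp (x : α i) : (fun j => v j (Function.update r i x j)) =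
        Function.update (fun j => v j (r j)) i (v i x) :=
      funext fun j => Function.apply_update (fun j => v j) r i x j
    simp only [F, update_comp, interpolant_update_swap φ _ i (v i y)]
  have h_rotate : ∀ a, ¬(a ∈ s ∧ rotateAt i a ∈ s ∧ rotateAt i (rotateAt i a) ∈ s) := by
    rintro ⟨r, y, z⟩
    have hy := F_swap r y (r i)
    have hz := F_swap r z (r i)
    rw [Function.update_eq_self] at hy hz
    simp only [s, mem_filter, mem_univ, true_and, rotateAt, Equiv.coe_fn_mk,
      Function.update_self, Function.update_idem, hy, hz, F_swap r y z]
    rintro ⟨hpos, hpos_rotate, hpos_rotate_rotate⟩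
    nlinarith [mul_pos (mul_pos hpos hpos_rotate) hpos_rotate_rotate,
      sq_nonneg (F r y * F r z * F (Function.update r i z) y)]
  calc 3 * ∑ r, #(sameSignPairs (F r) univ) = 3 * #s := by rw [card_s]
    _ ≤ 2 * Fintype.card ((∀ j, α j) × α i × α i) := three_mul_card_le_of_perm _ s h_rotate
    _ = ∑ _r : ∀ j, α j, 2 * Fintype.card (α i) ^ 2 := by
        simp only [Fintype.card_prod, sum_const, card_univ, smul_eq_mul]; ring

lemma exists_three_mul_sum_card_sameSignPairs_interpolant_le [∀ i, Nonempty (α i)]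
    (φ : V [⋀^Option ι]→ₗ[R] R) (v : ∀ i, α i → V) :
    ∃ r : ∀ j, α j,
      3 * ∑ i, #(sameSignPairs (fun x => interpolant φ (fun j => v j (r j)) (v i x)) univ)
        ≤ 2 * ∑ i, Fintype.card (α i) ^ 2 := by
  have h_avg : ∑ r : ∀ j, α j,
        3 * ∑ i, #(sameSignPairs (fun x => interpolant φ (fun j => v j (r j)) (v i x)) univ)
      ≤ ∑ _r : ∀ j, α j, 2 * ∑ i, Fintype.card (α i) ^ 2 := by
    rw [← mul_sum, sum_comm, mul_sum]
    refine (sum_le_sum fun i _ =>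
      three_mul_sum_card_sameSignPairs_interpolant_le φ v i).trans_eq ?_
    rw [sum_comm]
    simp only [mul_sum]
  obtain ⟨r, -, hr⟩ := exists_le_of_sum_le univ_nonempty h_avg
  exact ⟨r, hr⟩

lemma sameSignPairs_const_mul {P : Type*} {c : R} (hc : c ≠ 0) (f : P → R) (A : Finset P) :
    sameSignPairs (fun x => c * f x) A = sameSignPairs f A := by
  ext z
  rw [mem_sameSignPairs, mem_sameSignPairs, mul_mul_mul_comm,
    mul_pos_iff_of_pos_left (mul_self_pos.2 hc)]

lemma lowerSemicontinuous_card_sameSignPairs {P Y S : Type*} [TopologicalSpace Y] [Zero S]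
    [Mul S] [LinearOrder S] [TopologicalSpace S] [OrderTopology S] [ContinuousMul S] {g : Y → P → S}
    {A : Finset P} (hg : ∀ x ∈ A, Continuous fun y => g y x) :
    LowerSemicontinuous fun y => #(sameSignPairs (g y) A) := by
  intro y₀ m hm
  have h_pos : ∀ᶠ y in nhds y₀, ∀ z ∈ sameSignPairs (g y₀) A, 0 < g y z.1 * g y z.2 := by
    refine (Filter.eventually_all_finset _).2 fun z hz => ?_
    obtain ⟨⟨hz₁, hz₂⟩, hz_pos⟩ := mem_sameSignPairs.1 hz
    exact ((hg _ hz₁).mul (hg _ hz₂)).continuousAt.eventually (lt_mem_nhds hz_pos)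
  filter_upwards [h_pos] with y hy
  exact hm.trans_le <| card_le_card fun z hz =>
    mem_sameSignPairs.2 ⟨(mem_sameSignPairs.1 hz).1, hy z hz⟩

lemma finite_setOf_interpolant_perturbation_eq_zero {ι K : Type*} [Fintype ι] [DecidableEq ι]
    [CommRing K] [IsDomain K] (w : ι → Option ι → K) :
    {t : K | interpolant Matrix.detRowAlternating
      (fun i => w i + t • Pi.single (some i) 1) = 0}.Finite := by
  let M : Matrix (Option ι) (Option ι) K := Matrix.of fun o => o.elim 0 w
  refine (Polynomial.finite_setOfPred_isRoot (Matrix.charpoly_monic (-M)).ne_zero).subset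
    fun t ht => ?_
  have h_det : interpolant Matrix.detRowAlternating (fun i => w i + t • Pi.single (some i) 1)
      (t • Pi.single none 1) = (Matrix.scalar (Option ι) t - -M).det := by
    rw [interpolant_apply]
    change Matrix.det _ = _
    congr 1
    ext (_ | i) o <;>
      simp [M, Pi.single_apply, Matrix.diagonal_apply, add_comm, eq_comm]
  rw [Set.mem_ofPred_eq] at ht ⊢
  rw [Polynomial.IsRoot.def, Matrix.eval_charpoly, ← h_det, ht, LinearMap.zero_apply]

section Coordinates

variable {ι : Type*} {α : ι → Type*} [Fintype ι] [∀ i, Fintype (α i)] [∀ i, Nonempty (α i)]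

lemma exists_sphere_three_mul_sum_card_sameSignPairs_le_of_interpolant_ne_zero [DecidableEq ι]
    (v : ∀ i, α i → Option ι → ℝ)
    (hv : ∀ r : ∀ i, α i, interpolant Matrix.detRowAlternating (fun i => v i (r i)) ≠ 0) :
    ∃ a : Metric.sphere (0 : Option ι → ℝ) 1,
      3 * ∑ i, #(sameSignPairs (fun x => a.1 ⬝ᵥ v i x) univ)
        ≤ 2 * ∑ i, Fintype.card (α i) ^ 2 := by
  obtain ⟨r, hr⟩ :=
    exists_three_mul_sum_card_sameSignPairs_interpolant_le Matrix.detRowAlternating v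
  obtain ⟨b, hb⟩ := (dotProductEquiv ℝ (Option ι)).surjective
    (interpolant Matrix.detRowAlternating fun i => v i (r i))
  have hb_norm : ‖b‖ ≠ 0 := norm_ne_zero_iff.2 fun hb0 => hv r (by rw [← hb, hb0, map_zero])
  refine ⟨⟨‖b‖⁻¹ • b, by simp [norm_smul, hb_norm]⟩, ?_⟩
  simpa only [smul_dotProduct, smul_eq_mul, sameSignPairs_const_mul (inv_ne_zero hb_norm), ← hb,
    dotProductEquiv_apply_apply] using hr

-- Perturbing the vectors puts every transversal in general position; the bound survives the limit
-- because it is a closed condition and the unit sphere is compact.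
lemma exists_sphere_three_mul_sum_card_sameSignPairs_le (v : ∀ i, α i → Option ι → ℝ) :
    ∃ a : Metric.sphere (0 : Option ι → ℝ) 1,
      3 * ∑ i, #(sameSignPairs (fun x => a.1 ⬝ᵥ v i x) univ)
        ≤ 2 * ∑ i, Fintype.card (α i) ^ 2 := by
  classical
  let w (t : ℝ) (i : ι) (x : α i) : Option ι → ℝ := v i x + t • Pi.single (some i) 1
  let count (ta : ℝ × Metric.sphere (0 : Option ι → ℝ) 1) : ℕ :=
    ∑ i, #(sameSignPairs (fun x => ta.2.1 ⬝ᵥ w ta.1 i x) univ)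
  let good : Set (ℝ × Metric.sphere (0 : Option ι → ℝ) 1) :=
    count ⁻¹' Set.Iic (2 * (∑ i, Fintype.card (α i) ^ 2) / 3)
  have mem_good (ta) : ta ∈ good ↔ 3 * count ta ≤ 2 * ∑ i, Fintype.card (α i) ^ 2 := by
    rw [Set.mem_preimage, Set.mem_Iic, Nat.le_div_iff_mul_le three_pos, mul_comm]
  have h_closed : IsClosed (Prod.fst '' good) := by
    refine isClosedMap_fst_of_compactSpace _ (LowerSemicontinuous.isClosed_preimage ?_ _)
    refine lowerSemicontinuous_sum fun i _ => lowerSemicontinuous_card_sameSignPairs fun x _ => ?_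
    exact (continuous_subtype_val.comp continuous_snd).dotProduct
      (continuous_const.add (continuous_fst.smul continuous_const))
  have h_dense : Dense (Prod.fst '' good) := by
    have h_degenerate : (⋃ r : ∀ i, α i, {t : ℝ | interpolant Matrix.detRowAlternating
        (fun i => w t i (r i)) = 0}).Finite :=
      Set.finite_iUnion fun r => finite_setOf_interpolant_perturbation_eq_zero fun i => v i (r i)
    refine (h_degenerate.countable.dense_compl ℝ).mono fun t ht => ?_
    obtain ⟨a, ha⟩ := exists_sphere_three_mul_sum_card_sameSignPairs_le_of_interpolant_ne_zero (w t)
      fun r hr => ht (Set.mem_iUnion.2 ⟨r, hr⟩)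
    exact ⟨(t, a), (mem_good _).2 ha, rfl⟩
  obtain ⟨⟨_, a⟩, ha, rfl⟩ : (0 : ℝ) ∈ Prod.fst '' good :=
    h_closed.closure_eq ▸ h_dense 0
  exact ⟨a, by simpa [count, w] using (mem_good _).1 ha⟩

end Coordinates

theorem exists_ne_zero_three_mul_sum_card_sameSignPairs_le {P V : Type*} [AddCommGroup V]
    [Module ℝ V] (ev : P → Module.Dual ℝ V) (𝒜 : Finset (Finset P))
    (h_nonempty : ∀ A ∈ 𝒜, A.Nonempty) (h_card : #𝒜 < Module.finrank ℝ V) :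
    ∃ f : V, f ≠ 0 ∧
      3 * ∑ A ∈ 𝒜, #(sameSignPairs (fun x => ev x f) A) ≤ 2 * ∑ A ∈ 𝒜, #A ^ 2 := by
  classical
  obtain ⟨b, hb⟩ : ∃ b : Option 𝒜 → V, LinearIndependent ℝ b := by
    obtain ⟨b, hb⟩ := exists_linearIndependent_of_le_finrank (Nat.succ_le_of_lt h_card)
    exact ⟨_, hb.comp _ (Fintype.equivFinOfCardEq (by simp)).injective⟩
  have : ∀ A : 𝒜, Nonempty A.1 := fun A => (h_nonempty A A.2).to_subtype
  obtain ⟨a, ha⟩ := exists_sphere_three_mul_sum_card_sameSignPairs_le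
    fun (A : 𝒜) (x : A.1) o => ev x (b o)
  refine ⟨∑ o, a.1 o • b o, fun hf => ?_, ?_⟩
  · have : a.1 = 0 := funext (Fintype.linearIndependent_iff.1 hb a.1 hf)
    exact Metric.ne_of_mem_sphere a.2 one_ne_zero this
  · have h_eval (x : P) : ev x (∑ o, a.1 o • b o) = a.1 ⬝ᵥ fun o => ev x (b o) := by
      simp [dotProduct]
    simp only [← h_eval, card_sameSignPairs_coe (fun x => ev x (∑ o, a.1 o • b o)),
      Fintype.card_coe] at ha
    rwa [sum_coe_sort 𝒜 fun A => #(sameSignPairs (fun x => ev x (∑ o, a.1 o • b o)) A),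
      sum_coe_sort 𝒜 fun A => #A ^ 2] at ha

end WeakHamSandwich

section PolynomialSplitting

variable {σ : Type*} [Fintype σ]

lemma finrank_restrictDegree (R : Type*) [CommRing R] [Nontrivial R] (m : ℕ) :
    Module.finrank R (restrictDegree σ R m) = (m + 1) ^ Fintype.card σ := by
  have h_exponents : {d : σ →₀ ℕ | ∀ i, d i ≤ m} ≃ (σ → Fin (m + 1)) :=
    (Finsupp.equivFunOnFinite.subtypeEquiv fun _ => Iff.rfl).trans <|
      (Equiv.subtypePiEquivPi (p := fun _ k => k ≤ m)).trans <|
        Equiv.piCongrRight fun _ =>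
          (Equiv.subtypeEquivRight fun _ => Nat.lt_succ_iff.symm).trans Fin.equivSubtype.symm
  rw [restrictDegree, Module.finrank_eq_nat_card_basis (basisRestrictSupport R _),
    Nat.card_congr h_exponents, Nat.card_fun, Nat.card_eq_fintype_card, Fintype.card_fin,
    Nat.card_eq_fintype_card]

lemma totalDegree_le_of_mem_restrictDegree {R : Type*} [CommSemiring R] {m : ℕ}
    {p : MvPolynomial σ R} (hp : p ∈ restrictDegree σ R m) :
    p.totalDegree ≤ Fintype.card σ * m := by
  refine Finset.sup_le fun d hd => ?_
  calc d.sum (fun _ e => e) = ∑ i, d i := Finsupp.sum_fintype _ _ fun _ => rfl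
    _ ≤ ∑ _i : σ, m := sum_le_sum fun i _ => (mem_restrictDegree σ p m).1 hp d hd i
    _ = Fintype.card σ * m := by simp

lemma exists_totalDegree_le_three_mul_sum_card_sameSignPairs_le [Nonempty σ]
    (𝒜 : Finset (Finset (σ → ℝ))) (h_nonempty : ∀ A ∈ 𝒜, A.Nonempty) :
    ∃ q : MvPolynomial σ ℝ, q ≠ 0 ∧
      (q.totalDegree : ℝ) ≤ Fintype.card σ * (#𝒜 : ℝ) ^ (Fintype.card σ : ℝ)⁻¹ ∧
      3 * ∑ A ∈ 𝒜, #(sameSignPairs (eval · q) A) ≤ 2 * ∑ A ∈ 𝒜, #A ^ 2 := by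
  set n := Fintype.card σ
  have hn : n ≠ 0 := Fintype.card_ne_zero
  set m := ⌊(#𝒜 : ℝ) ^ (n : ℝ)⁻¹⌋₊
  have h_card : #𝒜 < Module.finrank ℝ (restrictDegree σ ℝ m) := by
    rw [finrank_restrictDegree, ← Nat.cast_lt (α := ℝ),
      ← Real.rpow_inv_natCast_pow (Nat.cast_nonneg #𝒜) hn]
    push_cast
    exact pow_lt_pow_left₀ (Nat.lt_floor_add_one _) (by positivity) hn
  obtain ⟨q, hq, h_pairs⟩ := exists_ne_zero_three_mul_sum_card_sameSignPairs_le
    (fun x => (aeval x).toLinearMap ∘ₗ (restrictDegree σ ℝ m).subtype) 𝒜 h_nonempty h_card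
  refine ⟨q, by simpa using hq, ?_, h_pairs⟩
  calc (q.1.totalDegree : ℝ) ≤ n * m := mod_cast totalDegree_le_of_mem_restrictDegree q.2
    _ ≤ n * (#𝒜 : ℝ) ^ (n : ℝ)⁻¹ := by gcongr; exact Nat.floor_le (by positivity)

end PolynomialSplitting

section Cells

variable {E : Type*} [TopologicalSpace E]

open Classical in
/-- The points of `X` in the connected component of `x` in `U`, the set whose size is to be
bounded; empty if `x ∉ U`. -/
noncomputable def cell (X : Finset E) (U : Set E) (x : E) : Finset E :=
  {y ∈ X | y ∈ connectedComponentIn U x}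

open Classical in
/-- The cells of `X` in `U` with more than `T` points: those that still have to be split. -/
noncomputable def bigCells (X : Finset E) (U : Set E) (T : ℝ) : Finset (Finset E) :=
  {A ∈ X.powerset | (∃ x, cell X U x = A) ∧ T < #A}

/-- The number of ordered pairs of points of `X` that share a big cell: the potential which the
partitioning polynomials decrease. -/
noncomputable def energy (X : Finset E) (U : Set E) (T : ℝ) : ℕ :=
  ∑ A ∈ bigCells X U T, #A ^ 2

variable {X : Finset E} {U W : Set E} {T : ℝ} {x y : E}

lemma mem_cell : y ∈ cell X U x ↔ y ∈ X ∧ y ∈ connectedComponentIn U x := by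
  simp only [cell, mem_filter]

lemma coe_cell : (cell X U x : Set E) = ↑X ∩ connectedComponentIn U x := by
  ext y
  simp only [mem_coe, mem_cell, Set.mem_inter_iff]

lemma cell_subset : cell X U x ⊆ X := fun _ hy => (mem_cell.1 hy).1

lemma cell_mono (hWU : W ⊆ U) : cell X W x ⊆ cell X U x := fun _ hy =>
  mem_cell.2 ⟨(mem_cell.1 hy).1, connectedComponentIn_mono x hWU (mem_cell.1 hy).2⟩

lemma cell_eq_of_mem (hy : y ∈ cell X U x) : cell X U y = cell X U x := by
  rw [cell, cell, connectedComponentIn_eq (mem_cell.1 hy).2]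

lemma mem_bigCells {A : Finset E} :
    A ∈ bigCells X U T ↔ (∃ x, cell X U x = A) ∧ T < #A := by
  simp only [bigCells, mem_filter, mem_powerset, and_iff_right_iff_imp]
  rintro ⟨⟨x, rfl⟩, -⟩
  exact cell_subset

lemma nonempty_of_mem_bigCells (hT : 0 ≤ T) {A : Finset E} (hA : A ∈ bigCells X U T) :
    A.Nonempty :=
  card_pos.1 <| Nat.cast_pos.1 <| hT.trans_lt (mem_bigCells.1 hA).2

lemma pairwiseDisjoint_bigCells (X : Finset E) (U : Set E) (T : ℝ) :
    (bigCells X U T : Set (Finset E)).PairwiseDisjoint id := by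
  intro A hA B hB hAB
  obtain ⟨⟨x, rfl⟩, -⟩ := mem_bigCells.1 hA
  obtain ⟨⟨y, rfl⟩, -⟩ := mem_bigCells.1 hB
  exact disjoint_left.2 fun z hzx hzy => hAB ((cell_eq_of_mem hzx).symm.trans (cell_eq_of_mem hzy))

lemma sum_card_bigCells_le (X : Finset E) (U : Set E) (T : ℝ) :
    ∑ A ∈ bigCells X U T, #A ≤ #X := by
  classical
  refine (card_biUnion (pairwiseDisjoint_bigCells X U T)).symm.trans_le ?_
  refine card_le_card (biUnion_subset.2 fun A hA => ?_)
  obtain ⟨⟨x, rfl⟩, -⟩ := mem_bigCells.1 hA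
  exact cell_subset

lemma card_bigCells_mul_sq_le_energy (hT : 0 ≤ T) :
    #(bigCells X U T) * T ^ 2 ≤ (energy X U T : ℝ) := by
  calc #(bigCells X U T) * T ^ 2 = ∑ _A ∈ bigCells X U T, T ^ 2 := by simp
    _ ≤ ∑ A ∈ bigCells X U T, (#A : ℝ) ^ 2 :=
        sum_le_sum fun A hA => pow_le_pow_left₀ hT (mem_bigCells.1 hA).2.le 2
    _ = energy X U T := by simp [energy]

lemma energy_le_mul_card {S : ℝ} (hS : 0 ≤ S) (h_cells : ∀ x, (#(cell X U x) : ℝ) ≤ S) :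
    (energy X U T : ℝ) ≤ S * #X := by
  calc (energy X U T : ℝ) = ∑ A ∈ bigCells X U T, (#A : ℝ) * #A := by simp [energy, sq]
    _ ≤ ∑ A ∈ bigCells X U T, S * #A := sum_le_sum fun A hA => by
        obtain ⟨⟨x, rfl⟩, -⟩ := mem_bigCells.1 hA
        gcongr
        exact h_cells x
    _ = S * (∑ A ∈ bigCells X U T, #A : ℕ) := by push_cast; rw [mul_sum]
    _ ≤ S * #X := by gcongr; exact sum_card_bigCells_le X U T

lemma cell_product_subset_sameSignPairs {f : E → ℝ} (hf : Continuous f) :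
    cell X (U ∩ {y | f y ≠ 0}) x ×ˢ cell X (U ∩ {y | f y ≠ 0}) x ⊆
      sameSignPairs f (cell X U x) := by
  rintro ⟨y, z⟩ hyz
  obtain ⟨hy, hz⟩ := mem_product.1 hyz
  have h_sub : cell X (U ∩ {y | f y ≠ 0}) x ⊆ cell X U x := cell_mono Set.inter_subset_left
  refine mem_sameSignPairs.2 ⟨⟨h_sub hy, h_sub hz⟩, ?_⟩
  have h_conn : IsPreconnected (f '' connectedComponentIn (U ∩ {y | f y ≠ 0}) x) :=
    isPreconnected_connectedComponentIn.image f hf.continuousOn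
  have h_zero : (0 : ℝ) ∉ f '' connectedComponentIn (U ∩ {y | f y ≠ 0}) x := by
    rintro ⟨w, hw, hfw⟩
    exact (connectedComponentIn_subset _ _ hw).2 hfw
  have hfy := Set.mem_image_of_mem f (mem_cell.1 hy).2
  have hfz := Set.mem_image_of_mem f (mem_cell.1 hz).2
  by_contra! h_nonpos
  rcases mul_nonpos_iff.1 h_nonpos with ⟨hy0, hz0⟩ | ⟨hy0, hz0⟩
  · exact h_zero (h_conn.Icc_subset hfz hfy ⟨hz0, hy0⟩)
  · exact h_zero (h_conn.Icc_subset hfy hfz ⟨hy0, hz0⟩)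

lemma energy_inter_le {f : E → ℝ} (hf : Continuous f) :
    energy X (U ∩ {y | f y ≠ 0}) T ≤ ∑ A ∈ bigCells X U T, #(sameSignPairs f A) := by
  classical
  have h_disjoint : (bigCells X (U ∩ {y | f y ≠ 0}) T : Set (Finset E)).PairwiseDisjoint
      fun B => B ×ˢ B := fun B hB B' hB' hBB' =>
    disjoint_product.2 (Or.inl (pairwiseDisjoint_bigCells X _ T hB hB' hBB'))
  calc energy X (U ∩ {y | f y ≠ 0}) T
      = #((bigCells X (U ∩ {y | f y ≠ 0}) T).biUnion fun B => B ×ˢ B) := by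
        rw [card_biUnion h_disjoint, energy]
        simp only [card_product, sq]
    _ ≤ #((bigCells X U T).biUnion (sameSignPairs f)) := by
        refine card_le_card (biUnion_subset.2 fun B hB => ?_)
        obtain ⟨⟨x, rfl⟩, hx⟩ := mem_bigCells.1 hB
        refine (cell_product_subset_sameSignPairs hf).trans (subset_biUnion_of_mem _ ?_)
        refine mem_bigCells.2 ⟨⟨x, rfl⟩, hx.trans_le ?_⟩
        exact mod_cast card_le_card (cell_mono Set.inter_subset_left)
    _ ≤ ∑ A ∈ bigCells X U T, #(sameSignPairs f A) := card_biUnion_le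

end Cells

section Iteration

lemma mul_rpow_add_mul_rpow_le {a b c k e e' s : ℝ} (hs : 0 ≤ s) (ha : 0 ≤ a) (hb : 0 ≤ b)
    (hc : 0 ≤ c) (hk : 0 ≤ k) (he' : 0 ≤ e') (hke : k ≤ e) (hee' : e' ≤ b * e)
    (hac : a + c * b ^ s ≤ c) : a * k ^ s + c * e' ^ s ≤ c * e ^ s := by
  have he : 0 ≤ e := hk.trans hke
  calc a * k ^ s + c * e' ^ s ≤ a * e ^ s + c * (b * e) ^ s := by gcongr
    _ = (a + c * b ^ s) * e ^ s := by rw [Real.mul_rpow hb he]; ring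
    _ ≤ c * e ^ s := by gcongr

variable {σ : Type*}

lemma setOf_eval_mul_ne_zero {R : Type*} [CommSemiring R] [NoZeroDivisors R]
    (p q : MvPolynomial σ R) :
    {y | eval y (p * q) ≠ 0} = {y | eval y p ≠ 0} ∩ {y | eval y q ≠ 0} := by
  ext y
  simp [not_or]

lemma setOf_eval_one_ne_zero (R : Type*) [CommSemiring R] [Nontrivial R] :
    {y : σ → R | eval y (1 : MvPolynomial σ R) ≠ 0} = Set.univ := by
  simp

variable [Fintype σ] [Nonempty σ]

lemma exists_three_mul_energy_inter_le (X : Finset (σ → ℝ)) (U : Set (σ → ℝ)) {T : ℝ}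
    (hT : 0 ≤ T) :
    ∃ q : MvPolynomial σ ℝ, q ≠ 0 ∧
      (q.totalDegree : ℝ) ≤
        Fintype.card σ * (#(bigCells X U T) : ℝ) ^ (Fintype.card σ : ℝ)⁻¹ ∧
      3 * energy X (U ∩ {y | eval y q ≠ 0}) T ≤ 2 * energy X U T := by
  obtain ⟨q, hq, h_deg, h_pairs⟩ := exists_totalDegree_le_three_mul_sum_card_sameSignPairs_le
    (bigCells X U T) fun A hA => nonempty_of_mem_bigCells hT hA
  exact ⟨q, hq, h_deg,
    (Nat.mul_le_mul_left 3 (energy_inter_le (continuous_eval q))).trans h_pairs⟩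

lemma exists_bigCells_inter_eq_empty_of_le {c : ℝ} (hc : 0 ≤ c)
    (h_const : Fintype.card σ + c * (2 / 3 : ℝ) ^ (Fintype.card σ : ℝ)⁻¹ ≤ c)
    (X : Finset (σ → ℝ)) (U : Set (σ → ℝ)) {T : ℝ} (hT : 0 < T) :
    ∃ q : MvPolynomial σ ℝ, q ≠ 0 ∧
      (q.totalDegree : ℝ) ≤ c * (energy X U T / T ^ 2) ^ (Fintype.card σ : ℝ)⁻¹ ∧
      bigCells X (U ∩ {y | eval y q ≠ 0}) T = ∅ := by
  induction h_energy : energy X U T using Nat.strong_induction_on generalizing U with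
  | _ N ih =>
  subst h_energy
  have h_count : (#(bigCells X U T) : ℝ) ≤ energy X U T / T ^ 2 :=
    (le_div_iff₀ (by positivity)).2 (card_bigCells_mul_sq_le_energy hT.le)
  obtain h_empty | h_nonempty := (bigCells X U T).eq_empty_or_nonempty
  · exact ⟨1, one_ne_zero, by simp only [totalDegree_one, Nat.cast_zero]; positivity, by
      rwa [setOf_eval_one_ne_zero ℝ, Set.inter_univ]⟩
  obtain ⟨q, hq, hq_deg, hq_energy⟩ := exists_three_mul_energy_inter_le X U hT.le
  have h_pos : 0 < energy X U T := by
    have : (0 : ℝ) < #(bigCells X U T) := mod_cast h_nonempty.card_pos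
    have : (0 : ℝ) < energy X U T / T ^ 2 := this.trans_le h_count
    exact_mod_cast (div_pos_iff_of_pos_right (by positivity)).1 this
  obtain ⟨p, hp, hp_deg, hp_cells⟩ := ih _ (by omega) (U ∩ {y | eval y q ≠ 0}) rfl
  refine ⟨q * p, mul_ne_zero hq hp, ?_, by
    rwa [setOf_eval_mul_ne_zero, ← Set.inter_assoc]⟩
  have h_decrease : (energy X (U ∩ {y | eval y q ≠ 0}) T : ℝ) / T ^ 2 ≤
      2 / 3 * (energy X U T / T ^ 2) := by
    have : (3 * energy X (U ∩ {y | eval y q ≠ 0}) T : ℝ) ≤ 2 * energy X U T := mod_cast hq_energy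
    rw [← mul_div_assoc]
    gcongr
    linarith
  calc ((q * p).totalDegree : ℝ) ≤ q.totalDegree + p.totalDegree := mod_cast totalDegree_mul q p
    _ ≤ _ := add_le_add hq_deg hp_deg
    _ ≤ c * (energy X U T / T ^ 2) ^ (Fintype.card σ : ℝ)⁻¹ :=
        mul_rpow_add_mul_rpow_le (by positivity) (by positivity) (by norm_num) hc (by positivity)
          (by positivity) h_count h_decrease h_const

variable (σ) in
lemma exists_bigCells_inter_eq_empty :
    ∃ c : ℝ, 0 ≤ c ∧ ∀ (X : Finset (σ → ℝ)) (U : Set (σ → ℝ)) {T : ℝ}, 0 < T →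
      ∃ q : MvPolynomial σ ℝ, q ≠ 0 ∧
        (q.totalDegree : ℝ) ≤ c * (energy X U T / T ^ 2) ^ (Fintype.card σ : ℝ)⁻¹ ∧
        bigCells X (U ∩ {y | eval y q ≠ 0}) T = ∅ := by
  set η : ℝ := (2 / 3 : ℝ) ^ (Fintype.card σ : ℝ)⁻¹
  have hη : 0 < 1 - η :=
    sub_pos.2 (Real.rpow_lt_one (by norm_num) (by norm_num) (by positivity))
  refine ⟨Fintype.card σ / (1 - η), by positivity, fun X U T hT =>
    exists_bigCells_inter_eq_empty_of_le (by positivity) (le_of_eq ?_) X U hT⟩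
  change Fintype.card σ + Fintype.card σ / (1 - η) * η = Fintype.card σ / (1 - η)
  field_simp
  ring

variable (σ) in
lemma exists_card_cell_inter_le_of_card_cell_le_two_mul :
    ∃ c : ℝ, 0 ≤ c ∧ ∀ (X : Finset (σ → ℝ)) (U : Set (σ → ℝ)) {T : ℝ}, 0 < T →
      (∀ x, (#(cell X U x) : ℝ) ≤ 2 * T) →
      ∃ q : MvPolynomial σ ℝ, q ≠ 0 ∧
        (q.totalDegree : ℝ) ≤ c * (#X / T) ^ (Fintype.card σ : ℝ)⁻¹ ∧
        ∀ x, (#(cell X (U ∩ {y | eval y q ≠ 0}) x) : ℝ) ≤ T := by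
  obtain ⟨c, hc, h_split⟩ := exists_bigCells_inter_eq_empty σ
  refine ⟨c * 2 ^ (Fintype.card σ : ℝ)⁻¹, by positivity, fun X U T hT h_cells => ?_⟩
  obtain ⟨q, hq, hq_deg, hq_cells⟩ := h_split X U hT
  refine ⟨q, hq, ?_, fun x => ?_⟩
  · have h_energy : (energy X U T : ℝ) / T ^ 2 ≤ 2 * (#X / T) := by
      rw [div_le_iff₀ (by positivity)]
      calc (energy X U T : ℝ) ≤ 2 * T * #X := energy_le_mul_card (by positivity) h_cells
        _ = 2 * (#X / T) * T ^ 2 := by field_simp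
    calc (q.totalDegree : ℝ) ≤ c * (energy X U T / T ^ 2) ^ (Fintype.card σ : ℝ)⁻¹ := hq_deg
      _ ≤ c * (2 * (#X / T)) ^ (Fintype.card σ : ℝ)⁻¹ := by gcongr
      _ = c * 2 ^ (Fintype.card σ : ℝ)⁻¹ * (#X / T) ^ (Fintype.card σ : ℝ)⁻¹ := by
          rw [Real.mul_rpow zero_le_two (by positivity), mul_assoc]
  · by_contra! hx
    exact notMem_empty _ (hq_cells ▸ mem_bigCells.2 ⟨⟨x, rfl⟩, hx⟩)

variable (σ) in
lemma exists_card_cell_le_div_two_pow :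
    ∃ c : ℝ, 0 < c ∧ ∀ (X : Finset (σ → ℝ)) (j : ℕ),
      ∃ p : MvPolynomial σ ℝ, p ≠ 0 ∧
        (p.totalDegree : ℝ) ≤ c * ((2 : ℝ) ^ (Fintype.card σ : ℝ)⁻¹) ^ j ∧
        ∀ x, (#(cell X {y | eval y p ≠ 0} x) : ℝ) ≤ #X / 2 ^ j := by
  obtain ⟨c, hc, h_halve⟩ := exists_card_cell_inter_le_of_card_cell_le_two_mul σ
  set θ : ℝ := (2 : ℝ) ^ (Fintype.card σ : ℝ)⁻¹
  have hθ : 0 < θ - 1 := sub_pos.2 (Real.one_lt_rpow one_lt_two (by positivity))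
  refine ⟨c * θ / (θ - 1) + 1, by positivity, fun X j => ?_⟩
  set b : ℝ := c * θ / (θ - 1) + 1
  have hb : b + c * θ ≤ b * θ := by
    have : b * (θ - 1) = c * θ + (θ - 1) := by simp only [b]; field_simp
    linarith
  obtain rfl | hX := X.eq_empty_or_nonempty
  · exact ⟨1, one_ne_zero, by simp only [totalDegree_one, Nat.cast_zero]; positivity,
      fun x => by simp [cell]⟩
  have hX_pos : (0 : ℝ) < #X := mod_cast hX.card_pos
  induction j with
  | zero =>
    exact ⟨1, one_ne_zero, by simp only [totalDegree_one, Nat.cast_zero]; positivity, fun x => by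
      simpa using card_le_card cell_subset⟩
  | succ j ih =>
    obtain ⟨p, hp, hp_deg, hp_cells⟩ := ih
    obtain ⟨q, hq, hq_deg, hq_cells⟩ := h_halve X {y | eval y p ≠ 0}
      (T := #X / 2 ^ (j + 1)) (by positivity) fun x =>
        (hp_cells x).trans_eq (by rw [pow_succ]; field_simp)
    refine ⟨p * q, mul_ne_zero hp hq, ?_, by rwa [setOf_eval_mul_ne_zero]⟩
    have h_ratio : ((#X : ℝ) / (#X / 2 ^ (j + 1))) ^ (Fintype.card σ : ℝ)⁻¹ = θ ^ (j + 1) := by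
      rw [div_div_cancel₀ hX_pos.ne', Real.rpow_pow_comm zero_le_two]
    calc ((p * q).totalDegree : ℝ) ≤ p.totalDegree + q.totalDegree := mod_cast totalDegree_mul p q
      _ ≤ b * θ ^ j + c * θ ^ (j + 1) := add_le_add hp_deg (hq_deg.trans_eq (by rw [h_ratio]))
      _ = (b + c * θ) * θ ^ j := by ring
      _ ≤ b * θ * θ ^ j := by gcongr
      _ = b * θ ^ (j + 1) := by ring

variable (σ) in
theorem exists_totalDegree_le_forall_card_cell_le :
    ∃ C : ℝ, 0 < C ∧ ∀ (X : Finset (σ → ℝ)) (D : ℕ), 1 ≤ D →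
      ∃ p : MvPolynomial σ ℝ, p ≠ 0 ∧ p.totalDegree ≤ D ∧
        ∀ x, (#(cell X {y | eval y p ≠ 0} x) : ℝ) ≤
          C * ((D : ℝ) ^ Fintype.card σ)⁻¹ * #X := by
  obtain ⟨c, hc, h_pow⟩ := exists_card_cell_le_div_two_pow σ
  set n := Fintype.card σ
  set θ : ℝ := (2 : ℝ) ^ (n : ℝ)⁻¹
  have hθ_pow : θ ^ n = 2 := Real.rpow_inv_natCast_pow zero_le_two Fintype.card_ne_zero
  refine ⟨2 * c ^ n, by positivity, fun X D hD => ?_⟩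
  have : (0 : ℝ) < D := mod_cast hD
  have h_bound (j : ℕ) (hj : (D : ℝ) ^ n ≤ 2 * c ^ n * 2 ^ j) :
      (#X : ℝ) / 2 ^ j ≤ 2 * c ^ n * ((D : ℝ) ^ n)⁻¹ * #X := by
    rw [← div_eq_mul_inv, div_mul_eq_mul_div, div_le_div_iff₀ (by positivity) (by positivity)]
    nlinarith [mul_le_mul_of_nonneg_left hj (Nat.cast_nonneg (α := ℝ) #X)]
  obtain hDc | hcD := lt_or_ge (D : ℝ) c
  · refine ⟨1, one_ne_zero, by simp, fun x => le_trans ?_ (h_bound 0 ?_)⟩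
    · simpa using card_le_card cell_subset
    · have : (D : ℝ) ^ n ≤ c ^ n := by gcongr
      linarith [pow_pos hc n]
  · obtain ⟨j, hj, hj_succ⟩ := exists_nat_pow_near (x := D / c) (y := θ) ((one_le_div hc).2 hcD)
      (Real.one_lt_rpow one_lt_two (by positivity))
    obtain ⟨p, hp, hp_deg, hp_cells⟩ := h_pow X j
    rw [le_div_iff₀' hc] at hj
    rw [div_lt_iff₀ hc] at hj_succ
    refine ⟨p, hp, mod_cast hp_deg.trans hj, fun x => (hp_cells x).trans (h_bound j ?_)⟩
    calc (D : ℝ) ^ n ≤ (θ ^ (j + 1) * c) ^ n := by gcongr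
      _ = c ^ n * (θ ^ n) ^ (j + 1) := by ring
      _ = 2 * c ^ n * 2 ^ j := by rw [hθ_pow]; ring

end Iteration

end PolynomialPartitioning

/-- **Guth–Katz polynomial partitioning for points.**
For every `n ≥ 1` there is a constant `C > 0` such that for every finite point set `X ⊆ ℝⁿ`
and every integer `D ≥ 1` there is a non-zero polynomial `p` of total degree at most `D`
such that every connected component of `ℝⁿ \ Z(p)` contains at most `C · D⁻ⁿ · |X|` points
of `X`. -/
theorem polynomial_partitioning_points (n : ℕ) (hn : 1 ≤ n) :
    ∃ C : ℝ, 0 < C ∧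
      ∀ (X : Finset (Fin n → ℝ)) (D : ℕ), 1 ≤ D →
        ∃ p : MvPolynomial (Fin n) ℝ, p ≠ 0 ∧ p.totalDegree ≤ D ∧
          ∀ x : Fin n → ℝ, MvPolynomial.eval x p ≠ 0 →
            (((X : Set (Fin n → ℝ)) ∩
                connectedComponentIn {y : Fin n → ℝ | MvPolynomial.eval y p ≠ 0} x).ncard : ℝ) ≤
              C * ((D : ℝ) ^ n)⁻¹ * X.card := by
  have : Nonempty (Fin n) := ⟨⟨0, hn⟩⟩
  obtain ⟨C, hC, h_cells⟩ :=
    PolynomialPartitioning.exists_totalDegree_le_forall_card_cell_le (Fin n)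
  refine ⟨C, hC, fun X D hD => ?_⟩
  obtain ⟨p, hp, hp_deg, hp_cells⟩ := h_cells X D hD
  refine ⟨p, hp, hp_deg, fun x _ => ?_⟩
  simpa only [← PolynomialPartitioning.coe_cell, Set.ncard_coe_finset, Fintype.card_fin]
    using hp_cells x
end

section
/- Let n ≥ 1 and j ≥ 1 be integers and set C_n = 2^(n+1)·n! / (2^(1/n) − 1)^n. For any finite sets X₁,…,X_j of points in ℝ^n and any integer D ≥ 1, there exists a non-zero polynomial p ∈ ℝ[X₁,…,X_n] of total degree at most D such that for every 1 ≤ i ≤ j, every connected component of ℝ^n \ Z(p) contains at most C_n · j · D^(−n) · |X_i| points of X_i. -/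
/-!
If every `χ i` is a `ZMod 2`-valued function that changes its value under `v ↦ -v`, the cup product
of the `m` coboundaries `δ χ i` takes the value `1` on an `m`-dimensional hemisphere, for every
antipodally symmetric triangulation of the sphere: peeling off one factor replaces the hemisphere by
the hemisphere one dimension lower. So some simplex, however fine the triangulation, sees both
values of every `χ i`. Applied to iterated barycentric subdivisions of the cross-polytope,
compactness turns this into Borsuk-Ulam: fewer than `dim V` closed sets, each meeting every
antipodal pair, have a common antipodal pair.

Evaluation at points is linear on polynomials of degree at most `d`, so Borsuk-Ulam gives a
polynomial bisecting any family of fewer than `(d + n).choose n` finite sets. Bisecting repeatedly,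
the `t`-th step handles `j * 2 ^ t` sets with a polynomial of degree at most
`(n! * j * 2 ^ t) ^ (1 / n)`. These degrees are bounded by a geometric progression of ratio
`2 ^ (1 / n)`, so with total budget `D` the number of steps `T` can be taken with
`(D * (2 ^ (1 / n) - 1)) ^ n ≤ 2 * n! * j * 2 ^ T`.
-/

open Filter Finset Module Topology

/-- A mod-2 ordered simplicial chain: a simplex is the list of its vertices (repetitions allowed),
and the empty list is the generator of the augmented complex in degree `-1`. -/
abbrev ModTwoChain (V : Type*) := List V →₀ ZMod 2

namespace ModTwoChain

section Boundary

variable {V M : Type*} [AddCommMonoid M] [Module (ZMod 2) M]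

/-- The chains all of whose simplices lie in `s`. -/
abbrev chainsOn (s : Set (List V)) : Submodule (ZMod 2) (ModTwoChain V) :=
  Finsupp.supported (ZMod 2) (ZMod 2) s

/-- The chains all of whose vertices lie in `U`. -/
abbrev chainsIn (U : Set V) : Submodule (ZMod 2) (ModTwoChain V) :=
  chainsOn {l | ∀ v ∈ l, v ∈ U}

/-- The join of a chain with the vertex `b`, which is put in front of every simplex. -/
noncomputable def cone (b : V) : End (ZMod 2) (ModTwoChain V) :=
  Finsupp.lmapDomain (ZMod 2) (ZMod 2) (List.cons b)

/-- The sum of the facets of a simplex. -/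
noncomputable def facetSum (l : List V) : ModTwoChain V :=
  ∑ i : Fin l.length, Finsupp.single (l.eraseIdx i) 1

/-- The boundary operator; the boundary of a single vertex is the empty simplex. -/
noncomputable def boundary : End (ZMod 2) (ModTwoChain V) :=
  Finsupp.linearCombination (ZMod 2) facetSum

lemma map_mem_of_mem_chainsOn {s : Set (List V)} {W : Submodule (ZMod 2) M}
    (φ : ModTwoChain V →ₗ[ZMod 2] M) (h : ∀ l ∈ s, φ (Finsupp.single l 1) ∈ W)
    {c : ModTwoChain V} (hc : c ∈ chainsOn s) : φ c ∈ W := by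
  have hle : chainsOn s ≤ W.comap φ := by
    rw [chainsOn, Finsupp.supported_eq_span_single, Submodule.span_le]
    rintro _ ⟨l, hl, rfl⟩
    exact h l hl
  exact hle hc

lemma map_eq_of_mem_chainsOn {s : Set (List V)} (φ ψ : ModTwoChain V →ₗ[ZMod 2] M)
    (h : ∀ l ∈ s, φ (Finsupp.single l 1) = ψ (Finsupp.single l 1))
    {c : ModTwoChain V} (hc : c ∈ chainsOn s) : φ c = ψ c :=
  map_mem_of_mem_chainsOn (W := LinearMap.eqLocus φ ψ) LinearMap.id h hc

lemma map_eq_of_forall_single (φ ψ : ModTwoChain V →ₗ[ZMod 2] M)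
    (h : ∀ l, φ (Finsupp.single l 1) = ψ (Finsupp.single l 1)) (c : ModTwoChain V) : φ c = ψ c :=
  map_eq_of_mem_chainsOn φ ψ (s := Set.univ) (fun l _ => h l) (by simp [chainsOn])

lemma eraseIdx_induction {P : List V → Prop}
    (step : ∀ l, (∀ i : Fin l.length, P (l.eraseIdx i)) → P l) (l : List V) : P l :=
  step l fun i => eraseIdx_induction step (l.eraseIdx i)
termination_by l.length
decreasing_by rw [List.length_eraseIdx_of_lt i.isLt]; have := i.isLt; omega

@[simp]
lemma cone_single (b : V) (l : List V) :
    cone b (Finsupp.single l 1) = Finsupp.single (b :: l) 1 := by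
  simp [cone]

@[simp]
lemma boundary_single (l : List V) : boundary (Finsupp.single l 1) = facetSum l := by
  simp [boundary]

@[simp]
lemma facetSum_nil : facetSum ([] : List V) = 0 := by
  simp [facetSum]

lemma facetSum_cons (a : V) (l : List V) :
    facetSum (a :: l) = Finsupp.single l 1 + cone a (facetSum l) := by
  simp [facetSum, Fin.sum_univ_succ]

lemma cone_mem_chainsOn {s t : Set (List V)} {b : V} (h : ∀ l ∈ s, b :: l ∈ t)
    {c : ModTwoChain V} (hc : c ∈ chainsOn s) : cone b c ∈ chainsOn t := by
  refine map_mem_of_mem_chainsOn _ (fun l hl => ?_) hc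
  rw [cone_single]
  exact Finsupp.single_mem_supported _ _ (h l hl)

lemma boundary_mem_chainsIn {U : Set V} {c : ModTwoChain V} (hc : c ∈ chainsIn U) :
    boundary c ∈ chainsIn U := by
  refine map_mem_of_mem_chainsOn _ (fun l hl => ?_) hc
  rw [boundary_single]
  exact Submodule.sum_mem _ fun i _ => Finsupp.single_mem_supported _ _
    fun v hv => hl v (List.mem_of_mem_eraseIdx hv)

lemma boundary_cone (b : V) (c : ModTwoChain V) :
    boundary (cone b c) = c + cone b (boundary c) :=
  map_eq_of_forall_single (boundary ∘ₗ cone b) (LinearMap.id + cone b ∘ₗ boundary)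
    (fun l => by simp [facetSum_cons]) c

lemma boundary_boundary (c : ModTwoChain V) : boundary (boundary c) = 0 := by
  refine map_eq_of_forall_single (boundary ∘ₗ boundary) 0 (fun l => ?_) c
  induction l with
  | nil => simp
  | cons a l ih =>
    simp only [LinearMap.comp_apply, boundary_single, LinearMap.zero_apply] at ih ⊢
    rw [facetSum_cons, map_add, boundary_single, boundary_cone, ih, map_zero, add_zero,
      ZModModule.add_self]

end Boundary

section Antipode

variable {V : Type*} [InvolutiveNeg V]

/-- The action of the antipodal map on chains. -/
noncomputable def antipode : End (ZMod 2) (ModTwoChain V) :=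
  Finsupp.lmapDomain (ZMod 2) (ZMod 2) (List.map Neg.neg)

@[simp]
lemma antipode_single (l : List V) :
    antipode (Finsupp.single l 1) = Finsupp.single (l.map Neg.neg) 1 := by
  simp [antipode]

lemma antipode_antipode (c : ModTwoChain V) : antipode (antipode c) = c :=
  map_eq_of_forall_single (antipode ∘ₗ antipode) LinearMap.id (fun l => by simp) c

lemma antipode_cone (b : V) (c : ModTwoChain V) :
    antipode (cone b c) = cone (-b) (antipode c) :=
  map_eq_of_forall_single (antipode ∘ₗ cone b) (cone (-b) ∘ₗ antipode) (fun l => by simp) c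

lemma antipode_facetSum (l : List V) : antipode (facetSum l) = facetSum (l.map Neg.neg) := by
  induction l with
  | nil => simp
  | cons a l ih => simp [facetSum_cons, antipode_cone, ih]

lemma antipode_boundary (c : ModTwoChain V) : antipode (boundary c) = boundary (antipode c) := by
  rw [← LinearMap.comp_apply, ← LinearMap.comp_apply]
  refine map_eq_of_forall_single _ _ (fun l => ?_) c
  rw [LinearMap.comp_apply, LinearMap.comp_apply, boundary_single, antipode_single,
    boundary_single, antipode_facetSum]

lemma antipode_mem_chainsOn {s t : Set (List V)} (h : ∀ l ∈ s, l.map Neg.neg ∈ t)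
    {c : ModTwoChain V} (hc : c ∈ chainsOn s) : antipode c ∈ chainsOn t := by
  refine map_mem_of_mem_chainsOn _ (fun l hl => ?_) hc
  rw [antipode_single]
  exact Finsupp.single_mem_supported _ _ (h l hl)

end Antipode

section SignCocycle

variable {V : Type*}

/-- The cap product with the `0`-cochain `χ`: each simplex is multiplied by the value of `χ` at its
first vertex, and the empty simplex is sent to `0`. -/
noncomputable def capHead (χ : V → ZMod 2) : End (ZMod 2) (ModTwoChain V) :=
  Finsupp.linearCombination (ZMod 2) fun l => Finsupp.single l (l.head?.elim 0 χ)

/-- The cup product of the coboundaries of the `0`-cochains in the list, as a functional on chains;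
for the empty list it is the augmentation. When every `χ` changes value under the antipodal map, it
represents a power of the first Stiefel-Whitney class of the quotient. -/
noncomputable def signCocycle : List (V → ZMod 2) → ModTwoChain V →ₗ[ZMod 2] ZMod 2
  | [] => Finsupp.lapply [] ∘ₗ boundary
  | χ :: χs => signCocycle χs ∘ₗ capHead χ ∘ₗ boundary

@[simp]
lemma capHead_single_nil (χ : V → ZMod 2) : capHead χ (Finsupp.single [] 1) = 0 := by
  simp [capHead]

@[simp]
lemma capHead_single_cons (χ : V → ZMod 2) (v : V) (l : List V) :
    capHead χ (Finsupp.single (v :: l) 1) = χ v • Finsupp.single (v :: l) 1 := by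
  simp [capHead]

lemma capHead_mem_chainsOn (χ : V → ZMod 2) {s : Set (List V)} {c : ModTwoChain V}
    (hc : c ∈ chainsOn s) : capHead χ c ∈ chainsOn s := by
  refine map_mem_of_mem_chainsOn (capHead χ) ?_ hc
  rintro (_ | ⟨v, l⟩) hl
  · simp
  · rw [capHead_single_cons]
    exact Submodule.smul_mem _ _ (Finsupp.single_mem_supported _ _ hl)

lemma signCocycle_cons (χ : V → ZMod 2) (χs : List (V → ZMod 2)) (c : ModTwoChain V) :
    signCocycle (χ :: χs) c = signCocycle χs (capHead χ (boundary c)) := rfl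

@[simp]
lemma signCocycle_single_nil (χs : List (V → ZMod 2)) :
    signCocycle χs (Finsupp.single [] 1) = 0 := by
  cases χs <;> simp [signCocycle]

lemma signCocycle_boundary (χs : List (V → ZMod 2)) (c : ModTwoChain V) :
    signCocycle χs (boundary c) = 0 := by
  cases χs <;> simp [signCocycle, boundary_boundary]

lemma signCocycle_capHead_eq_smul {χ : V → ZMod 2} {a : ZMod 2} (χs : List (V → ZMod 2))
    {c : ModTwoChain V} (hc : c ∈ chainsIn (χ ⁻¹' {a})) :
    signCocycle χs (capHead χ c) = a * signCocycle χs c := by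
  refine map_eq_of_mem_chainsOn (signCocycle χs ∘ₗ capHead χ) (a • signCocycle χs) ?_ hc
  rintro (_ | ⟨v, l⟩) hl
  · simp
  · rw [LinearMap.comp_apply, capHead_single_cons, hl v List.mem_cons_self, map_smul,
      LinearMap.smul_apply]

lemma signCocycle_eq_zero_of_const {χ : V → ZMod 2} {a : ZMod 2} {χs : List (V → ZMod 2)}
    (hχ : χ ∈ χs) {c : ModTwoChain V} (hc : c ∈ chainsIn (χ ⁻¹' {a})) :
    signCocycle χs c = 0 := by
  induction χs generalizing c with
  | nil => simp at hχ
  | cons χ' χs ih =>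
    rw [signCocycle_cons]
    rcases List.mem_cons.1 hχ with rfl | hχ
    · rw [signCocycle_capHead_eq_smul χs (boundary_mem_chainsIn hc), signCocycle_boundary, mul_zero]
    · exact ih hχ (capHead_mem_chainsOn χ' (boundary_mem_chainsIn hc))

lemma exists_mem_support_forall_exists_eq {χs : List (V → ZMod 2)} {c : ModTwoChain V}
    (hc : signCocycle χs c ≠ 0) :
    ∃ l ∈ c.support, ∀ χ ∈ χs, ∀ a, ∃ v ∈ l, χ v = a := by
  obtain ⟨l, hl, hne⟩ : ∃ l ∈ c.support, signCocycle χs (Finsupp.single l 1) ≠ 0 := by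
    by_contra! h
    exact hc (map_eq_of_mem_chainsOn (signCocycle χs) 0 h
      ((Finsupp.mem_supported _ _).2 subset_rfl))
  refine ⟨l, hl, fun χ hχ a => ?_⟩
  by_contra! hconst
  have eq_add_one : ∀ a b : ZMod 2, b ≠ a → b = a + 1 := by decide
  have hconst' : ∀ v ∈ l, χ v = a + 1 := fun v hv => eq_add_one _ _ (hconst v hv)
  exact hne (signCocycle_eq_zero_of_const hχ (Finsupp.single_mem_supported _ _ hconst'))

variable [InvolutiveNeg V] {U : Set V}

lemma signCocycle_capHead_antipode {χ : V → ZMod 2} (hχ : ∀ v ∈ U, χ (-v) = χ v + 1)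
    (χs : List (V → ZMod 2)) {c : ModTwoChain V} (hc : c ∈ chainsIn U) :
    signCocycle χs (capHead χ (antipode c)) =
      signCocycle χs (antipode (capHead χ c)) + signCocycle χs (antipode c) := by
  refine map_eq_of_mem_chainsOn (signCocycle χs ∘ₗ capHead χ ∘ₗ antipode)
    (signCocycle χs ∘ₗ antipode ∘ₗ capHead χ + signCocycle χs ∘ₗ antipode) ?_ hc
  rintro (_ | ⟨v, l⟩) hl
  · simp
  · simp only [LinearMap.comp_apply, LinearMap.add_apply, antipode_single, List.map_cons,
      capHead_single_cons, hχ v (hl v List.mem_cons_self), map_smul, add_smul, one_smul, map_add]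

lemma antipode_apply_nil (c : ModTwoChain V) : antipode c [] = c [] := by
  refine map_eq_of_forall_single (Finsupp.lapply [] ∘ₗ antipode) (Finsupp.lapply []) ?_ c
  rintro (_ | ⟨v, l⟩) <;>
    simp only [LinearMap.comp_apply, antipode_single, List.map_nil, List.map_cons,
      Finsupp.lapply_apply, Finsupp.single_apply, reduceCtorEq]

lemma signCocycle_antipode {χs : List (V → ZMod 2)} (hχ : ∀ χ ∈ χs, ∀ v ∈ U, χ (-v) = χ v + 1)
    {c : ModTwoChain V} (hc : c ∈ chainsIn U) :
    signCocycle χs (antipode c) = signCocycle χs c := by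
  induction χs generalizing c with
  | nil =>
    change boundary (antipode c) [] = boundary c []
    rw [← antipode_boundary, antipode_apply_nil]
  | cons χ χs ih =>
    have hχs := (List.forall_mem_cons.1 hχ).2
    have hbd := boundary_mem_chainsIn hc
    rw [signCocycle_cons, signCocycle_cons, ← antipode_boundary,
      signCocycle_capHead_antipode (hχ χ List.mem_cons_self) χs hbd,
      ih hχs (capHead_mem_chainsOn χ hbd), ih hχs hbd, signCocycle_boundary, add_zero]

/-- The chains `c k` behave like the upper hemispheres of a sphere on which the antipodal map acts:
`c (k + 1)` and its antipode share the boundary `c k + antipode (c k)`. -/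
structure IsHemisphereTower (c : ℕ → ModTwoChain V) : Prop where
  boundary_zero : boundary (c 0) = Finsupp.single [] 1
  boundary_succ (k : ℕ) : boundary (c (k + 1)) = c k + antipode (c k)

lemma IsHemisphereTower.signCocycle_eq_one {c : ℕ → ModTwoChain V} (hc : IsHemisphereTower c)
    {χs : List (V → ZMod 2)} (hU : ∀ k < χs.length, c k ∈ chainsIn U)
    (hχ : ∀ χ ∈ χs, ∀ v ∈ U, χ (-v) = χ v + 1) : signCocycle χs (c χs.length) = 1 := by
  induction χs with
  | nil =>
    change boundary (c 0) [] = 1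
    rw [hc.boundary_zero, Finsupp.single_eq_same]
  | cons χ χs ih =>
    have hχs := (List.forall_mem_cons.1 hχ).2
    set k := χs.length with hk
    have hcU : c k ∈ chainsIn U := hU k (by simp [hk])
    calc signCocycle (χ :: χs) (c (k + 1))
        = signCocycle χs (capHead χ (c k)) + signCocycle χs (capHead χ (antipode (c k))) := by
          rw [signCocycle_cons, hc.boundary_succ, map_add, map_add]
      _ = signCocycle χs (capHead χ (c k)) + (signCocycle χs (capHead χ (c k))
            + signCocycle χs (c k)) := by
          rw [signCocycle_capHead_antipode (hχ χ List.mem_cons_self) χs hcU,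
            signCocycle_antipode hχs (capHead_mem_chainsOn χ hcU),
            signCocycle_antipode hχs hcU]
      _ = signCocycle χs (c k) := by rw [← add_assoc, ZModModule.add_self, zero_add]
      _ = 1 := ih (fun i hi => hU i (Nat.lt_succ_of_lt hi)) hχs

end SignCocycle

section Subdivision

variable {V : Type*} [AddCommGroup V] [Module ℝ V]

/-- The barycenter of a simplex, with the junk value `0` for the empty simplex. -/
noncomputable def barycenter (l : List V) : V := (l.length : ℝ)⁻¹ • l.sum

/-- The barycentric subdivision of a simplex: the join of its barycenter with the subdivision of
its boundary. -/
noncomputable def subdivideSimplex : List V → ModTwoChain V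
  | [] => Finsupp.single [] 1
  | a :: l => cone (barycenter (a :: l))
      (∑ i : Fin (a :: l).length, subdivideSimplex ((a :: l).eraseIdx i))
termination_by l => l.length
decreasing_by rw [List.length_eraseIdx_of_lt i.isLt]; simp

/-- The barycentric subdivision operator. -/
noncomputable def subdivision : End (ZMod 2) (ModTwoChain V) :=
  Finsupp.linearCombination (ZMod 2) subdivideSimplex

lemma barycenter_map_neg (l : List V) : barycenter (l.map Neg.neg) = -barycenter l := by
  have hsum : (l.map Neg.neg).sum = -l.sum := by
    induction l with
    | nil => simp
    | cons a l ih => simp [ih, add_comm]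
  rw [barycenter, List.length_map, hsum, smul_neg, barycenter]

lemma barycenter_eq_sum (l : List V) :
    barycenter l = ∑ i : Fin l.length, (l.length : ℝ)⁻¹ • l.get i := by
  rw [barycenter, ← Finset.smul_sum]
  simp only [List.get_eq_getElem, Fin.sum_univ_getElem]

lemma barycenter_mem_convexHull {l : List V} (hl : l ≠ []) :
    barycenter l ∈ convexHull ℝ {v | v ∈ l} := by
  have hlen : (l.length : ℝ) ≠ 0 := by simpa using hl
  rw [barycenter_eq_sum]
  refine (convex_convexHull ℝ _).sum_mem (fun i _ => by positivity) ?_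
    (fun i _ => subset_convexHull ℝ _ (l.get_mem i))
  simp [hlen]

@[simp]
lemma subdivision_single_nil :
    subdivision (Finsupp.single ([] : List V) 1) = Finsupp.single [] 1 := by
  simp [subdivision, subdivideSimplex]

lemma subdivision_single_of_ne_nil {l : List V} (hl : l ≠ []) :
    subdivision (Finsupp.single l 1) = cone (barycenter l) (subdivision (facetSum l)) := by
  obtain ⟨a, l, rfl⟩ := List.exists_cons_of_ne_nil hl
  rw [facetSum, map_sum]
  simp only [subdivision, Finsupp.linearCombination_single, one_smul]
  rw [subdivideSimplex]

lemma boundary_subdivision (c : ModTwoChain V) :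
    boundary (subdivision c) = subdivision (boundary c) := by
  rw [← LinearMap.comp_apply, ← LinearMap.comp_apply]
  refine map_eq_of_forall_single _ _ (eraseIdx_induction fun l ih => ?_) c
  rcases eq_or_ne l [] with rfl | hl
  · simp
  have hfacets : boundary (subdivision (facetSum l)) = subdivision (boundary (facetSum l)) := by
    rw [facetSum, map_sum, map_sum, map_sum, map_sum]
    exact Finset.sum_congr rfl fun i _ => ih i
  rw [LinearMap.comp_apply, LinearMap.comp_apply, subdivision_single_of_ne_nil hl, boundary_cone,
    hfacets, ← boundary_single, boundary_boundary, map_zero, map_zero, add_zero]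

lemma antipode_subdivision (c : ModTwoChain V) :
    antipode (subdivision c) = subdivision (antipode c) := by
  rw [← LinearMap.comp_apply, ← LinearMap.comp_apply]
  refine map_eq_of_forall_single _ _ (eraseIdx_induction fun l ih => ?_) c
  rcases eq_or_ne l [] with rfl | hl
  · simp
  have hfacets : antipode (subdivision (facetSum l)) = subdivision (antipode (facetSum l)) := by
    rw [facetSum, map_sum, map_sum, map_sum, map_sum]
    exact Finset.sum_congr rfl fun i _ => ih i
  have hneg : l.map Neg.neg ≠ [] := by simpa using hl
  rw [LinearMap.comp_apply, LinearMap.comp_apply, antipode_single,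
    subdivision_single_of_ne_nil hl, subdivision_single_of_ne_nil hneg, antipode_cone, hfacets,
    antipode_facetSum, barycenter_map_neg]

lemma IsHemisphereTower.iterate_subdivision {c : ℕ → ModTwoChain V} (hc : IsHemisphereTower c)
    (N : ℕ) : IsHemisphereTower fun k => subdivision^[N] (c k) := by
  have hbd : Function.Commute (boundary (V := V)) subdivision^[N] :=
    Function.Commute.iterate_right boundary_subdivision N
  have hanti : Function.Commute (antipode (V := V)) subdivision^[N] :=
    Function.Commute.iterate_right antipode_subdivision N
  have hnil : subdivision^[N] (Finsupp.single ([] : List V) 1) = Finsupp.single [] 1 :=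
    Function.iterate_fixed subdivision_single_nil N
  refine ⟨?_, fun k => ?_⟩
  · rw [hbd, hc.boundary_zero, hnil]
  · rw [hbd, hc.boundary_succ, iterate_map_add, hanti]

end Subdivision

section Mesh

variable {V : Type*} [NormedAddCommGroup V] [NormedSpace ℝ V]

/-- `l'` is a simplex of the same dimension inside the convex hull of `l`, smaller by the
factor `r`. -/
structure IsSubsimplex (r : ℝ) (l' l : List V) : Prop where
  length_eq : l'.length = l.length
  subset_convexHull : {v | v ∈ l'} ⊆ convexHull ℝ {v | v ∈ l}
  diam_le : Metric.diam {v | v ∈ l'} ≤ r * Metric.diam {v | v ∈ l}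

lemma IsSubsimplex.trans {r r' : ℝ} {l₁ l₂ l₃ : List V} (hr : 0 ≤ r)
    (h₁₂ : IsSubsimplex r l₁ l₂) (h₂₃ : IsSubsimplex r' l₂ l₃) : IsSubsimplex (r * r') l₁ l₃ where
  length_eq := h₁₂.length_eq.trans h₂₃.length_eq
  subset_convexHull := h₁₂.subset_convexHull.trans
    (convexHull_min h₂₃.subset_convexHull (convex_convexHull ℝ _))
  diam_le := by
    rw [mul_assoc]
    exact h₁₂.diam_le.trans (mul_le_mul_of_nonneg_left h₂₃.diam_le hr)

lemma dist_barycenter_le {l : List V} {m : ℕ} (hlm : l.length ≤ m + 1) {x : V} (hx : x ∈ l) :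
    dist x (barycenter l) ≤ m / (m + 1) * Metric.diam {v | v ∈ l} := by
  set δ := Metric.diam {v | v ∈ l}
  obtain ⟨i₀, rfl⟩ := List.get_of_mem hx
  have hlen : 0 < (l.length : ℝ) := by exact_mod_cast List.length_pos_of_mem hx
  have hdist (i : Fin l.length) : dist (l.get i₀) (l.get i) ≤ δ :=
    Metric.dist_le_diam_of_mem l.finite_toSet.isBounded hx (l.get_mem i)
  have hsum : ∑ i, dist (l.get i₀) (l.get i) ≤ (l.length - 1) * δ := by
    rw [← Finset.add_sum_erase _ _ (mem_univ i₀), dist_self, zero_add]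
    calc ∑ i ∈ univ.erase i₀, dist (l.get i₀) (l.get i)
        ≤ #(univ.erase i₀) • δ := sum_le_card_nsmul _ _ _ fun i _ => hdist i
      _ = (l.length - 1) * δ := by
        rw [card_erase_of_mem (mem_univ i₀), card_fin, nsmul_eq_mul,
          Nat.cast_pred (List.length_pos_of_mem hx)]
  have hcoeff : (l.length - 1 : ℝ) / l.length ≤ m / (m + 1) := by
    have : (l.length : ℝ) ≤ m + 1 := by exact_mod_cast hlm
    rw [div_le_div_iff₀ hlen (by positivity)]
    nlinarith
  calc dist (l.get i₀) (barycenter l)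
      = ‖∑ i, (l.length : ℝ)⁻¹ • (l.get i₀ - l.get i)‖ := by
        simp [dist_eq_norm, barycenter_eq_sum, smul_sub, ← Nat.cast_smul_eq_nsmul ℝ, smul_smul,
          hlen.ne']
    _ ≤ ∑ i, (l.length : ℝ)⁻¹ * dist (l.get i₀) (l.get i) := by
        refine norm_sum_le_of_le _ fun i _ => ?_
        rw [norm_smul, norm_inv, Real.norm_natCast, dist_eq_norm]
    _ ≤ (l.length - 1) / l.length * δ := by
        rw [← mul_sum, inv_mul_eq_div, div_mul_eq_mul_div]
        exact div_le_div_of_nonneg_right hsum hlen.le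
    _ ≤ m / (m + 1) * δ := mul_le_mul_of_nonneg_right hcoeff Metric.diam_nonneg

lemma dist_barycenter_le_of_mem_convexHull {l : List V} {m : ℕ} (hlm : l.length ≤ m + 1) {x : V}
    (hx : x ∈ convexHull ℝ {v | v ∈ l}) :
    dist x (barycenter l) ≤ m / (m + 1) * Metric.diam {v | v ∈ l} :=
  convexHull_min (fun _ hv => dist_barycenter_le hlm hv) (convex_closedBall _ _) hx

lemma IsSubsimplex.barycenter_cons {m : ℕ} {l l' : List V} (hlm : l.length ≤ m + 1)
    {i : ℕ} (hi : i < l.length) (h : IsSubsimplex (m / (m + 1)) l' (l.eraseIdx i)) :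
    IsSubsimplex (m / (m + 1)) (barycenter l :: l') l := by
  have hfacet : {v | v ∈ l.eraseIdx i} ⊆ {v | v ∈ l} := fun v hv => List.mem_of_mem_eraseIdx hv
  have hhull := h.subset_convexHull.trans (convexHull_mono hfacet)
  have hdiam : Metric.diam {v | v ∈ l'} ≤ m / (m + 1) * Metric.diam {v | v ∈ l} :=
    h.diam_le.trans (mul_le_mul_of_nonneg_left
      (Metric.diam_mono hfacet l.finite_toSet.isBounded) (by positivity))
  have hvertices : {v | v ∈ barycenter l :: l'} = insert (barycenter l) {v | v ∈ l'} := by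
    ext; simp
  refine ⟨?_, ?_, ?_⟩
  · rw [List.length_cons, h.length_eq, List.length_eraseIdx_of_lt hi]
    omega
  · rw [hvertices, Set.insert_subset_iff]
    exact ⟨barycenter_mem_convexHull (List.ne_nil_of_length_pos (by omega)), hhull⟩
  · refine Metric.diam_le_of_forall_dist_le (by positivity) ?_
    simp only [hvertices, Set.forall_mem_insert, dist_self]
    have hbary v (hv : v ∈ l') := dist_barycenter_le_of_mem_convexHull hlm (hhull hv)
    refine ⟨⟨by positivity, fun v hv => dist_comm v _ ▸ hbary v hv⟩, fun u hu =>
      ⟨hbary u hu, fun v hv => ?_⟩⟩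
    exact (Metric.dist_le_diam_of_mem l'.finite_toSet.isBounded hu hv).trans hdiam

lemma subdivision_single_mem_chainsOn {m : ℕ} (l : List V) (hlm : l.length ≤ m + 1) :
    subdivision (Finsupp.single l 1) ∈ chainsOn {l' | IsSubsimplex (m / (m + 1)) l' l} := by
  induction l using eraseIdx_induction with
  | step l ih =>
  rcases eq_or_ne l [] with rfl | hl
  · rw [subdivision_single_nil]
    exact Finsupp.single_mem_supported _ _ ⟨rfl, by simp, by simp⟩
  rw [subdivision_single_of_ne_nil hl, facetSum, map_sum, map_sum]
  refine Submodule.sum_mem _ fun i _ => cone_mem_chainsOn (fun l' h => ?_)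
    (ih i ((List.length_eraseIdx_le ..).trans hlm))
  exact IsSubsimplex.barycenter_cons hlm i.isLt h

lemma iterate_subdivision_mem_chainsOn {m : ℕ} {c : ModTwoChain V}
    (hc : ∀ l ∈ c.support, l.length ≤ m + 1) (N : ℕ) :
    subdivision^[N] c ∈
      chainsOn {l' | ∃ l ∈ c.support, IsSubsimplex ((m / (m + 1)) ^ N) l' l} := by
  induction N with
  | zero =>
    refine (Finsupp.mem_supported _ _).2 fun l hl => ⟨l, hl, rfl, subset_convexHull ℝ _, ?_⟩
    rw [pow_zero, one_mul]
  | succ N ih =>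
    rw [Function.iterate_succ_apply']
    refine map_mem_of_mem_chainsOn subdivision ?_ ih
    rintro l₁ ⟨l, hl, h₁⟩
    refine Finsupp.supported_mono ?_
      (subdivision_single_mem_chainsOn (m := m) l₁ (h₁.length_eq.trans_le (hc l hl)))
    intro l₂ h₂
    exact ⟨l, hl, pow_succ' (m / (m + 1) : ℝ) N ▸ IsSubsimplex.trans (by positivity) h₂ h₁⟩

end Mesh

section CrossPolytope

variable {V : Type*} [AddCommGroup V]

/-- The `k`-dimensional upper hemisphere of the boundary of the cross-polytope with vertices
`± e 0, …, ± e k`. -/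
noncomputable def crossPolytopeHemisphere (e : ℕ → V) : ℕ → ModTwoChain V
  | 0 => Finsupp.single [e 0] 1
  | k + 1 => cone (e (k + 1))
      (crossPolytopeHemisphere e k + antipode (crossPolytopeHemisphere e k))

lemma isHemisphereTower_crossPolytopeHemisphere (e : ℕ → V) :
    IsHemisphereTower (crossPolytopeHemisphere e) := by
  have boundary_zero : boundary (crossPolytopeHemisphere e 0) = Finsupp.single [] 1 := by
    rw [crossPolytopeHemisphere, boundary_single, facetSum_cons, facetSum_nil, map_zero, add_zero]
  refine ⟨boundary_zero, fun k => ?_⟩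
  rw [crossPolytopeHemisphere, boundary_cone, add_eq_left, map_add, ← antipode_boundary]
  induction k with
  | zero => rw [boundary_zero, antipode_single, List.map_nil, ZModModule.add_self, map_zero]
  | succ k ih =>
    rw [crossPolytopeHemisphere, boundary_cone, map_add boundary, ← antipode_boundary, ih,
      add_zero, map_add antipode, antipode_antipode, add_comm (antipode _), ZModModule.add_self,
      map_zero]

variable [Module ℝ V]

/-- The `k`-simplices spanned by vertices of the cross-polytope, no two of which are opposite. -/
def crossPolytopeSimplices (e : ℕ → V) (k : ℕ) : Set (List V) :=
  {l | l.length = k + 1 ∧ ∃ s : ℕ → ℝ, (∀ i, |s i| = 1) ∧ ∀ v ∈ l, ∃ i ≤ k, v = s i • e i}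

lemma map_neg_mem_crossPolytopeSimplices {e : ℕ → V} {k : ℕ} {l : List V}
    (hl : l ∈ crossPolytopeSimplices e k) : l.map Neg.neg ∈ crossPolytopeSimplices e k := by
  obtain ⟨hlen, s, hs, hv⟩ := hl
  refine ⟨by simp [hlen], fun i => -s i, by simpa using hs, List.forall_mem_map.2 fun v hvl => ?_⟩
  obtain ⟨i, hi, rfl⟩ := hv v hvl
  exact ⟨i, hi, (neg_smul _ _).symm⟩

lemma cons_mem_crossPolytopeSimplices {e : ℕ → V} {k : ℕ} {l : List V}
    (hl : l ∈ crossPolytopeSimplices e k) :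
    e (k + 1) :: l ∈ crossPolytopeSimplices e (k + 1) := by
  obtain ⟨hlen, s, hs, hv⟩ := hl
  refine ⟨by simp [hlen], Function.update s (k + 1) 1, fun i => ?_,
    List.forall_mem_cons.2 ⟨⟨k + 1, le_rfl, by simp⟩, fun v hvl => ?_⟩⟩
  · rcases eq_or_ne i (k + 1) with rfl | hi <;> simp [*]
  · obtain ⟨i, hi, rfl⟩ := hv v hvl
    exact ⟨i, hi.trans k.le_succ, by rw [Function.update_of_ne (by omega)]⟩

lemma crossPolytopeHemisphere_mem_chainsOn (e : ℕ → V) (k : ℕ) :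
    crossPolytopeHemisphere e k ∈ chainsOn (crossPolytopeSimplices e k) := by
  induction k with
  | zero => exact Finsupp.single_mem_supported _ _ ⟨rfl, fun _ => 1, by simp, by simp⟩
  | succ k ih =>
    exact cone_mem_chainsOn (fun _ => cons_mem_crossPolytopeSimplices) (Submodule.add_mem _ ih
      (antipode_mem_chainsOn (fun _ => map_neg_mem_crossPolytopeSimplices) ih))

lemma zero_notMem_convexHull_of_mem_crossPolytopeSimplices {e : ℕ → V} {k : ℕ}
    (he : LinearIndepOn ℝ e (Set.Iic k)) {l : List V} (hl : l ∈ crossPolytopeSimplices e k) :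
    (0 : V) ∉ convexHull ℝ {v | v ∈ l} := by
  obtain ⟨-, s, hs, hv⟩ := hl
  obtain ⟨g, hg⟩ : ∃ g : V →ₗ[ℝ] ℝ, ∀ i ≤ k, g (e i) = s i := by
    obtain ⟨g, hg⟩ := ((Basis.span he.linearIndependent).constr ℝ fun i => s i).exists_extend
    refine ⟨g, fun i hi => ?_⟩
    have hbasis := LinearMap.congr_fun hg (Basis.span he.linearIndependent ⟨i, hi⟩)
    rwa [LinearMap.comp_apply, Submodule.subtype_apply, Basis.constr_basis, Basis.span_apply]
      at hbasis
  have hsub : convexHull ℝ {v | v ∈ l} ⊆ {v | g v = 1} := by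
    refine convexHull_min (fun v hvl => ?_) (convex_hyperplane g.isLinear 1)
    obtain ⟨i, hi, rfl⟩ := hv v hvl
    simp [hg i hi, ← abs_mul_abs_self (s i), hs i]
  intro h0
  simpa using hsub h0

/-- The subset of `V` covered by the simplices of the hemisphere. -/
noncomputable def crossPolytopeHemisphereCarrier (e : ℕ → V) (k : ℕ) : Set V :=
  ⋃ l ∈ (crossPolytopeHemisphere e k).support, convexHull ℝ {v | v ∈ l}

lemma zero_notMem_crossPolytopeHemisphereCarrier {e : ℕ → V} {k : ℕ}
    (he : LinearIndepOn ℝ e (Set.Iic k)) : 0 ∉ crossPolytopeHemisphereCarrier e k := by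
  intro h
  obtain ⟨l, hl, h0⟩ := Set.mem_iUnion₂.1 h
  exact zero_notMem_convexHull_of_mem_crossPolytopeSimplices he
    ((Finsupp.mem_supported _ _).1 (crossPolytopeHemisphere_mem_chainsOn e k) hl) h0

lemma isCompact_crossPolytopeHemisphereCarrier [TopologicalSpace V] [IsTopologicalAddGroup V]
    [ContinuousSMul ℝ V] (e : ℕ → V) (k : ℕ) :
    IsCompact (crossPolytopeHemisphereCarrier e k) :=
  (crossPolytopeHemisphere e k).support.isCompact_biUnion
    fun l _ => l.finite_toSet.isCompact_convexHull ℝ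

end CrossPolytope

end ModTwoChain

section BorsukUlam

lemma exists_antipodal_sign {V : Type*} [AddCommGroup V] [IsAddTorsionFree V] {A : Set V}
    (hA : ∀ v ≠ 0, v ∈ A ∨ -v ∈ A) :
    ∃ χ : V → ZMod 2, (∀ v ≠ 0, χ (-v) = χ v + 1) ∧
      (∀ v ≠ 0, χ v = 1 → v ∈ A) ∧ ∀ v ≠ 0, χ v = 0 → -v ∈ A := by
  classical
  -- A well-ordering breaks the tie between `v` and `-v` when both lie in `A`.
  let P (v : V) : Prop := v ∈ A ∧ (-v ∉ A ∨ WellOrderingRel v (-v))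
  have hP {v : V} (hv : v ≠ 0) : P (-v) ↔ ¬ P v := by
    have hne : v ≠ -v := fun h => hv (self_eq_neg.1 h)
    have hcover := hA v hv
    have htri := trichotomous_of WellOrderingRel v (-v)
    have hasymm : WellOrderingRel v (-v) → ¬ WellOrderingRel (-v) v := asymm_of WellOrderingRel
    simp only [P, neg_neg]
    tauto
  refine ⟨fun v => if P v then 1 else 0, fun v hv => ?_, fun v _ h => ?_, fun v hv h => ?_⟩
  · by_cases h : P v
    · simp [h, (hP hv).not.2 (not_not.2 h), CharTwo.add_self_eq_zero]
    · simp [h, (hP hv).2 h]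
  · have : P v := by simpa using h
    exact this.1
  · have : ¬ P v := by simpa using h
    exact ((hP hv).2 this).1

lemma exists_mem_forall_mem_of_isCompact {E ι : Type*} [PseudoMetricSpace E] {K : Set E}
    (hK : IsCompact K) {B : ι → Set E} (hB : ∀ i, IsClosed (B i))
    (h : ∀ ε > 0, ∃ u ∈ K, ∀ i, ∃ x ∈ B i, dist x u ≤ ε) : ∃ v ∈ K, ∀ i, v ∈ B i := by
  choose u huK x hxB hdist using fun n : ℕ => h (1 / (n + 1)) Nat.one_div_pos_of_nat
  obtain ⟨v, hvK, φ, hφ, hlim⟩ := hK.tendsto_subseq huK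
  have hclose i : Tendsto (fun n => dist (x (φ n) i) (u (φ n))) atTop (𝓝 0) :=
    squeeze_zero (fun _ => dist_nonneg) (fun n => hdist (φ n) i)
      (tendsto_one_div_add_atTop_nhds_zero_nat.comp hφ.tendsto_atTop)
  exact ⟨v, hvK, fun i => (hB i).mem_of_tendsto ((tendsto_iff_of_dist (hclose i)).2 hlim)
    (Eventually.of_forall fun n => hxB (φ n) i)⟩

variable {V : Type*} [NormedAddCommGroup V] [NormedSpace ℝ V] {ι : Type*} [Fintype ι]

open ModTwoChain in
lemma exists_isSubsimplex_forall_exists_eq {e : ℕ → V} {m : ℕ} (hm : Fintype.card ι = m)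
    (he : LinearIndepOn ℝ e (Set.Iic m)) {χ : ι → V → ZMod 2}
    (hχ : ∀ i, ∀ v ≠ 0, χ i (-v) = χ i v + 1) (N : ℕ) :
    ∃ l ∈ (crossPolytopeHemisphere e m).support, ∃ l',
      IsSubsimplex ((m / (m + 1)) ^ N) l' l ∧ ∀ i a, ∃ v ∈ l', χ i v = a := by
  have hlen k : ∀ l ∈ (crossPolytopeHemisphere e k).support, l.length ≤ k + 1 := fun l hl =>
    ((Finsupp.mem_supported _ _).1 (crossPolytopeHemisphere_mem_chainsOn e k) hl).1.le
  have hne : ∀ k < m,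
      subdivision^[N] (crossPolytopeHemisphere e k) ∈ chainsIn ({0}ᶜ : Set V) := by
    refine fun k hk => Finsupp.supported_mono ?_ (iterate_subdivision_mem_chainsOn (hlen k) N)
    rintro l' ⟨l, hl, hl'⟩ v hv rfl
    exact zero_notMem_crossPolytopeHemisphereCarrier (he.mono (Set.Iic_subset_Iic.2 hk.le))
      (Set.mem_biUnion hl (hl'.subset_convexHull hv))
  have hlength : (univ.toList.map χ).length = m := by simp [hm]
  have hone := ((isHemisphereTower_crossPolytopeHemisphere e).iterate_subdivision
    N).signCocycle_eq_one (χs := univ.toList.map χ) (by rwa [hlength]) (by simpa using hχ)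
  rw [hlength] at hone
  obtain ⟨l', hl', hvalues⟩ := exists_mem_support_forall_exists_eq (hone.trans_ne one_ne_zero)
  obtain ⟨l, hl, hsub⟩ :=
    (Finsupp.mem_supported _ _).1 (iterate_subdivision_mem_chainsOn (hlen m) N) hl'
  exact ⟨l, hl, l', hsub, by simpa using hvalues⟩

open ModTwoChain in
lemma exists_subset_diam_le_forall_exists_eq {e : ℕ → V} {m : ℕ} (hm : Fintype.card ι = m)
    (he : LinearIndepOn ℝ e (Set.Iic m)) {χ : ι → V → ZMod 2}
    (hχ : ∀ i, ∀ v ≠ 0, χ i (-v) = χ i v + 1) {ε : ℝ} (hε : 0 < ε) :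
    ∃ s ⊆ crossPolytopeHemisphereCarrier e m, s.Nonempty ∧ Metric.diam s ≤ ε ∧
      ∀ i a, ∃ v ∈ s, χ i v = a := by
  set K := crossPolytopeHemisphereCarrier e m
  obtain ⟨N, hN⟩ : ∃ N : ℕ, (m / (m + 1) : ℝ) ^ N * Metric.diam K ≤ ε := by
    have hlim := (tendsto_pow_atTop_nhds_zero_of_lt_one (r := (m / (m + 1) : ℝ)) (by positivity)
      ((div_lt_one (by positivity)).2 (lt_add_one _))).mul_const (Metric.diam K)
    rw [zero_mul] at hlim
    exact (hlim.eventually_le_const hε).exists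
  obtain ⟨l, hl, l', hl', hvalues⟩ := exists_isSubsimplex_forall_exists_eq hm he hχ N
  have hlK : convexHull ℝ {v | v ∈ l} ⊆ K := fun v hv => Set.mem_biUnion hl hv
  have hlen : l'.length = m + 1 := hl'.length_eq.trans
    ((Finsupp.mem_supported _ _).1 (crossPolytopeHemisphere_mem_chainsOn e m) hl).1
  refine ⟨{v | v ∈ l'}, hl'.subset_convexHull.trans hlK,
    List.exists_mem_of_length_pos (by omega), ?_, hvalues⟩
  calc Metric.diam {v | v ∈ l'}
      ≤ (m / (m + 1)) ^ N * Metric.diam {v | v ∈ l} := hl'.diam_le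
    _ ≤ (m / (m + 1)) ^ N * Metric.diam K := mul_le_mul_of_nonneg_left
        (Metric.diam_mono ((subset_convexHull ℝ _).trans hlK)
          (isCompact_crossPolytopeHemisphereCarrier e m).isBounded) (by positivity)
    _ ≤ ε := hN

open ModTwoChain in
lemma exists_ne_zero_forall_mem_and_neg_mem_of_linearIndepOn {e : ℕ → V}
    (he : LinearIndepOn ℝ e (Set.Iic (Fintype.card ι))) {A : ι → Set V}
    (hclosed : ∀ i, IsClosed (A i)) (hcover : ∀ i, ∀ v ≠ 0, v ∈ A i ∨ -v ∈ A i) :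
    ∃ v ≠ 0, ∀ i, v ∈ A i ∧ -v ∈ A i := by
  have : IsAddTorsionFree V := .of_isTorsionFree ℝ V
  choose χ hneg hone hzero using fun i => exists_antipodal_sign (hcover i)
  set K := crossPolytopeHemisphereCarrier e (Fintype.card ι)
  have hK : IsCompact K := isCompact_crossPolytopeHemisphereCarrier e _
  have hK0 : ∀ v ∈ K, v ≠ 0 := fun v hv hv0 =>
    zero_notMem_crossPolytopeHemisphereCarrier he (hv0 ▸ hv)
  suffices h : ∀ ε > 0, ∃ u ∈ K, ∀ i, ∃ x ∈ Sum.elim A (fun i => Neg.neg ⁻¹' A i) i,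
      dist x u ≤ ε by
    obtain ⟨v, hvK, hv⟩ := exists_mem_forall_mem_of_isCompact hK (Sum.rec hclosed
      fun i => (hclosed i).preimage continuous_neg) h
    exact ⟨v, hK0 v hvK, fun i => ⟨hv (.inl i), hv (.inr i)⟩⟩
  intro ε hε
  obtain ⟨s, hsK, ⟨u, hu⟩, hdiam, hvalues⟩ :=
    exists_subset_diam_le_forall_exists_eq rfl he hneg hε
  have hdist {x} (hx : x ∈ s) : dist x u ≤ ε :=
    (Metric.dist_le_diam_of_mem (hK.isBounded.subset hsK) hx hu).trans hdiam
  refine ⟨u, hsK hu, ?_⟩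
  rintro (i | i)
  · obtain ⟨x, hx, hχ⟩ := hvalues i 1
    exact ⟨x, hone i x (hK0 x (hsK hx)) hχ, hdist hx⟩
  · obtain ⟨x, hx, hχ⟩ := hvalues i 0
    exact ⟨x, hzero i x (hK0 x (hsK hx)) hχ, hdist hx⟩

theorem exists_ne_zero_forall_mem_and_neg_mem [FiniteDimensional ℝ V]
    (hι : Fintype.card ι < finrank ℝ V) {A : ι → Set V} (hclosed : ∀ i, IsClosed (A i))
    (hcover : ∀ i, ∀ v ≠ 0, v ∈ A i ∨ -v ∈ A i) :
    ∃ v ≠ 0, ∀ i, v ∈ A i ∧ -v ∈ A i := by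
  let b := finBasis ℝ V
  let e (i : ℕ) : V := if h : i < finrank ℝ V then b ⟨i, h⟩ else 0
  have hlt (i : Set.Iic (Fintype.card ι)) : (i : ℕ) < finrank ℝ V := i.2.trans_lt hι
  have he : LinearIndepOn ℝ e (Set.Iic (Fintype.card ι)) := by
    have hcomp : (fun i : Set.Iic (Fintype.card ι) => e i) = b ∘ fun i : Set.Iic _ => ⟨i, hlt i⟩ :=
      funext fun i => dif_pos (hlt i)
    rw [LinearIndepOn, hcomp]
    exact b.linearIndependent.comp _ fun i j hij => Subtype.ext (congrArg Fin.val hij)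
  exact exists_ne_zero_forall_mem_and_neg_mem_of_linearIndepOn he hclosed hcover

end BorsukUlam

section HamSandwich

lemma isClosed_setOf_card_filter_neg_le {E P : Type*} [TopologicalSpace E] (s : Finset P)
    {f : P → E → ℝ} (hf : ∀ x, Continuous (f x)) (k : ℕ) :
    IsClosed {v | #{x ∈ s | f x v < 0} ≤ k} := by
  rw [← isOpen_compl_iff, isOpen_iff_mem_nhds]
  intro v hv
  have hneg : ∀ᶠ w in 𝓝 v, ∀ x ∈ ({x ∈ s | f x v < 0} : Finset P), f x w < 0 :=
    (eventually_all_finset _).2 fun x hx =>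
      (hf x).continuousAt.eventually_lt_const (mem_filter.1 hx).2
  filter_upwards [hneg] with w hw hle
  refine hv ((card_le_card fun x hx => ?_).trans hle)
  exact mem_filter.2 ⟨(mem_filter.1 hx).1, hw x hx⟩

theorem exists_ne_zero_forall_two_mul_card_filter_le {V P ι : Type*} [AddCommGroup V]
    [Module ℝ V] [Module.Finite ℝ V] [Fintype ι] (hι : Fintype.card ι < finrank ℝ V)
    (φ : P → V →ₗ[ℝ] ℝ) (X : ι → Finset P) :
    ∃ v ≠ 0, ∀ i, 2 * #{x ∈ X i | 0 < φ x v} ≤ #(X i) ∧ 2 * #{x ∈ X i | φ x v < 0} ≤ #(X i) := by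
  let b := (finBasis ℝ V).equivFun
  let f (x : P) : (Fin (finrank ℝ V) → ℝ) →ₗ[ℝ] ℝ := φ x ∘ₗ b.symm
  let A (i : ι) : Set (Fin (finrank ℝ V) → ℝ) := {w | #{x ∈ X i | f x w < 0} ≤ #(X i) / 2}
  have hclosed i : IsClosed (A i) :=
    isClosed_setOf_card_filter_neg_le _ (fun x => (f x).continuous_of_finiteDimensional) _
  have hcover : ∀ i, ∀ w ≠ 0, w ∈ A i ∨ -w ∈ A i := by
    intro i w _
    have hsum := card_filter_add_card_filter_not (s := X i) fun x => f x w < 0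
    have hle : #{x ∈ X i | f x (-w) < 0} ≤ #{x ∈ X i | ¬ f x w < 0} :=
      card_le_card <| monotone_filter_right _ fun x _ hx => by rw [map_neg] at hx; linarith
    simp only [A, Set.mem_ofPred_eq]
    omega
  obtain ⟨w, hw, hwA⟩ := exists_ne_zero_forall_mem_and_neg_mem (by simpa using hι) hclosed hcover
  refine ⟨b.symm w, by simpa using hw, fun i => ?_⟩
  obtain ⟨hneg, hpos⟩ := hwA i
  simp only [A, f, Set.mem_ofPred_eq, LinearMap.comp_apply, map_neg, Left.neg_neg_iff,
    LinearEquiv.coe_coe] at hneg hpos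
  omega

variable {σ : Type*} [Fintype σ]

lemma finrank_restrictTotalDegree (R : Type*) [CommRing R] [Nontrivial R] (d : ℕ) :
    finrank R (MvPolynomial.restrictTotalDegree σ R d) =
      (d + Fintype.card σ).choose (Fintype.card σ) := by
  classical
  let S : Finset (σ →₀ ℕ) := (range (d + 1)).biUnion fun k => univ.finsuppAntidiag k
  have hS : {s : σ →₀ ℕ | s.degree ≤ d} = S := by
    ext s
    simp [S, mem_finsuppAntidiag, Finsupp.degree_eq_sum]
  have hbasis : finrank R (MvPolynomial.restrictTotalDegree σ R d) =
      Nat.card {s : σ →₀ ℕ | s.degree ≤ d} :=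
    finrank_eq_nat_card_basis (MvPolynomial.basisRestrictSupport R _)
  rw [hbasis, hS, Nat.card_coe_set_eq, Set.ncard_coe_finset, card_biUnion]
  · simp_rw [card_finsuppAntidiag_nat_eq_multichoose, card_univ]
    exact Nat.sum_range_multichoose d _
  · intro k _ l _ hkl
    exact disjoint_left.2 fun s hs ht => hkl <|
      (mem_finsuppAntidiag.1 hs).1.symm.trans (mem_finsuppAntidiag.1 ht).1

lemma exists_polynomial_bisecting {ι : Type*} [Fintype ι] (X : ι → Finset (σ → ℝ)) {d : ℕ}
    (hd : Fintype.card ι < (d + Fintype.card σ).choose (Fintype.card σ)) :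
    ∃ p : MvPolynomial σ ℝ, p ≠ 0 ∧ p.totalDegree ≤ d ∧ ∀ i,
      2 * #{x ∈ X i | 0 < p.eval x} ≤ #(X i) ∧ 2 * #{x ∈ X i | p.eval x < 0} ≤ #(X i) := by
  obtain ⟨p, hp, hX⟩ := exists_ne_zero_forall_two_mul_card_filter_le
    (hd.trans_eq (finrank_restrictTotalDegree ℝ d).symm)
    (fun x => (MvPolynomial.aeval x).toLinearMap ∘ₗ Submodule.subtype _) X
  exact ⟨p, by simpa using hp, (MvPolynomial.mem_restrictTotalDegree _ _ _).1 p.2, hX⟩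

end HamSandwich

section Partitioning

variable {σ ι : Type*} [Fintype σ] [Fintype ι]

lemma forall_pos_or_forall_neg_of_isPreconnected {E : Type*} [TopologicalSpace E] {C : Set E}
    (hC : IsPreconnected C) {f : E → ℝ} (hf : ContinuousOn f C) (hne : ∀ x ∈ C, f x ≠ 0) :
    (∀ x ∈ C, 0 < f x) ∨ ∀ x ∈ C, f x < 0 := by
  by_contra! ⟨⟨a, ha, hfa⟩, b, hb, hfb⟩
  obtain ⟨x, hx, hfx⟩ := hC.intermediate_value₂ ha hb hf continuousOn_const hfa hfb
  exact hne x hx hfx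

theorem exists_partitioning_polynomial (T : ℕ) (X : ι → Finset (σ → ℝ)) (d : ℕ → ℕ)
    (hd : ∀ t < T, Fintype.card ι * 2 ^ t < (d t + Fintype.card σ).choose (Fintype.card σ)) :
    ∃ p : MvPolynomial σ ℝ, p ≠ 0 ∧ p.totalDegree ≤ ∑ t ∈ range T, d t ∧
      ∀ C, IsPreconnected C → (∀ x ∈ C, p.eval x ≠ 0) →
        ∀ i, 2 ^ T * ((X i : Set (σ → ℝ)) ∩ C).ncard ≤ #(X i) := by
  induction T generalizing ι d with
  | zero =>
    refine ⟨1, one_ne_zero, by simp, fun C _ _ i => ?_⟩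
    rw [pow_zero, one_mul, ← Set.ncard_coe_finset]
    exact Set.ncard_le_ncard Set.inter_subset_left
  | succ T ih =>
    obtain ⟨p, hp, hpdeg, hbisect⟩ := exists_polynomial_bisecting X (d := d 0)
      (by simpa using hd 0 T.succ_pos)
    let Y (i : ι × Bool) : Finset (σ → ℝ) :=
      bif i.2 then {x ∈ X i.1 | 0 < p.eval x} else {x ∈ X i.1 | p.eval x < 0}
    obtain ⟨q, hq, hqdeg, hpart⟩ := ih Y (fun t => d (t + 1)) fun t ht => by
      simpa [pow_succ, mul_assoc, mul_comm, mul_left_comm] using hd (t + 1) (by omega)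
    refine ⟨p * q, mul_ne_zero hp hq, ?_, fun C hC hne i => ?_⟩
    · rw [sum_range_succ', add_comm]
      exact (MvPolynomial.totalDegree_mul p q).trans (add_le_add hpdeg hqdeg)
    simp only [map_mul, ne_eq, mul_eq_zero, not_or] at hne
    obtain ⟨b, hb, hbcard⟩ : ∃ b, (X i : Set (σ → ℝ)) ∩ C ⊆ Y (i, b) ∩ C ∧
        2 * #(Y (i, b)) ≤ #(X i) := by
      rcases forall_pos_or_forall_neg_of_isPreconnected hC p.continuous_eval.continuousOn
        (fun x hx => (hne x hx).1) with hpos | hneg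
      · exact ⟨true, fun x hx => ⟨mem_filter.2 ⟨hx.1, hpos x hx.2⟩, hx.2⟩, (hbisect i).1⟩
      · exact ⟨false, fun x hx => ⟨mem_filter.2 ⟨hx.1, hneg x hx.2⟩, hx.2⟩, (hbisect i).2⟩
    calc 2 ^ (T + 1) * ((X i : Set (σ → ℝ)) ∩ C).ncard
        ≤ 2 ^ (T + 1) * ((Y (i, b) : Set (σ → ℝ)) ∩ C).ncard := Nat.mul_le_mul_left _
          (Set.ncard_le_ncard hb ((Y (i, b)).finite_toSet.inter_of_left C))
      _ = 2 * (2 ^ T * ((Y (i, b) : Set (σ → ℝ)) ∩ C).ncard) := by ring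
      _ ≤ 2 * #(Y (i, b)) := Nat.mul_le_mul_left _ (hpart C hC (fun x hx => (hne x hx).2) (i, b))
      _ ≤ #(X i) := hbcard

lemma lt_choose_of_factorial_mul_lt_pow {n k d : ℕ} (h : n.factorial * k < (d + 1) ^ n) :
    k < (d + n).choose n := by
  refine lt_of_mul_lt_mul_left (h.trans_le ?_) (Nat.zero_le n.factorial)
  rw [← Nat.ascFactorial_eq_factorial_mul_choose]
  exact Nat.pow_succ_le_ascFactorial (d + 1) n

lemma exists_geom_sum_le_and_lt_pow {α x : ℝ} (hα : 1 < α) (hx : 0 ≤ x) :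
    ∃ T : ℕ, ∑ t ∈ range T, α ^ t ≤ x ∧ x * (α - 1) < α ^ (T + 1) := by
  rcases lt_or_ge (x * (α - 1)) 1 with hlt | hge
  · exact ⟨0, by simpa using hx, by simpa using hlt.trans hα⟩
  · obtain ⟨T, hle, hlt⟩ := exists_nat_pow_near hge hα
    refine ⟨T, ?_, hlt⟩
    rw [geom_sum_eq hα.ne', div_le_iff₀ (sub_pos.2 hα)]
    linarith

lemma exists_degrees_lt_choose_and_sum_le {n j D : ℕ} (hn : n ≠ 0) (hj : 0 < j) :
    ∃ (T : ℕ) (d : ℕ → ℕ), (∀ t, j * 2 ^ t < (d t + n).choose n) ∧ ∑ t ∈ range T, d t ≤ D ∧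
      (D * ((2 : ℝ) ^ (1 / n : ℝ) - 1)) ^ n ≤ 2 * n.factorial * j * 2 ^ T := by
  set α : ℝ := 2 ^ (1 / n : ℝ)
  have hα : 1 < α := Real.one_lt_rpow one_lt_two (by positivity)
  have hαn : α ^ n = 2 := by
    rw [← Real.rpow_natCast, ← Real.rpow_mul zero_le_two, one_div_mul_cancel (by positivity),
      Real.rpow_one]
  obtain ⟨a, ha, han⟩ : ∃ a : ℝ, 0 < a ∧ a ^ n = n.factorial * j :=
    ⟨(n.factorial * j : ℝ) ^ (n⁻¹ : ℝ), by positivity, Real.rpow_inv_natCast_pow (by positivity) hn⟩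
  have hpow (t : ℕ) : (a * α ^ t) ^ n = n.factorial * j * 2 ^ t := by
    rw [mul_pow, han, ← pow_mul, mul_comm t, pow_mul, hαn]
  obtain ⟨T, hsum, hT⟩ := exists_geom_sum_le_and_lt_pow hα (x := D / a) (by positivity)
  refine ⟨T, fun t => ⌊a * α ^ t⌋₊, fun t => lt_choose_of_factorial_mul_lt_pow ?_, ?_, ?_⟩
  · have hfloor := pow_lt_pow_left₀ (Nat.lt_floor_add_one (a * α ^ t)) (by positivity) hn
    rw [hpow, mul_assoc] at hfloor
    exact_mod_cast hfloor
  · rw [← Nat.cast_le (α := ℝ), Nat.cast_sum]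
    calc ∑ t ∈ range T, (⌊a * α ^ t⌋₊ : ℝ) ≤ ∑ t ∈ range T, a * α ^ t :=
          sum_le_sum fun t _ => Nat.floor_le (by positivity)
      _ ≤ D := by rwa [← mul_sum, mul_comm, ← le_div_iff₀ ha]
  · rw [div_mul_eq_mul_div, div_lt_iff₀' ha] at hT
    calc (D * (α - 1)) ^ n ≤ (a * α ^ (T + 1)) ^ n :=
          pow_le_pow_left₀ (mul_nonneg D.cast_nonneg (sub_nonneg.2 hα.le)) hT.le n
      _ = 2 * n.factorial * j * 2 ^ T := by rw [hpow]; ring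

theorem polynomial_partitioning_several_point_sets_general [Nonempty σ]
    (X : ι → Finset (σ → ℝ)) {D : ℕ} (hD : 1 ≤ D) :
    ∃ p : MvPolynomial σ ℝ, p ≠ 0 ∧ p.totalDegree ≤ D ∧
      ∀ C, IsPreconnected C → (∀ x ∈ C, p.eval x ≠ 0) → ∀ i,
        (((X i : Set (σ → ℝ)) ∩ C).ncard : ℝ) ≤
          2 * (Fintype.card σ).factorial /
            ((2 : ℝ) ^ ((1 : ℝ) / Fintype.card σ) - 1) ^ Fintype.card σ *
          Fintype.card ι * ((D : ℝ) ^ Fintype.card σ)⁻¹ * #(X i) := by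
  cases isEmpty_or_nonempty ι
  · exact ⟨1, one_ne_zero, by simp, fun _ _ _ => isEmptyElim⟩
  set n := Fintype.card σ
  have hn : n ≠ 0 := Fintype.card_ne_zero
  obtain ⟨T, d, hd, hsum, hT⟩ :=
    exists_degrees_lt_choose_and_sum_le (D := D) hn (Fintype.card_pos (α := ι))
  obtain ⟨p, hp, hdeg, hpart⟩ := exists_partitioning_polynomial T X d fun t _ => hd t
  refine ⟨p, hp, hdeg.trans hsum, fun C hC hne i => ?_⟩
  set α : ℝ := 2 ^ (1 / n : ℝ)
  have hα : 0 < α - 1 := sub_pos.2 (Real.one_lt_rpow one_lt_two (by positivity))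
  have hcard : (2 ^ T * ((X i : Set (σ → ℝ)) ∩ C).ncard : ℝ) ≤ #(X i) := by
    exact_mod_cast hpart C hC hne i
  calc (((X i : Set (σ → ℝ)) ∩ C).ncard : ℝ)
      ≤ 2 * n.factorial * Fintype.card ι * 2 ^ T / (D * (α - 1)) ^ n *
          ((X i : Set (σ → ℝ)) ∩ C).ncard :=
        le_mul_of_one_le_left (Nat.cast_nonneg _) ((one_le_div (by positivity)).2 hT)
    _ = 2 * n.factorial / (α - 1) ^ n * Fintype.card ι * ((D : ℝ) ^ n)⁻¹ *
          (2 ^ T * ((X i : Set (σ → ℝ)) ∩ C).ncard) := by rw [mul_pow]; field_simp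
    _ ≤ _ := mul_le_mul_of_nonneg_left hcard (by positivity)

end Partitioning

/-- **Simultaneous polynomial partitioning for several point sets** with the explicit constant
`C_n = 2^(n+1)·n! / (2^(1/n) − 1)^n`. -/
theorem polynomial_partitioning_several_point_sets (n j : ℕ) (hn : 1 ≤ n) (hj : 1 ≤ j)
    (X : Fin j → Finset (Fin n → ℝ)) (D : ℕ) (hD : 1 ≤ D) :
    ∃ p : MvPolynomial (Fin n) ℝ, p ≠ 0 ∧ p.totalDegree ≤ D ∧
      ∀ (i : Fin j) (x : Fin n → ℝ), MvPolynomial.eval x p ≠ 0 →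
        (((X i : Set (Fin n → ℝ)) ∩
            connectedComponentIn {y : Fin n → ℝ | MvPolynomial.eval y p ≠ 0} x).ncard : ℝ) ≤
          (2 ^ (n + 1) * (Nat.factorial n : ℝ) / ((2 : ℝ) ^ ((1 : ℝ) / n) - 1) ^ n) *
            j * ((D : ℝ) ^ n)⁻¹ * (X i).card := by
  have : NeZero n := ⟨by omega⟩
  obtain ⟨p, hp, hdeg, hpart⟩ := polynomial_partitioning_several_point_sets_general X hD
  refine ⟨p, hp, hdeg, fun i x _ => (hpart _ isPreconnected_connectedComponentIn
    (fun _ hy => connectedComponentIn_subset _ _ hy) i).trans ?_⟩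
  have hα : 0 ≤ (2 : ℝ) ^ ((1 : ℝ) / n) - 1 :=
    sub_nonneg.2 (Real.one_le_rpow one_le_two (by positivity))
  rw [Fintype.card_fin, Fintype.card_fin]
  gcongr
  exact le_self_pow₀ one_le_two n.succ_ne_zero
end

section
/- Let n ≥ 1 and D ≥ 1 be integers and set C_n = 2^(n+1)·n! / (2^(1/n) − 1)^n. Let Γ be a finite family of real algebraic subsets of ℝ^n (each member being the common zero set of finitely many real polynomials), and let B ≥ 1 be a real number such that for every non-zero polynomial q ∈ ℝ[X₁,…,X_n] of total degree at most D, every γ ∈ Γ intersects at most B connected components of ℝ^n \ Z(q). Then there exists a non-zero polynomial p ∈ ℝ[X₁,…,X_n] of total degree at most D such that every connected component of ℝ^n \ Z(p) intersects at most C_n · B · D^(−n) · |Γ| members of Γ. -/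
/-!
Polynomials `P y j` of degree `d j ≈ (n! 2 ^ j) ^ (1 / n)`, for `j < s`, are parametrized by a point
`y` of a cube with `2 ^ s - 1` coordinates, split into blocks of size `2 ^ j`. The `j`-th block
parametrizes a hemisphere of coefficients of `P y j`: at boundary points of its cube, negating the
block negates `P y j` and fixes the other polynomials. The members of `Γ` meeting each of the
`2 ^ s` sign cells of `P y` are equidistributed as soon as the `2 ^ s - 1` non-constant Walsh
coefficients of their (softened) counting function vanish. These coefficients have a common zero `y`
by a Borsuk–Ulam theorem for products of projective spaces. Then `p = ∏ j, P y j` has degree at most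
`D`, each component of its complement lies in a sign cell, and each sign cell meets at most
`2 ^ (-s)` times the total number `B * |Γ|` of crossings.

The Borsuk–Ulam theorem is proved by a cup product modulo `2`: on a triangulation of the cube that
is invariant under reflections, the product of the coboundaries of the signs of the `2 ^ s - 1`
functions, summed over all simplices, depends only on how the functions behave under block
negations. For a model with the same behaviour it equals `1`, so in some simplex all the functions
change sign; letting the mesh tend to zero yields a common zero.
-/

namespace PolynomialPartitioning

section Cochains

variable {V : Type*} {n : ℕ}

/-- The product of the coboundaries of the functions `ε 0, …, ε (n - 1)` along the consecutive edges
of the vertex sequence `w`, i.e. the value of their cup product on the ordered simplex `w`. -/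
def edgeProd (ε : Fin n → V → ZMod 2) (w : Fin (n + 1) → V) : ZMod 2 :=
  ∏ k, (ε k (w k.castSucc) + ε k (w k.succ))

/-- The product of the coboundaries of `ε 0, …, ε (n - 1)`, in this order, along the edges
of `w` other than the edge `j`. -/
def edgeProdSkip (ε : Fin n → V → ZMod 2) (w : Fin (n + 2) → V) (j : Fin (n + 1)) : ZMod 2 :=
  ∏ k, (ε k (w (j.succAbove k).castSucc) + ε k (w (j.succAbove k).succ))

lemma edgeProd_facet_zero (ε : Fin n → V → ZMod 2) (w : Fin (n + 2) → V) :
    edgeProd ε (w ∘ Fin.succAbove 0) = edgeProdSkip ε w 0 := by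
  simp [edgeProd, edgeProdSkip]

lemma edgeProd_facet_last (ε : Fin n → V → ZMod 2) (w : Fin (n + 2) → V) :
    edgeProd ε (w ∘ Fin.succAbove (Fin.last (n + 1))) = edgeProdSkip ε w (Fin.last n) := by
  simp [edgeProd, edgeProdSkip]

lemma edgeProd_facet_interior (ε : Fin n → V → ZMod 2) (w : Fin (n + 2) → V) (j : Fin n) :
    edgeProd ε (w ∘ j.succ.castSucc.succAbove) =
      edgeProdSkip ε w j.castSucc + edgeProdSkip ε w j.succ := by
  refine (Finset.prod_add_prod_eq (Finset.mem_univ j) ?_ ?_ ?_).symm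
  · have hj : j.succ.castSucc.succAbove j.succ = j.succ.succ := by simp
    simp only [Function.comp_apply, hj, Fin.succAbove_castSucc_self, Fin.succAbove_succ_self]
    rw [Fin.succAbove_of_castSucc_lt _ j.castSucc (by simp [Fin.lt_def]), Fin.succ_castSucc]
    linear_combination CharTwo.add_self_eq_zero (ε j (w j.succ.castSucc))
  all_goals
    intro k _ hkj
    have : (k : ℕ) ≠ j := fun h => hkj (Fin.ext h)
    simp only [Function.comp_apply]
    congr 3 <;> ext <;>
      simp only [Fin.succAbove, Fin.lt_def, Fin.val_castSucc, Fin.val_succ, apply_ite Fin.val] <;>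
      split_ifs <;> lia

lemma edgeProd_eq_mul_edgeProdSkip (ε : Fin (n + 1) → V → ZMod 2) (w : Fin (n + 2) → V)
    (k : Fin (n + 1)) :
    edgeProd ε w = (ε k (w k.castSucc) + ε k (w k.succ)) *
      edgeProdSkip (fun i => ε (k.succAbove i)) w k :=
  Fin.prod_univ_succAbove _ k

lemma edgeProd_ne_zero_iff {ε : Fin n → V → ZMod 2} {w : Fin (n + 1) → V} :
    edgeProd ε w ≠ 0 ↔ ∀ k, ε k (w k.castSucc) ≠ ε k (w k.succ) := by
  simp [edgeProd, Finset.prod_ne_zero_iff, CharTwo.add_eq_zero]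

end Cochains

section Telescoping

variable {V X : Type*} {n : ℕ} [Fintype X] {vertex : X → Fin (n + 2) → V}
  {ε : Fin n → V → ZMod 2} {η : V → ZMod 2} {k : Fin (n + 1)}

lemma sum_edgeProdSkip_eq_zero_of_le
    (hfacet : ∀ i : Fin (n + 2), ∑ σ, η (vertex σ (i.succAbove k)) *
      edgeProd ε (vertex σ ∘ i.succAbove) = 0) {j : Fin (n + 1)} (hj : j ≤ k) :
    ∑ σ, η (vertex σ k.succ) * edgeProdSkip ε (vertex σ) j = 0 := by
  induction j using Fin.induction with
  | zero => simpa only [edgeProd_facet_zero, Fin.zero_succAbove] using hfacet 0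
  | succ j ih =>
    have hsum := hfacet j.succ.castSucc
    have hk : j.succ.castSucc.succAbove k = k.succ :=
      Fin.succAbove_of_le_castSucc _ _ (Fin.castSucc_le_castSucc_iff.2 hj)
    simp only [hk, edgeProd_facet_interior, mul_add, Finset.sum_add_distrib] at hsum
    rwa [ih (j.castSucc_lt_succ.le.trans hj), zero_add] at hsum

lemma sum_edgeProdSkip_eq_zero_of_ge
    (hfacet : ∀ i : Fin (n + 2), ∑ σ, η (vertex σ (i.succAbove k)) *
      edgeProd ε (vertex σ ∘ i.succAbove) = 0) {j : Fin (n + 1)} (hj : k ≤ j) :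
    ∑ σ, η (vertex σ k.castSucc) * edgeProdSkip ε (vertex σ) j = 0 := by
  induction j using Fin.reverseInduction with
  | last => simpa only [edgeProd_facet_last, Fin.succAbove_last_apply] using hfacet (Fin.last _)
  | cast j ih =>
    have hsum := hfacet j.succ.castSucc
    have hk : j.succ.castSucc.succAbove k = k.castSucc :=
      Fin.succAbove_of_castSucc_lt _ _ (by simpa [Fin.lt_def, Fin.le_def, Nat.lt_succ_iff] using hj)
    simp only [hk, edgeProd_facet_interior, mul_add, Finset.sum_add_distrib] at hsum
    rwa [ih (hj.trans j.castSucc_lt_succ.le), add_zero] at hsum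

/-- A cup product of cocycles one of which is the coboundary of `η` is itself a coboundary, so it
sums to zero as soon as every cochain supported on the facets does. -/
lemma sum_coboundary_mul_edgeProdSkip_eq_zero
    (hfacet : ∀ i : Fin (n + 2), ∑ σ, η (vertex σ (i.succAbove k)) *
      edgeProd ε (vertex σ ∘ i.succAbove) = 0) :
    ∑ σ, (η (vertex σ k.castSucc) + η (vertex σ k.succ)) * edgeProdSkip ε (vertex σ) k = 0 := by
  simp only [add_mul, Finset.sum_add_distrib, sum_edgeProdSkip_eq_zero_of_le hfacet le_rfl,
    sum_edgeProdSkip_eq_zero_of_ge hfacet le_rfl, add_zero]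

end Telescoping

section Triangulation

/-- Negation of the coordinates of `x` lying in the block `j` of the partition `b` of the
coordinates. -/
def negBlock {ι β R : Type*} [DecidableEq β] [Neg R] (b : ι → β) (j : β) (x : ι → R) : ι → R :=
  fun a => if b a = j then -x a else x a

lemma negBlock_negBlock {ι β R : Type*} [DecidableEq β] [InvolutiveNeg R] (b : ι → β) (j : β)
    (x : ι → R) : negBlock b j (negBlock b j x) = x := by
  funext a
  by_cases ha : b a = j <;> simp [negBlock, ha]

/-- A unit interval with integer endpoints inside `[-2m, 2m]`, given by its even and its odd
endpoint. -/
@[ext] structure UnitInterval (m : ℕ) where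
  even : ℤ
  odd : ℤ
  isEven : Even even
  odd_eq : odd = even + 1 ∨ odd = even - 1
  even_mem : even ∈ Set.Icc (-(2 * m : ℤ)) (2 * m)
  odd_mem : odd ∈ Set.Icc (-(2 * m : ℤ)) (2 * m)

namespace UnitInterval

variable {m : ℕ}

instance : Finite (UnitInterval m) := by
  refine Finite.of_injective (β := Set.Icc (-(2 * m : ℤ)) (2 * m) × Set.Icc (-(2 * m : ℤ)) (2 * m))
    (fun I => (⟨I.even, I.even_mem⟩, ⟨I.odd, I.odd_mem⟩)) fun I J h => ?_
  simp only [Prod.mk.injEq, Subtype.mk.injEq] at h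
  exact UnitInterval.ext h.1 h.2

lemma odd_ne_zero (I : UnitInterval m) : I.odd ≠ 0 := by
  obtain ⟨r, hr⟩ := I.isEven
  have := I.odd_eq
  lia

lemma even_eq_zero_of_mul_nonpos (I : UnitInterval m) (h : I.even * I.odd ≤ 0) : I.even = 0 := by
  obtain ⟨r, hr⟩ := I.isEven
  have := I.odd_eq
  rcases lt_trichotomy I.even 0 with hneg | hzero | hpos
  · exact absurd h (mul_pos_of_neg_of_neg hneg (by lia)).not_ge
  · exact hzero
  · exact absurd h (mul_pos hpos (by lia)).not_ge

/-- The other unit interval with the same odd endpoint. -/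
def reflectOdd (I : UnitInterval m) : UnitInterval m where
  even := 2 * I.odd - I.even
  odd := I.odd
  isEven := (even_two_mul _).sub I.isEven
  odd_eq := by have := I.odd_eq; lia
  even_mem := by
    obtain ⟨r, hr⟩ := I.isEven
    have := I.odd_eq
    have := Set.mem_Icc.1 I.even_mem
    have := Set.mem_Icc.1 I.odd_mem
    exact Set.mem_Icc.2 ⟨by lia, by lia⟩
  odd_mem := I.odd_mem

/-- The other unit interval with the same even endpoint, when that endpoint is not `±2m`. -/
def reflectEven (I : UnitInterval m) (h : |I.even| ≠ 2 * m) : UnitInterval m where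
  even := I.even
  odd := 2 * I.even - I.odd
  isEven := I.isEven
  odd_eq := by have := I.odd_eq; lia
  even_mem := I.even_mem
  odd_mem := by
    rw [ne_eq, abs_eq (by positivity)] at h
    have := I.odd_eq
    have := Set.mem_Icc.1 I.even_mem
    exact Set.mem_Icc.2 ⟨by lia, by lia⟩

instance : InvolutiveNeg (UnitInterval m) where
  neg I :=
    { even := -I.even
      odd := -I.odd
      isEven := I.isEven.neg
      odd_eq := by have := I.odd_eq; lia
      even_mem := by have := Set.mem_Icc.1 I.even_mem; exact Set.mem_Icc.2 ⟨by lia, by lia⟩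
      odd_mem := by have := Set.mem_Icc.1 I.odd_mem; exact Set.mem_Icc.2 ⟨by lia, by lia⟩ }
  neg_neg I := by ext <;> simp

@[simp] lemma neg_even (I : UnitInterval m) : (-I).even = -I.even := rfl

@[simp] lemma neg_odd (I : UnitInterval m) : (-I).odd = -I.odd := rfl

lemma reflectOdd_reflectOdd (I : UnitInterval m) : I.reflectOdd.reflectOdd = I := by
  ext <;> simp [reflectOdd]

lemma reflectOdd_ne (I : UnitInterval m) : I.reflectOdd ≠ I := fun h => by
  have := I.odd_eq
  have : 2 * I.odd - I.even = I.even := congrArg even h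
  lia

lemma reflectEven_ne (I : UnitInterval m) (h) : I.reflectEven h ≠ I := fun heq => by
  have := I.odd_eq
  have : 2 * I.even - I.odd = I.odd := congrArg odd heq
  lia

end UnitInterval

/-- A simplex of the triangulation of the cube `[-2m, 2m]ⁿ⁺¹` in which every unit cube is cut by
the monotone paths from its all-even to its all-odd vertex: `perm a` is the time at which the path
moves in direction `a`. Unlike Freudenthal's triangulation, it is invariant under all coordinate
reflections, respecting the order of the vertices. -/
@[ext] structure Simplex (n m : ℕ) where
  interval : Fin (n + 1) → UnitInterval m
  perm : Equiv.Perm (Fin (n + 1))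

namespace Simplex

variable {n m : ℕ}

instance : Finite (Simplex n m) :=
  Finite.of_injective (fun σ => (σ.interval, σ.perm)) fun _ _ h =>
    Simplex.ext (congrArg Prod.fst h) (congrArg Prod.snd h)

noncomputable instance : Fintype (Simplex n m) := Fintype.ofFinite _

/-- The `l`-th vertex of the path: the directions with time less than `l` have moved to their odd
endpoint. -/
def vertex (σ : Simplex n m) (l : Fin (n + 2)) : Fin (n + 1) → ℤ :=
  fun a => if (σ.perm a).castSucc < l then (σ.interval a).odd else (σ.interval a).even

lemma abs_vertex_le (σ : Simplex n m) (l : Fin (n + 2)) (a : Fin (n + 1)) :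
    |σ.vertex l a| ≤ 2 * m := by
  rw [abs_le]
  unfold vertex
  split_ifs
  exacts [(σ.interval a).odd_mem, (σ.interval a).even_mem]

lemma abs_vertex_sub_vertex_le (σ : Simplex n m) (l l' : Fin (n + 2)) (a : Fin (n + 1)) :
    |σ.vertex l a - σ.vertex l' a| ≤ 1 := by
  have := (σ.interval a).odd_eq
  rw [abs_le]
  unfold vertex
  split_ifs <;> lia

lemma vertex_succ_of_ne (σ : Simplex n m) {k a : Fin (n + 1)} (h : σ.perm a ≠ k) :
    σ.vertex k.succ a = σ.vertex k.castSucc a := by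
  have hlt : (σ.perm a).castSucc < k.succ ↔ (σ.perm a).castSucc < k.castSucc := by
    rw [Fin.castSucc_lt_succ_iff, Fin.castSucc_lt_castSucc_iff, h.le_iff_lt]
  simp only [vertex, hlt]

/-- `ρ` lies across the facet of `σ` opposite to its vertex `i`: either the two facets coincide, or
they lie in the boundary of the cube and are exchanged by the negation of a block. -/
def IsNeighbor {β : Type*} [DecidableEq β] (b : Fin (n + 1) → β) (i : Fin (n + 2))
    (σ ρ : Simplex n m) : Prop :=
  (∀ l ≠ i, ρ.vertex l = σ.vertex l) ∨
    ∃ a, (∀ l, ρ.vertex l = negBlock b (b a) (σ.vertex l)) ∧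
      ∀ l ≠ i, |σ.vertex l a| = 2 * m

/-- The simplex across the facet opposite to vertex `0`. -/
def flipZero (σ : Simplex n m) : Simplex n m where
  interval := Function.update σ.interval (σ.perm.symm 0)
    (σ.interval (σ.perm.symm 0)).reflectOdd
  perm := σ.perm

lemma flipZero_flipZero (σ : Simplex n m) : σ.flipZero.flipZero = σ := by
  simp [flipZero, UnitInterval.reflectOdd_reflectOdd]

lemma flipZero_ne (σ : Simplex n m) : σ.flipZero ≠ σ := fun h => by
  have := congrFun (congrArg interval h) (σ.perm.symm 0)
  simp only [flipZero, Function.update_self] at this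
  exact UnitInterval.reflectOdd_ne _ this

lemma vertex_flipZero (σ : Simplex n m) {l : Fin (n + 2)} (hl : l ≠ 0) :
    σ.flipZero.vertex l = σ.vertex l := by
  funext a
  by_cases ha : a = σ.perm.symm 0
  · subst ha
    simp [vertex, flipZero, UnitInterval.reflectOdd, Fin.pos_iff_ne_zero.2 hl]
  · simp [vertex, flipZero, Function.update_of_ne ha]

/-- The simplex across the facet opposite to the interior vertex `i + 1`. -/
def flipInterior (i : Fin n) (σ : Simplex n m) : Simplex n m where
  interval := σ.interval
  perm := σ.perm.trans (Equiv.swap i.castSucc i.succ)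

lemma flipInterior_flipInterior (i : Fin n) (σ : Simplex n m) :
    (σ.flipInterior i).flipInterior i = σ := by
  ext a <;> simp [flipInterior]

lemma flipInterior_ne (i : Fin n) (σ : Simplex n m) : σ.flipInterior i ≠ σ := fun h => by
  have := congrArg (fun ρ : Simplex n m => ρ.perm (σ.perm.symm i.castSucc)) h
  simp [flipInterior, Fin.ext_iff] at this

lemma vertex_flipInterior (i : Fin n) (σ : Simplex n m) {l : Fin (n + 2)}
    (hl : l ≠ i.succ.castSucc) : (σ.flipInterior i).vertex l = σ.vertex l := by
  have hswap (c : Fin (n + 1)) :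
      (Equiv.swap i.castSucc i.succ c).castSucc < l ↔ c.castSucc < l := by
    have : (l : ℕ) ≠ i + 1 := fun h => hl (Fin.ext h)
    rw [Equiv.swap_apply_def]
    split_ifs with h h <;> simp only [h, Fin.lt_def, Fin.val_castSucc, Fin.val_succ] <;> lia
  funext a
  simp only [vertex, flipInterior, Equiv.trans_apply, hswap]

variable {β : Type*} [DecidableEq β] (b : Fin (n + 1) → β)

/-- The simplex with all intervals in the block `j` negated. -/
def negIntervals (j : β) (σ : Simplex n m) : Simplex n m where
  interval := negBlock b j σ.interval
  perm := σ.perm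

lemma vertex_negIntervals (j : β) (σ : Simplex n m) (l : Fin (n + 2)) :
    (σ.negIntervals b j).vertex l = negBlock b j (σ.vertex l) := by
  funext a
  by_cases ha : b a = j <;> simp [vertex, negIntervals, negBlock, ha, apply_ite Neg.neg]

/-- The coordinate direction of the last edge. -/
def lastDir (σ : Simplex n m) : Fin (n + 1) := σ.perm.symm (Fin.last n)

/-- The simplex across the facet opposite to the last vertex, on which the coordinate `lastDir` is
even: on the boundary of the cube, the block of that coordinate is negated. -/
def flipLast (σ : Simplex n m) : Simplex n m :=
  if h : |(σ.interval σ.lastDir).even| = 2 * m then σ.negIntervals b (b σ.lastDir)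
  else ⟨Function.update σ.interval σ.lastDir ((σ.interval σ.lastDir).reflectEven h), σ.perm⟩

variable {b} {σ : Simplex n m}

lemma vertex_lastDir {l : Fin (n + 2)} (hl : l ≠ Fin.last _) :
    σ.vertex l σ.lastDir = (σ.interval σ.lastDir).even := by
  have hlt : ¬ (Fin.last n).castSucc < l := by
    have := Fin.val_lt_last hl
    simp only [Fin.lt_def, Fin.val_castSucc, Fin.val_last]
    lia
  simp [vertex, lastDir, hlt]

lemma flipLast_of_boundary (h : |(σ.interval σ.lastDir).even| = 2 * m) :
    σ.flipLast b = σ.negIntervals b (b σ.lastDir) := dif_pos h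

lemma flipLast_of_interior (h : |(σ.interval σ.lastDir).even| ≠ 2 * m) : σ.flipLast b =
    ⟨Function.update σ.interval σ.lastDir ((σ.interval σ.lastDir).reflectEven h), σ.perm⟩ :=
  dif_neg h

lemma flipLast_flipLast : (σ.flipLast b).flipLast b = σ := by
  by_cases h : |(σ.interval σ.lastDir).even| = 2 * m
  · have hdir : (σ.negIntervals b (b σ.lastDir)).lastDir = σ.lastDir := rfl
    have hneg : |((σ.negIntervals b (b σ.lastDir)).interval σ.lastDir).even| = 2 * m := by
      simpa [negIntervals, negBlock] using h
    rw [flipLast_of_boundary h, flipLast_of_boundary (hdir ▸ hneg), hdir]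
    exact Simplex.ext (negBlock_negBlock b _ _) rfl
  · rw [flipLast_of_interior h, flipLast_of_interior
      (by simpa [lastDir, UnitInterval.reflectEven] using h)]
    ext a <;> by_cases ha : a = σ.lastDir <;> simp [lastDir, UnitInterval.reflectEven, ha]

lemma flipLast_ne (hm : 0 < m) : σ.flipLast b ≠ σ := fun heq => by
  by_cases h : |(σ.interval σ.lastDir).even| = 2 * m
  · rw [flipLast_of_boundary h] at heq
    have heven := congrArg (fun ρ : Simplex n m => (ρ.interval σ.lastDir).even) heq
    simp only [negIntervals, negBlock, if_true, UnitInterval.neg_even] at heven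
    rw [abs_eq (by positivity)] at h
    lia
  · rw [flipLast_of_interior h] at heq
    have hint := congrArg (fun ρ : Simplex n m => ρ.interval σ.lastDir) heq
    simp only [Function.update_self] at hint
    exact UnitInterval.reflectEven_ne _ _ hint

lemma isNeighbor_flipLast : IsNeighbor b (Fin.last _) σ (σ.flipLast b) := by
  by_cases h : |(σ.interval σ.lastDir).even| = 2 * m
  · rw [flipLast_of_boundary h]
    exact .inr ⟨σ.lastDir, σ.vertex_negIntervals b _, fun l hl => by rwa [vertex_lastDir hl]⟩
  · rw [flipLast_of_interior h]
    refine .inl fun l hl => funext fun a => ?_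
    by_cases ha : a = σ.lastDir
    · subst ha
      rw [vertex_lastDir hl]
      exact (vertex_lastDir hl).trans (by simp [lastDir, UnitInterval.reflectEven])
    · simp [vertex, Function.update_of_ne ha]

lemma exists_flip (hm : 0 < m) (i : Fin (n + 2)) : ∃ T : Simplex n m → Simplex n m,
    ∀ σ, T (T σ) = σ ∧ T σ ≠ σ ∧ IsNeighbor b i σ (T σ) := by
  induction i using Fin.cases with
  | zero => exact ⟨flipZero, fun σ =>
      ⟨σ.flipZero_flipZero, σ.flipZero_ne, .inl fun _ => σ.vertex_flipZero⟩⟩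
  | succ i =>
    induction i using Fin.lastCases with
    | last => exact ⟨flipLast b, fun σ =>
        ⟨flipLast_flipLast, flipLast_ne hm, isNeighbor_flipLast⟩⟩
    | cast i => exact ⟨flipInterior i, fun σ =>
        ⟨σ.flipInterior_flipInterior i, σ.flipInterior_ne i, .inl fun _ => σ.vertex_flipInterior i⟩⟩

end Simplex

end Triangulation

section CupNumber

variable {n m : ℕ} {β : Type*} [DecidableEq β] {b : Fin (n + 1) → β}

lemma sum_facet_eq_zero (hm : 0 < m) (i : Fin (n + 2))
    {F : (Fin (n + 1) → Fin (n + 1) → ℤ) → ZMod 2}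
    (hF : ∀ w : Fin (n + 1) → Fin (n + 1) → ℤ, (∀ l a, |w l a| ≤ 2 * m) →
      ∀ a, (∀ l, |w l a| = 2 * m) → F (fun l => negBlock b (b a) (w l)) = F w) :
    ∑ σ : Simplex n m, F (σ.vertex ∘ i.succAbove) = 0 := by
  obtain ⟨flip, hflip⟩ := Simplex.exists_flip (b := b) hm i
  have hinvariant (σ : Simplex n m) :
      F ((flip σ).vertex ∘ i.succAbove) = F (σ.vertex ∘ i.succAbove) := by
    rcases (hflip σ).2.2 with hsame | ⟨a, hneg, hboundary⟩
    · exact congrArg F (funext fun l => hsame _ (i.succAbove_ne l))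
    · rw [show (flip σ).vertex ∘ i.succAbove = _ from funext fun l => hneg (i.succAbove l)]
      exact hF _ (fun _ _ => σ.abs_vertex_le _ _) a fun l => hboundary _ (i.succAbove_ne l)
  exact Finset.sum_involution (fun σ _ => flip σ)
    (fun σ _ => by rw [hinvariant, CharTwo.add_self_eq_zero])
    (fun σ _ _ => (hflip σ).2.1) (fun _ _ => Finset.mem_univ _) fun σ _ => (hflip σ).1

/-- `f` changes when a block in `T` is negated, and does not change when another block is negated,
at the points of the cube `[-2m, 2m]ⁿ⁺¹` having a coordinate `±2m` in the negated block. -/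
def IsEquivariant (b : Fin (n + 1) → β) (m : ℕ) (T : Finset β)
    (f : (Fin (n + 1) → ℤ) → ZMod 2) : Prop :=
  ∀ x : Fin (n + 1) → ℤ, (∀ a, |x a| ≤ 2 * m) → ∀ a, |x a| = 2 * m →
    f (negBlock b (b a) x) = f x + if b a ∈ T then 1 else 0

lemma edgeProd_negBlock {r : ℕ} {T : Fin r → Finset β}
    {ε : Fin r → (Fin (n + 1) → ℤ) → ZMod 2} (hε : ∀ k, IsEquivariant b m (T k) (ε k))
    {w : Fin (r + 1) → Fin (n + 1) → ℤ} (hw : ∀ l a, |w l a| ≤ 2 * m) {a : Fin (n + 1)}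
    (ha : ∀ l, |w l a| = 2 * m) :
    edgeProd ε (fun l => negBlock b (b a) (w l)) = edgeProd ε w := by
  refine Finset.prod_congr rfl fun k _ => ?_
  rw [hε k _ (hw _) a (ha _), hε k _ (hw _) a (ha _), add_add_add_comm,
    CharTwo.add_self_eq_zero, add_zero]

/-- The cup product of the coboundaries of `ε 0, …, ε n`, evaluated on the sum of all simplices of
the cube. -/
noncomputable def cupNumber (m : ℕ) (ε : Fin (n + 1) → (Fin (n + 1) → ℤ) → ZMod 2) : ZMod 2 :=
  ∑ σ : Simplex n m, edgeProd ε σ.vertex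

variable {T : Fin (n + 1) → Finset β} {ε ε' : Fin (n + 1) → (Fin (n + 1) → ℤ) → ZMod 2}

lemma cupNumber_update (hm : 0 < m) (hε : ∀ k, IsEquivariant b m (T k) (ε k)) {k : Fin (n + 1)}
    {f : (Fin (n + 1) → ℤ) → ZMod 2} (hf : IsEquivariant b m (T k) f) :
    cupNumber m (Function.update ε k f) = cupNumber m ε := by
  have hinvariant (x : Fin (n + 1) → ℤ) (hx : ∀ a, |x a| ≤ 2 * m) (a) (ha : |x a| = 2 * m) :
      (ε k + f) (negBlock b (b a) x) = (ε k + f) x := by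
    rw [Pi.add_apply, hε k x hx a ha, hf x hx a ha, add_add_add_comm, CharTwo.add_self_eq_zero,
      add_zero, Pi.add_apply]
  have hsum := sum_coboundary_mul_edgeProdSkip_eq_zero (vertex := Simplex.vertex (m := m))
    (ε := fun i => ε (k.succAbove i)) (η := ε k + f) (k := k) fun i =>
      sum_facet_eq_zero (b := b) hm i
        (F := fun w => (ε k + f) (w k) * edgeProd (fun i => ε (k.succAbove i)) w)
        fun w hw a ha => by
          rw [hinvariant _ (hw k) a (ha k), edgeProd_negBlock (fun i => hε (k.succAbove i)) hw ha]
  rw [← CharTwo.add_eq_zero, ← hsum, cupNumber, cupNumber, ← Finset.sum_add_distrib]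
  refine Finset.sum_congr rfl fun σ _ => ?_
  rw [edgeProd_eq_mul_edgeProdSkip _ _ k, edgeProd_eq_mul_edgeProdSkip ε _ k]
  simp only [Function.update_self, Function.update_of_ne (k.succAbove_ne _), Pi.add_apply]
  ring

lemma cupNumber_eq (hm : 0 < m) (hε : ∀ k, IsEquivariant b m (T k) (ε k))
    (hε' : ∀ k, IsEquivariant b m (T k) (ε' k)) : cupNumber m ε = cupNumber m ε' := by
  suffices h : ∀ s : Finset (Fin (n + 1)), cupNumber m (s.piecewise ε ε') = cupNumber m ε' by
    simpa using h Finset.univ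
  intro s
  induction s using Finset.induction_on with
  | empty => simp
  | insert k s _ ih =>
    rw [Finset.piecewise_insert, cupNumber_update hm (fun i => ?_) (hε k), ih]
    by_cases hi : i ∈ s
    · simpa [hi] using hε i
    · simpa [hi] using hε' i

end CupNumber

section SignOr

variable {R : Type*} [LinearOrder R]

/-- The sign of `r` (`1` for positive and `0` for negative), with `t` as the value at `r = 0`. -/
def signOr [Zero R] (r : R) (t : ZMod 2) : ZMod 2 :=
  if 0 < r then 1 else if r < 0 then 0 else t

lemma signOr_of_pos [Zero R] {r : R} (hr : 0 < r) (t : ZMod 2) : signOr r t = 1 := if_pos hr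

lemma signOr_of_neg [Zero R] {r : R} (hr : r < 0) (t : ZMod 2) : signOr r t = 0 := by
  rw [signOr, if_neg hr.not_gt, if_pos hr]

lemma signOr_neg [AddCommGroup R] [IsOrderedAddMonoid R] {r : R} {s t : ZMod 2}
    (h : r ≠ 0 ∨ s = t + 1) : signOr (-r) s = signOr r t + 1 := by
  rcases lt_trichotomy r 0 with hr | rfl | hr
  · rw [signOr_of_pos (neg_pos.2 hr), signOr_of_neg hr, zero_add]
  · simpa [signOr] using h
  · rw [signOr_of_neg (neg_neg_iff_pos.2 hr), signOr_of_pos hr, CharTwo.add_self_eq_zero]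

lemma mul_nonpos_of_signOr_ne [CommRing R] [IsStrictOrderedRing R] {r r' : R} {s t : ZMod 2}
    (h : signOr r s ≠ signOr r' t) : r * r' ≤ 0 := by
  contrapose! h
  rcases mul_pos_iff.1 h with ⟨hr, hr'⟩ | ⟨hr, hr'⟩
  · rw [signOr_of_pos hr, signOr_of_pos hr']
  · rw [signOr_of_neg hr, signOr_of_neg hr']

end SignOr

lemma apply_perm_eq_of_le {α γ : Type*} [Finite α] [PartialOrder γ] {f : α → γ}
    (π : Equiv.Perm α) (hf : ∀ a, f a ≤ f (π a)) (a : α) : f (π a) = f a := by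
  have hmono (r : ℕ) (a : α) : f a ≤ f ((π ^ r) a) := by
    induction r with
    | zero => rfl
    | succ r ih => exact ih.trans (by rw [pow_succ']; exact hf _)
  refine le_antisymm ?_ (hf a)
  have h := hmono (orderOf π - 1) (π a)
  rwa [← Equiv.Perm.mul_apply, ← pow_succ, Nat.sub_add_cancel (orderOf_pos π),
    pow_orderOf_eq_one] at h

section ModelSign

variable {n m : ℕ} {β : Type*} [DecidableEq β] {b : Fin (n + 1) → β}

/-- The part of `x` formed by the coordinates `±2m` in the block `j`. -/
def boundaryPart (b : Fin (n + 1) → β) (m : ℕ) (j : β) (x : Fin (n + 1) → ℤ) :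
    Fin (n + 1) → ℤ :=
  fun a => if b a = j ∧ |x a| = 2 * m then x a else 0

/-- The lexicographic sign of the boundary part of `x` in the block `j`. -/
noncomputable def blockSign (b : Fin (n + 1) → β) (m : ℕ) (j : β) (x : Fin (n + 1) → ℤ) : ZMod 2 :=
  signOr (toLex (boundaryPart b m j x)) 0

lemma blockSign_congr {j : β} {x y : Fin (n + 1) → ℤ} (h : ∀ a, b a = j → x a = y a) :
    blockSign b m j x = blockSign b m j y := by
  have : boundaryPart b m j x = boundaryPart b m j y := by
    funext a
    by_cases ha : b a = j
    · simp [boundaryPart, h a ha]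
    · simp [boundaryPart, ha]
  rw [blockSign, this, blockSign]

lemma blockSign_eq_zero {j : β} {x : Fin (n + 1) → ℤ} (h : ∀ a, |x a| < 2 * m) :
    blockSign b m j x = 0 := by
  have : boundaryPart b m j x = 0 := funext fun a => if_neg fun ha => (h a).ne ha.2
  simp [blockSign, this, signOr]

lemma blockSign_negBlock (hm : 0 < m) (j : β) {x : Fin (n + 1) → ℤ} {a : Fin (n + 1)}
    (ha : |x a| = 2 * m) : blockSign b m j (negBlock b (b a) x) =
      blockSign b m j x + if b a = j then 1 else 0 := by
  by_cases hj : b a = j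
  · subst hj
    have hneg : boundaryPart b m (b a) (negBlock b (b a) x) = -boundaryPart b m (b a) x := by
      funext c
      by_cases hc : b c = b a <;> simp [boundaryPart, negBlock, hc, apply_ite Neg.neg]
    have hne : toLex (boundaryPart b m (b a) x) ≠ 0 := fun h => by
      have hxa : x a = 0 := by simpa [boundaryPart, ha] using congrFun (toLex_eq_zero.1 h) a
      rw [hxa, abs_zero] at ha
      lia
    rw [if_pos rfl, blockSign, hneg, toLex_neg, signOr_neg (.inl hne), blockSign]
  · rw [if_neg hj, add_zero]
    exact blockSign_congr fun c hc => if_neg fun h => hj (h.symm.trans hc)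

/-- A function with the equivariance of the product of the linear forms `x k` and, for every other
block `i ∈ T k`, a linear form in the block `i`. -/
noncomputable def modelSign (b : Fin (n + 1) → β) (m : ℕ) (T : Fin (n + 1) → Finset β)
    (k : Fin (n + 1)) (x : Fin (n + 1) → ℤ) : ZMod 2 :=
  signOr (x k) (blockSign b m (b k) x) + ∑ i ∈ (T k).erase (b k), blockSign b m i x

variable {T : Fin (n + 1) → Finset β}

lemma isEquivariant_modelSign (hm : 0 < m) {k : Fin (n + 1)} (hk : b k ∈ T k) :
    IsEquivariant b m (T k) (modelSign b m T k) := by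
  intro x _ a ha
  have hsum : ∑ i ∈ (T k).erase (b k), blockSign b m i (negBlock b (b a) x) =
      ∑ i ∈ (T k).erase (b k), blockSign b m i x + if b a ∈ (T k).erase (b k) then 1 else 0 := by
    simp only [blockSign_negBlock hm _ ha, Finset.sum_add_distrib, Finset.sum_ite_eq]
  rw [modelSign, hsum, blockSign_negBlock hm _ ha, modelSign]
  by_cases hak : b a = b k
  · rw [show negBlock b (b a) x k = -x k from if_pos hak.symm, if_pos hak, signOr_neg (.inr rfl)]
    simp only [hak, Finset.notMem_erase, if_false, hk, if_true]
    ring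
  · rw [show negBlock b (b a) x k = x k from if_neg (Ne.symm hak), if_neg hak, add_zero, add_assoc]
    simp only [Finset.mem_erase, ne_eq, hak, not_false_eq_true, true_and]

end ModelSign

namespace Simplex

variable {n m : ℕ}

/-- The simplex with vertices `0, e₀, e₀ + e₁, …`, where `e₀, e₁, …` are the unit vectors. -/
def standard (n : ℕ) (hm : 0 < m) : Simplex n m where
  interval _ :=
    { even := 0
      odd := 1
      isEven := Even.zero
      odd_eq := .inl rfl
      even_mem := Set.mem_Icc.2 ⟨by lia, by lia⟩
      odd_mem := Set.mem_Icc.2 ⟨by lia, by lia⟩ }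
  perm := 1

lemma abs_vertex_lt_of_even_eq_zero (hm : 0 < m) {σ : Simplex n m}
    (heven : ∀ a, (σ.interval a).even = 0) (l : Fin (n + 2)) (a : Fin (n + 1)) :
    |σ.vertex l a| < 2 * m := by
  have := heven a
  have := (σ.interval a).odd_eq
  rw [abs_lt]
  unfold vertex
  split_ifs <;> lia

lemma vertex_castSucc_self {σ : Simplex n m} (hperm : σ.perm = 1) (k : Fin (n + 1)) :
    σ.vertex k.castSucc k = (σ.interval k).even := by
  simp [vertex, hperm]

lemma vertex_succ_self {σ : Simplex n m} (hperm : σ.perm = 1) (k : Fin (n + 1)) :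
    σ.vertex k.succ k = (σ.interval k).odd := by
  simp [vertex, hperm]

end Simplex

section ModelCupNumber

variable {n m : ℕ} {β : Type*} [DecidableEq β] {b : Fin (n + 1) → β}
  {T : Fin (n + 1) → Finset β} {σ : Simplex n m}

lemma mem_of_modelSign_ne {k : Fin (n + 1)} (hk : b k ∈ T k)
    (hσ : modelSign b m T k (σ.vertex k.castSucc) ≠ modelSign b m T k (σ.vertex k.succ)) :
    b (σ.perm.symm k) ∈ T k := by
  contrapose! hσ
  have hvertex {j : β} (hj : j ∈ T k) (a : Fin (n + 1)) (ha : b a = j) :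
      σ.vertex k.castSucc a = σ.vertex k.succ a :=
    (σ.vertex_succ_of_ne fun h => hσ (by simpa [← h, ha] using hj)).symm
  unfold modelSign
  rw [hvertex hk k rfl, blockSign_congr (hvertex hk)]
  exact congrArg _ (Finset.sum_congr rfl fun i hi =>
    blockSign_congr (hvertex (Finset.mem_of_mem_erase hi)))

lemma signOr_ne_of_modelSign_ne {k : Fin (n + 1)} (hblock : b (σ.perm.symm k) = b k)
    (hσ : modelSign b m T k (σ.vertex k.castSucc) ≠ modelSign b m T k (σ.vertex k.succ)) :
    signOr (σ.vertex k.castSucc k) (blockSign b m (b k) (σ.vertex k.castSucc)) ≠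
      signOr (σ.vertex k.succ k) (blockSign b m (b k) (σ.vertex k.succ)) := by
  contrapose! hσ
  unfold modelSign
  rw [hσ]
  refine congrArg _ (Finset.sum_congr rfl fun i hi => blockSign_congr fun a ha => ?_)
  refine (σ.vertex_succ_of_ne fun h => Finset.ne_of_mem_erase hi ?_).symm
  rw [← ha, ← hblock, ← h, Equiv.symm_apply_apply]

lemma eq_standard_of_signOr_ne (hm : 0 < m) (hσ : ∀ k,
    signOr (σ.vertex k.castSucc k) (blockSign b m (b k) (σ.vertex k.castSucc)) ≠
      signOr (σ.vertex k.succ k) (blockSign b m (b k) (σ.vertex k.succ))) :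
    σ = Simplex.standard n hm := by
  -- A coordinate that has already moved is odd, hence has a constant non-zero sign.
  have hle (k) : k ≤ σ.perm k := by
    by_contra! hlt
    have hodd (l) (hl : k.castSucc ≤ l) : σ.vertex l k = (σ.interval k).odd :=
      if_pos ((Fin.castSucc_lt_castSucc_iff.2 hlt).trans_le hl)
    apply hσ k
    rw [hodd _ le_rfl, hodd _ k.castSucc_lt_succ.le]
    rcases (σ.interval k).odd_ne_zero.lt_or_gt with h | h
    · rw [signOr_of_neg h, signOr_of_neg h]
    · rw [signOr_of_pos h, signOr_of_pos h]
  have hperm : σ.perm = 1 := Equiv.ext (apply_perm_eq_of_le (f := id) σ.perm hle)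
  have heven (k) : (σ.interval k).even = 0 := by
    have hprod := mul_nonpos_of_signOr_ne (hσ k)
    rw [Simplex.vertex_castSucc_self hperm, Simplex.vertex_succ_self hperm] at hprod
    exact (σ.interval k).even_eq_zero_of_mul_nonpos hprod
  have hodd (k) : (σ.interval k).odd = 1 := by
    have hsign := hσ k
    rw [blockSign_eq_zero (Simplex.abs_vertex_lt_of_even_eq_zero hm heven _),
      blockSign_eq_zero (Simplex.abs_vertex_lt_of_even_eq_zero hm heven _),
      Simplex.vertex_castSucc_self hperm, Simplex.vertex_succ_self hperm, heven k] at hsign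
    rcases (σ.interval k).odd_eq with h | h <;> rw [h, heven k] at hsign ⊢
    · rfl
    · exact absurd rfl hsign
  exact Simplex.ext (funext fun k => UnitInterval.ext (heven k) (hodd k)) hperm

lemma edgeProd_modelSign_standard (hm : 0 < m) :
    edgeProd (modelSign b m T) (Simplex.standard n hm).vertex = 1 := by
  refine Finset.prod_eq_one fun k _ => ?_
  have hblock (l) (j : β) : blockSign b m j ((Simplex.standard n hm).vertex l) = 0 :=
    blockSign_eq_zero (Simplex.abs_vertex_lt_of_even_eq_zero hm (fun _ => rfl) l)
  have hperm : (Simplex.standard n hm).perm = 1 := rfl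
  simp only [modelSign, hblock, Simplex.vertex_castSucc_self hperm, Simplex.vertex_succ_self hperm]
  simp [signOr, Simplex.standard]

lemma cupNumber_modelSign [PartialOrder β] (hm : 0 < m) (hmem : ∀ k, b k ∈ T k)
    (hmax : ∀ k, ∀ j ∈ T k, j ≤ b k) : cupNumber m (modelSign b m T) = 1 := by
  rw [cupNumber, Finset.sum_eq_single (Simplex.standard n hm), edgeProd_modelSign_standard]
  · intro σ _ hσ
    contrapose! hσ
    rw [edgeProd_ne_zero_iff] at hσ
    have hle (k) : b k ≤ b (σ.perm k) := by
      simpa using hmax _ _ (mem_of_modelSign_ne (hmem (σ.perm k)) (hσ (σ.perm k)))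
    have hblock (k) : b (σ.perm.symm k) = b k := by
      simpa using (apply_perm_eq_of_le σ.perm hle (σ.perm.symm k)).symm
    exact eq_standard_of_signOr_ne hm fun k => signOr_ne_of_modelSign_ne (hblock k) (hσ k)
  · exact fun h => absurd (Finset.mem_univ _) h

lemma isEquivariant_signOr {T : Finset β}
    {g : (Fin (n + 1) → ℤ) → ℝ} {f : (Fin (n + 1) → ℤ) → ZMod 2} (hf : IsEquivariant b m T f)
    (hg : ∀ x : Fin (n + 1) → ℤ, (∀ a, |x a| ≤ 2 * m) → ∀ a, |x a| = 2 * m →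
      g (negBlock b (b a) x) = if b a ∈ T then -g x else g x) :
    IsEquivariant b m T fun x => signOr (g x) (f x) := by
  intro x hx a ha
  simp only [hg x hx a ha, hf x hx a ha]
  split_ifs
  · rw [signOr_neg (.inr rfl)]
  · simp only [add_zero]

theorem exists_simplex_forall_mul_nonpos [PartialOrder β] (hm : 0 < m) (hmem : ∀ k, b k ∈ T k)
    (hmax : ∀ k, ∀ j ∈ T k, j ≤ b k) {g : Fin (n + 1) → (Fin (n + 1) → ℤ) → ℝ}
    (hg : ∀ k, ∀ x : Fin (n + 1) → ℤ, (∀ a, |x a| ≤ 2 * m) → ∀ a, |x a| = 2 * m →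
      g k (negBlock b (b a) x) = if b a ∈ T k then -g k x else g k x) :
    ∃ σ : Simplex n m, ∀ k, g k (σ.vertex k.castSucc) * g k (σ.vertex k.succ) ≤ 0 := by
  have hmodel (k) := isEquivariant_modelSign (T := T) hm (hmem k)
  have hcup : cupNumber m (fun k x => signOr (g k x) (modelSign b m T k x)) = 1 := by
    rw [cupNumber_eq hm (fun k => isEquivariant_signOr (hmodel k) (hg k)) hmodel,
      cupNumber_modelSign hm hmem hmax]
  obtain ⟨σ, -, hσ⟩ := Finset.exists_ne_zero_of_sum_ne_zero (hcup.trans_ne one_ne_zero)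
  exact ⟨σ, fun k => mul_nonpos_of_signOr_ne (edgeProd_ne_zero_iff.1 hσ k)⟩

end ModelCupNumber

section BorsukUlam

open Filter Topology

lemma exists_forall_eq_zero_of_forall_exists_mul_nonpos {X κ : Type*} [PseudoMetricSpace X]
    {K : Set X} (hK : IsCompact K) {g : κ → X → ℝ} (hg : ∀ k, Continuous (g k))
    (happrox : ∀ δ > 0, ∃ x ∈ K, ∀ k, ∃ y z, dist x y ≤ δ ∧ dist x z ≤ δ ∧ g k y * g k z ≤ 0) :
    ∃ x ∈ K, ∀ k, g k x = 0 := by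
  choose x hxK y z hy hz hyz using fun r : ℕ => happrox (1 / ((r : ℝ) + 1)) Nat.one_div_pos_of_nat
  obtain ⟨x₀, hx₀, φ, hφ, hlim⟩ := hK.tendsto_subseq hxK
  have hzero : Tendsto (fun r => 1 / ((φ r : ℝ) + 1)) atTop (𝓝 0) :=
    tendsto_one_div_add_atTop_nhds_zero_nat.comp hφ.tendsto_atTop
  have hlim_of_dist {u : ℕ → X} (hu : ∀ r, dist (x r) (u r) ≤ 1 / ((r : ℝ) + 1)) :
      Tendsto (u ∘ φ) atTop (𝓝 x₀) :=
    tendsto_of_tendsto_of_dist hlim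
      (squeeze_zero (fun _ => dist_nonneg) (fun r => hu (φ r)) hzero)
  refine ⟨x₀, hx₀, fun k => mul_self_eq_zero.1 (le_antisymm ?_ (mul_self_nonneg _))⟩
  exact le_of_tendsto'
    ((((hg k).tendsto x₀).comp (hlim_of_dist fun r => hy r k)).mul
      (((hg k).tendsto x₀).comp (hlim_of_dist fun r => hz r k))) fun r => hyz (φ r) k

/-- The point of the cube `[-1, 1]^ι` corresponding to the point `v` of the grid `[-2m, 2m]^ι`. -/
noncomputable def gridPoint {ι : Type*} (m : ℕ) (v : ι → ℤ) : ι → ℝ := fun a => v a / (2 * m)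

lemma gridPoint_negBlock {ι β : Type*} [DecidableEq β] (b : ι → β) (j : β) (m : ℕ) (v : ι → ℤ) :
    gridPoint m (negBlock b j v) = negBlock b j (gridPoint m v) := by
  funext a
  by_cases ha : b a = j <;> simp [gridPoint, negBlock, ha, neg_div]

lemma abs_gridPoint {ι : Type*} (m : ℕ) (v : ι → ℤ) (a : ι) :
    |gridPoint m v a| = (|v a| : ℤ) / (2 * m : ℝ) := by
  rw [gridPoint, abs_div, abs_of_nonneg (by positivity : (0 : ℝ) ≤ 2 * m), Int.cast_abs]

lemma norm_gridPoint_le_one {ι : Type*} [Fintype ι] {m : ℕ} {v : ι → ℤ}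
    (hv : ∀ a, |v a| ≤ 2 * m) : ‖gridPoint m v‖ ≤ 1 := by
  refine (pi_norm_le_iff_of_nonneg zero_le_one).2 fun a => ?_
  rw [Real.norm_eq_abs, abs_gridPoint]
  exact div_le_one_of_le₀ (by exact_mod_cast hv a) (by positivity)

lemma dist_gridPoint_vertex_le {n m : ℕ} (σ : Simplex n m) (l l' : Fin (n + 2)) :
    dist (gridPoint m (σ.vertex l)) (gridPoint m (σ.vertex l')) ≤ 1 / (2 * m) := by
  refine (dist_pi_le_iff (by positivity)).2 fun a => ?_
  rw [Real.dist_eq, gridPoint, gridPoint, ← sub_div, abs_div,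
    abs_of_nonneg (by positivity : (0 : ℝ) ≤ 2 * m)]
  gcongr
  exact_mod_cast σ.abs_vertex_sub_vertex_le l l' a

lemma exists_forall_eq_zero_fin {n : ℕ} {β : Type*} [DecidableEq β] [PartialOrder β]
    {b : Fin (n + 1) → β} {T : Fin (n + 1) → Finset β} (hmem : ∀ k, b k ∈ T k)
    (hmax : ∀ k, ∀ j ∈ T k, j ≤ b k) {g : Fin (n + 1) → (Fin (n + 1) → ℝ) → ℝ}
    (hcont : ∀ k, Continuous (g k))
    (hg : ∀ k, ∀ x : Fin (n + 1) → ℝ, ‖x‖ ≤ 1 → ∀ a, |x a| = 1 →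
      g k (negBlock b (b a) x) = if b a ∈ T k then -g k x else g k x) :
    ∃ x : Fin (n + 1) → ℝ, ‖x‖ ≤ 1 ∧ ∀ k, g k x = 0 := by
  suffices ∃ x ∈ Metric.closedBall (0 : Fin (n + 1) → ℝ) 1, ∀ k, g k x = 0 by
    simpa only [mem_closedBall_zero_iff] using this
  refine exists_forall_eq_zero_of_forall_exists_mul_nonpos (isCompact_closedBall 0 1) hcont
    fun δ hδ => ?_
  obtain ⟨m, hm⟩ := exists_nat_gt (1 / δ)
  have hm_pos : (0 : ℝ) < m := (one_div_pos.2 hδ).trans hm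
  have hmδ : 1 / (2 * m : ℝ) ≤ δ := by
    rw [div_le_iff₀ (by positivity)]
    linarith [(div_lt_iff₀' hδ).1 hm, mul_pos hδ hm_pos]
  obtain ⟨σ, hσ⟩ := exists_simplex_forall_mul_nonpos (Nat.cast_pos.1 hm_pos) hmem hmax
    (g := fun k v => g k (gridPoint m v)) fun k v hv a ha => by
      simp only [gridPoint_negBlock]
      refine hg k _ (norm_gridPoint_le_one hv) a ?_
      rw [abs_gridPoint, ha]
      push_cast
      exact div_self (by positivity)
  exact ⟨gridPoint m (σ.vertex 0),
    mem_closedBall_zero_iff.2 (norm_gridPoint_le_one (σ.abs_vertex_le 0)),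
    fun k => ⟨_, _, (dist_gridPoint_vertex_le σ _ _).trans hmδ,
      (dist_gridPoint_vertex_le σ _ _).trans hmδ, hσ k⟩⟩

/-- A Borsuk–Ulam theorem for products of spheres: gluing the boundary of the cube along the
negations of the blocks turns each block into a projective space, and `g k` into a section of the
tensor product of the tautological line bundles of the blocks in `T k`. -/
theorem exists_forall_eq_zero_of_negBlock {ι β : Type*} [Fintype ι] [DecidableEq β]
    [PartialOrder β] {b : ι → β} {T : ι → Finset β} (hmem : ∀ k, b k ∈ T k)
    (hmax : ∀ k, ∀ j ∈ T k, j ≤ b k) {g : ι → (ι → ℝ) → ℝ} (hcont : ∀ k, Continuous (g k))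
    (hg : ∀ k, ∀ x : ι → ℝ, ‖x‖ ≤ 1 → ∀ a, |x a| = 1 →
      g k (negBlock b (b a) x) = if b a ∈ T k then -g k x else g k x) :
    ∃ x : ι → ℝ, ‖x‖ ≤ 1 ∧ ∀ k, g k x = 0 := by
  cases isEmpty_or_nonempty ι with
  | inl _ => exact ⟨0, by simp, isEmptyElim⟩
  | inr _ =>
    obtain ⟨n, hn⟩ := Nat.exists_eq_succ_of_ne_zero (Fintype.card_ne_zero (α := ι))
    let e : ι ≃ Fin (n + 1) := Fintype.equivFinOfCardEq hn
    have hnorm {x : Fin (n + 1) → ℝ} (hx : ‖x‖ ≤ 1) : ‖x ∘ e‖ ≤ 1 :=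
      (pi_norm_le_iff_of_nonneg zero_le_one).2 fun a => (norm_le_pi_norm x (e a)).trans hx
    have hnegBlock (j : β) (x : Fin (n + 1) → ℝ) :
        negBlock (b ∘ e.symm) j x ∘ e = negBlock b j (x ∘ e) := by
      funext a
      simp [negBlock]
    obtain ⟨x, hx, hzero⟩ := exists_forall_eq_zero_fin (b := b ∘ e.symm) (T := T ∘ e.symm)
      (g := fun k x => g (e.symm k) (x ∘ e)) (fun k => hmem _) (fun k => hmax _)
      (fun k => (hcont _).comp (by fun_prop)) fun k x hx a ha => by
        rw [hnegBlock]
        exact hg _ _ (hnorm hx) (e.symm a) (by simpa using ha)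
    exact ⟨x ∘ e, hnorm hx, fun k => by simpa using hzero (e k)⟩

end BorsukUlam

section Walsh

variable {κ : Type*}

/-- The Walsh function, i.e. the character of the group of sign vectors, with support `A`. -/
def walsh (A : Finset κ) (σ : κ → ℤˣ) : ℝ := ∏ j ∈ A, ((σ j : ℤ) : ℝ)

lemma walsh_mul_mulSingle_neg_one [DecidableEq κ] (A : Finset κ) (σ : κ → ℤˣ) (j : κ) :
    walsh A (σ * Pi.mulSingle j (-1)) = if j ∈ A then -walsh A σ else walsh A σ := by
  have hfactor (i : κ) : (((σ * Pi.mulSingle j (-1) : κ → ℤˣ) i : ℤ) : ℝ) =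
      ((σ i : ℤ) : ℝ) * if i = j then -1 else 1 := by
    by_cases hi : i = j
    · subst hi
      simp
    · simp [hi]
  simp only [walsh, hfactor, Finset.prod_mul_distrib, Finset.prod_ite_eq']
  split_ifs <;> ring

variable [Fintype κ]

lemma sum_walsh_mul_walsh (σ τ : κ → ℤˣ) :
    ∑ A, walsh A σ * walsh A τ = if σ = τ then 2 ^ Fintype.card κ else 0 := by
  have hprod : ∑ A, walsh A σ * walsh A τ = ∏ j, (1 + ((σ j : ℤ) : ℝ) * ((τ j : ℤ) : ℝ)) := by
    simp only [walsh, ← Finset.prod_mul_distrib, Finset.prod_one_add, Finset.powerset_univ]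
  rw [hprod]
  split_ifs with h
  · subst h
    have hfactor (j : κ) : 1 + ((σ j : ℤ) : ℝ) * ((σ j : ℤ) : ℝ) = 2 := by
      rcases Int.units_eq_one_or (σ j) with hj | hj <;> norm_num [hj]
    simp [hfactor]
  · obtain ⟨j, hj⟩ := Function.ne_iff.1 h
    refine Finset.prod_eq_zero (Finset.mem_univ j) ?_
    rw [Int.units_ne_iff_eq_neg.1 hj]
    rcases Int.units_eq_one_or (τ j) with hj | hj <;> norm_num [hj]

lemma two_pow_mul_eq_sum_of_sum_walsh_eq_zero [DecidableEq κ] {F : (κ → ℤˣ) → ℝ}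
    (hF : ∀ A : Finset κ, A.Nonempty → ∑ σ, walsh A σ * F σ = 0) (σ : κ → ℤˣ) :
    2 ^ Fintype.card κ * F σ = ∑ τ, F τ := by
  calc 2 ^ Fintype.card κ * F σ
      = ∑ τ, (∑ A, walsh A σ * walsh A τ) * F τ := by simp [sum_walsh_mul_walsh]
    _ = ∑ A, walsh A σ * ∑ τ, walsh A τ * F τ := by
      simp only [Finset.sum_mul, Finset.mul_sum, mul_assoc]
      exact Finset.sum_comm
    _ = walsh ∅ σ * ∑ τ, walsh ∅ τ * F τ :=
      Finset.sum_eq_single ∅ (fun A _ hA => by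
        rw [hF A (Finset.nonempty_iff_ne_empty.2 hA), mul_zero]) (by simp)
    _ = ∑ τ, F τ := by simp [walsh]

end Walsh

section EqualWeights

variable {κ : Type*} [Fintype κ] [LinearOrder κ]

/-- The block of a non-empty set of signs: there is one parameter for each non-constant Walsh
function, and the parameters are grouped by the largest element of its support. -/
def block (A : {A : Finset κ // A.Nonempty}) : κ := A.1.max' A.2

theorem exists_forall_two_pow_mul_eq_sum
    {w : (κ → ℤˣ) → ({A : Finset κ // A.Nonempty} → ℝ) → ℝ} (hcont : ∀ σ, Continuous (w σ))
    (hw : ∀ σ y, ‖y‖ ≤ 1 → ∀ A, |y A| = 1 →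
      w σ (negBlock block (block A) y) = w (σ * Pi.mulSingle (block A) (-1)) y) :
    ∃ y, ‖y‖ ≤ 1 ∧ ∀ σ, 2 ^ Fintype.card κ * w σ y = ∑ τ, w τ y := by
  obtain ⟨y, hy, hzero⟩ := exists_forall_eq_zero_of_negBlock (b := block) (T := Subtype.val)
    (g := fun A y => ∑ σ, walsh A.1 σ * w σ y) (fun A => A.1.max'_mem A.2)
    (fun A j hj => A.1.le_max' j hj) (fun A => by fun_prop) fun A y hy A' hA' => by
      let flip : (κ → ℤˣ) ≃ (κ → ℤˣ) := Equiv.mulRight (Pi.mulSingle (block A') (-1))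
      have hwalsh (σ) : walsh A.1 (flip σ) =
          if block A' ∈ A.1 then -walsh A.1 σ else walsh A.1 σ :=
        walsh_mul_mulSingle_neg_one _ _ _
      simp only [hw _ y hy A' hA']
      rw [← flip.sum_comp fun σ => walsh A.1 σ * w σ y]
      simp only [hwalsh]
      split_ifs <;> simp [flip]
  exact ⟨y, hy, two_pow_mul_eq_sum_of_sum_walsh_eq_zero fun A hA => hzero ⟨A, hA⟩⟩

end EqualWeights

section SignCells

open Filter Finset Topology

variable {κ X : Type*} [Fintype κ]

/-- The set on which the functions `φ j` have the signs `σ j`. -/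
def signCell (φ : κ → X → ℝ) (σ : κ → ℤˣ) : Set X := {x | ∀ j, 0 < ((σ j : ℤ) : ℝ) * φ j x}

open scoped Classical in
/-- An approximation from below to the indicator of `(γ ∩ signCell φ σ).Nonempty`, continuous in
`φ`, which tests the points of the finite set `A`; it becomes sharper as `M` and `A` increase. -/
noncomputable def softIndicator (A : Finset X) (M : ℕ) (γ : Set X) (φ : κ → X → ℝ)
    (σ : κ → ℤˣ) : ℝ :=
  min 1 (M * ∑ x ∈ A with x ∈ γ, ∏ j, max 0 (((σ j : ℤ) : ℝ) * φ j x))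

lemma softIndicator_nonneg (A : Finset X) (M : ℕ) (γ : Set X) (φ : κ → X → ℝ) (σ : κ → ℤˣ) :
    0 ≤ softIndicator A M γ φ σ := by
  have (x : X) : 0 ≤ ∏ j, max 0 (((σ j : ℤ) : ℝ) * φ j x) :=
    Finset.prod_nonneg fun j _ => le_max_left _ _
  exact le_min zero_le_one (mul_nonneg M.cast_nonneg (Finset.sum_nonneg fun x _ => this x))

open scoped Classical in
lemma softIndicator_le_ite (A : Finset X) (M : ℕ) (γ : Set X) (φ : κ → X → ℝ) (σ : κ → ℤˣ) :
    softIndicator A M γ φ σ ≤ if (γ ∩ signCell φ σ).Nonempty then 1 else 0 := by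
  split_ifs with h
  · exact min_le_left _ _
  · refine (min_le_right _ _).trans_eq (mul_eq_zero_of_right _ (Finset.sum_eq_zero fun x hx => ?_))
    have hx : x ∉ signCell φ σ := fun hcell => h ⟨x, (Finset.mem_filter.1 hx).2, hcell⟩
    obtain ⟨j, hj⟩ := not_forall.1 hx
    exact Finset.prod_eq_zero (Finset.mem_univ j) (max_eq_left (not_lt.1 hj))

lemma eventually_softIndicator_eq_one {Y : Type*} [TopologicalSpace Y] {φ : Y → κ → X → ℝ}
    (hφ : ∀ j x, Continuous fun y => φ y j x) {l : Filter (Finset X × ℕ)} (hl : l ≤ atTop)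
    {u : Finset X × ℕ → Y} {y : Y} (hu : Tendsto u l (𝓝 y)) {γ : Set X} {σ : κ → ℤˣ}
    (h : (γ ∩ signCell (φ y) σ).Nonempty) :
    ∀ᶠ p in l, softIndicator p.1 p.2 γ (φ (u p)) σ = 1 := by
  classical
  obtain ⟨x, hxγ, hx⟩ := h
  let c (y : Y) (x : X) : ℝ := ∏ j, max 0 (((σ j : ℤ) : ℝ) * φ y j x)
  have hc_nonneg (y x) : 0 ≤ c y x := Finset.prod_nonneg fun j _ => le_max_left _ _
  have hc_pos : 0 < c y x := Finset.prod_pos fun j _ => lt_max_of_lt_right (hx j)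
  have hlim : Tendsto (fun p => c (u p) x) l (𝓝 (c y x)) :=
    ((by fun_prop : Continuous fun y => c y x).tendsto y).comp hu
  have hM : Tendsto (fun p : Finset X × ℕ => (p.2 : ℝ)) l atTop :=
    tendsto_natCast_atTop_atTop.comp (tendsto_snd.mono_left (hl.trans_eq prod_atTop_atTop_eq.symm))
  filter_upwards [(hM.atTop_mul_pos hc_pos hlim).eventually_ge_atTop 1,
    hl (eventually_ge_atTop ({x}, 0))] with p hp hxp
  refine min_eq_left (hp.trans ?_)
  gcongr
  exact Finset.single_le_sum (f := c (u p)) (fun x _ => hc_nonneg _ x)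
    (Finset.mem_filter.2 ⟨hxp.1 (Finset.mem_singleton_self x), hxγ⟩)

lemma continuous_softIndicator {Y : Type*} [TopologicalSpace Y] {φ : Y → κ → X → ℝ}
    (hφ : ∀ j x, Continuous fun y => φ y j x) (A : Finset X) (M : ℕ) (γ : Set X) (σ : κ → ℤˣ) :
    Continuous fun y => softIndicator A M γ (φ y) σ := by
  unfold softIndicator
  fun_prop

lemma softIndicator_congr {φ φ' : κ → X → ℝ} {σ σ' : κ → ℤˣ}
    (h : ∀ j x, ((σ j : ℤ) : ℝ) * φ j x = ((σ' j : ℤ) : ℝ) * φ' j x) (A : Finset X) (M : ℕ)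
    (γ : Set X) : softIndicator A M γ φ σ = softIndicator A M γ φ' σ' := by
  simp only [softIndicator, h]

variable [LinearOrder κ] {φ : ({A : Finset κ // A.Nonempty} → ℝ) → κ → X → ℝ}

lemma exists_forall_two_pow_mul_sum_softIndicator_eq (hφ : ∀ j x, Continuous fun y => φ y j x)
    (hodd : ∀ y A, |y A| = 1 → ∀ j,
      φ (negBlock block (block A) y) j = if j = block A then -φ y j else φ y j)
    (Γ : Finset (Set X)) (A : Finset X) (M : ℕ) :
    ∃ y, ‖y‖ ≤ 1 ∧ ∀ σ, 2 ^ Fintype.card κ * ∑ γ ∈ Γ, softIndicator A M γ (φ y) σ =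
      ∑ τ, ∑ γ ∈ Γ, softIndicator A M γ (φ y) τ := by
  refine exists_forall_two_pow_mul_eq_sum
    (w := fun σ y => ∑ γ ∈ Γ, softIndicator A M γ (φ y) σ)
    (fun σ => continuous_finsetSum Γ fun γ _ => continuous_softIndicator hφ A M γ σ)
    fun σ y _ A' hA' => Finset.sum_congr rfl fun γ _ => softIndicator_congr (fun j x => ?_) A M γ
  rw [hodd y A' hA' j]
  by_cases hj : j = block A'
  · subst hj
    simp
  · simp [hj]

open scoped Classical in
theorem exists_forall_two_pow_mul_card_le (hφ : ∀ j x, Continuous fun y => φ y j x)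
    (hodd : ∀ y A, |y A| = 1 → ∀ j,
      φ (negBlock block (block A) y) j = if j = block A then -φ y j else φ y j)
    {Γ : Finset (Set X)} {C : ℝ}
    (hC : ∀ y, ∑ γ ∈ Γ, (#{σ | (γ ∩ signCell (φ y) σ).Nonempty} : ℝ) ≤ C) :
    ∃ y, ∀ σ, 2 ^ Fintype.card κ * (#{γ ∈ Γ | (γ ∩ signCell (φ y) σ).Nonempty} : ℝ) ≤ C := by
  choose u hu hequal using fun p : Finset X × ℕ =>
    exists_forall_two_pow_mul_sum_softIndicator_eq hφ hodd Γ p.1 p.2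
  have hle (p σ) : 2 ^ Fintype.card κ * ∑ γ ∈ Γ, softIndicator p.1 p.2 γ (φ (u p)) σ ≤ C := by
    rw [hequal, Finset.sum_comm]
    refine (Finset.sum_le_sum fun γ _ => ?_).trans (hC (u p))
    rw [Finset.natCast_card_filter]
    exact Finset.sum_le_sum fun τ _ => softIndicator_le_ite _ _ _ _ _
  let U : Ultrafilter (Finset X × ℕ) := Ultrafilter.of atTop
  obtain ⟨y, -, hy⟩ := (isCompact_closedBall (0 : {A : Finset κ // A.Nonempty} → ℝ) 1)
    |>.ultrafilter_le_nhds (U.map u)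
    (tendsto_principal.2 (Eventually.of_forall fun p => mem_closedBall_zero_iff.2 (hu p)))
  refine ⟨y, fun σ => ?_⟩
  have hone : ∀ᶠ p in U, ∀ γ ∈ Γ,
      (γ ∩ signCell (φ y) σ).Nonempty → softIndicator p.1 p.2 γ (φ (u p)) σ = 1 := by
    simp only [eventually_all_finset, eventually_imp_distrib_left]
    exact fun γ _ => eventually_softIndicator_eq_one hφ (Ultrafilter.of_le _) hy
  obtain ⟨p, hp⟩ := hone.exists
  refine le_trans ?_ (hle p σ)
  rw [Finset.natCast_card_filter]
  gcongr with γ hγ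
  split_ifs with h
  · exact (hp γ hγ h).ge
  · exact softIndicator_nonneg _ _ _ _ _

end SignCells

section Components

variable {κ X : Type*} {φ : κ → X → ℝ} {σ τ : κ → ℤˣ} {x : X}

lemma ne_zero_of_mem_signCell (hx : x ∈ signCell φ σ) (j : κ) : φ j x ≠ 0 :=
  right_ne_zero_of_mul (hx j).ne'

lemma exists_mem_signCell (hx : ∀ j, φ j x ≠ 0) : ∃ σ, x ∈ signCell φ σ := by
  choose σ hσ using fun j => show ∃ u : ℤˣ, 0 < ((u : ℤ) : ℝ) * φ j x from
    (hx j).lt_or_gt.elim (fun h => ⟨-1, by simpa using h⟩) fun h => ⟨1, by simpa using h⟩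
  exact ⟨σ, hσ⟩

lemma eq_of_mem_signCell (hσ : x ∈ signCell φ σ) (hτ : x ∈ signCell φ τ) : σ = τ := by
  funext j
  by_contra hne
  have hpos := hσ j
  rw [Int.units_ne_iff_eq_neg.1 hne, Units.val_neg, Int.cast_neg, neg_mul] at hpos
  exact (neg_pos.1 hpos).not_gt (hτ j)

variable [TopologicalSpace X]

/-- The connected components of `U` that meet `γ`. -/
def crossedComponents (γ U : Set X) : Set (Set X) :=
  {S | ∃ x ∈ γ, x ∈ U ∧ S = connectedComponentIn U x}

lemma connectedComponentIn_subset_signCell (hφ : ∀ j, Continuous (φ j))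
    (hx : x ∈ signCell φ σ) :
    connectedComponentIn {x | ∀ j, φ j x ≠ 0} x ⊆ signCell φ σ := by
  intro z hz j
  by_contra! hneg
  have hxmem : x ∈ connectedComponentIn {x | ∀ j, φ j x ≠ 0} x :=
    mem_connectedComponentIn (ne_zero_of_mem_signCell hx)
  obtain ⟨v, hv, hzero⟩ := isPreconnected_connectedComponentIn.intermediate_value hz hxmem
    (f := fun x => ((σ j : ℤ) : ℝ) * φ j x) (by fun_prop) ⟨hneg, (hx j).le⟩
  rcases mul_eq_zero.1 hzero with h | h
  · exact (σ j).ne_zero (Int.cast_eq_zero.1 h)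
  · exact connectedComponentIn_subset _ _ hv j h

open Finset in
open scoped Classical in
lemma card_signCell_le_ncard_crossedComponents [Fintype κ] [DecidableEq κ]
    (hφ : ∀ j, Continuous (φ j)) {γ : Set X}
    (hfin : (crossedComponents γ {x | ∀ j, φ j x ≠ 0}).Finite) :
    #{σ | (γ ∩ signCell φ σ).Nonempty} ≤ (crossedComponents γ {x | ∀ j, φ j x ≠ 0}).ncard := by
  have hpoint (σ) (hσ : σ ∈ ({σ | (γ ∩ signCell φ σ).Nonempty} : Finset (κ → ℤˣ))) :
      ∃ x, x ∈ γ ∩ signCell φ σ := (mem_filter.1 hσ).2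
  choose x hx using hpoint
  rw [← Set.ncard_coe_finset]
  refine Set.ncard_le_ncard_of_injOn
    (fun σ => if hσ : _ then connectedComponentIn {x | ∀ j, φ j x ≠ 0} (x σ hσ) else ∅) ?_ ?_ hfin
  · intro σ hσ
    exact ⟨x σ hσ, (hx σ hσ).1, ne_zero_of_mem_signCell (hx σ hσ).2, dif_pos hσ⟩
  · intro σ hσ τ hτ heq
    simp only [dif_pos (mem_coe.1 hσ), dif_pos (mem_coe.1 hτ)] at heq
    refine eq_of_mem_signCell (connectedComponentIn_subset_signCell hφ (hx σ hσ).2 ?_) (hx τ hτ).2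
    rw [heq]
    exact mem_connectedComponentIn (ne_zero_of_mem_signCell (hx τ hτ).2)

end Components

section PolynomialFamilies

open MvPolynomial

lemma exists_injective_degree_le {κ : Type*} [Fintype κ] {n d : ℕ}
    (h : Fintype.card κ ≤ (n + d).choose n) :
    ∃ f : κ → Fin n →₀ ℕ, Function.Injective f ∧ ∀ k, (f k).degree ≤ d := by
  have hcard : Fintype.card κ ≤
      (Finset.finsuppAntidiag (Finset.univ : Finset (Fin (n + 1))) d).card := by
    rwa [Finset.card_finsuppAntidiag_nat_eq_choose, Finset.card_univ, Fintype.card_fin,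
      Nat.add_right_comm, Nat.add_sub_cancel, ← Nat.choose_symm_add]
  obtain ⟨f, hf⟩ := Function.Embedding.exists_of_card_le_finset hcard
  have hsum (k) : f k 0 + (f k).tail.degree = d := by
    rw [Finsupp.degree_eq_sum, ← (Finset.mem_finsuppAntidiag.1 (hf ⟨k, rfl⟩)).1, Fin.sum_univ_succ]
    rfl
  refine ⟨fun k => (f k).tail, fun k l hkl => f.injective ?_,
    fun k => (Nat.le_add_left _ _).trans_eq (hsum k)⟩
  have hkl : (f k).tail = (f l).tail := hkl
  have hzero : f k 0 = f l 0 := by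
    have := hsum k
    have := hsum l
    rw [hkl] at *
    lia
  rw [← Finsupp.cons_tail (f k), ← Finsupp.cons_tail (f l), hkl, hzero]

variable {κ τ : Type*} [Fintype κ] {f : Option κ → τ →₀ ℕ} {y : κ → ℝ}

/-- Coefficients, indexed by `Option κ`, parametrizing a hemisphere (up to scaling) by the cube
`[-1, 1]^κ`: the coefficient at `none` vanishes exactly on the boundary of the cube. -/
def hemisphereCoeff (y : κ → ℝ) : Option κ → ℝ
  | none => ∏ k, (1 - y k ^ 2)
  | some k => y k

/-- The linear combination of the monomials `f` with the coefficients `hemisphereCoeff y`. -/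
noncomputable def hemispherePolynomial (f : Option κ → τ →₀ ℕ) (y : κ → ℝ) : MvPolynomial τ ℝ :=
  ∑ o, monomial (f o) (hemisphereCoeff y o)

lemma coeff_hemispherePolynomial (hf : Function.Injective f) (o : Option κ) :
    coeff (f o) (hemispherePolynomial f y) = hemisphereCoeff y o := by
  classical
  simp only [hemispherePolynomial, coeff_sum, coeff_monomial, hf.eq_iff, Finset.sum_ite_eq',
    Finset.mem_univ, if_true]

lemma hemispherePolynomial_ne_zero (hf : Function.Injective f) : hemispherePolynomial f y ≠ 0 := by
  intro hzero
  have hcoeff (o) : hemisphereCoeff y o = 0 := by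
    rw [← coeff_hemispherePolynomial hf, hzero, coeff_zero]
  have hy : y = 0 := funext fun k => hcoeff (some k)
  simpa [hemisphereCoeff, hy] using hcoeff none

lemma totalDegree_hemispherePolynomial_le {d : ℕ} (hf : ∀ o, (f o).degree ≤ d) :
    (hemispherePolynomial f y).totalDegree ≤ d :=
  totalDegree_finsetSum_le fun o _ => (totalDegree_monomial_le _ _).trans (hf o)

lemma continuous_eval_hemispherePolynomial (f : Option κ → τ →₀ ℕ) (x : τ → ℝ) :
    Continuous fun y => eval x (hemispherePolynomial f y) := by
  simp only [hemispherePolynomial, Fintype.sum_option, hemisphereCoeff, map_add, map_sum,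
    eval_monomial]
  fun_prop

lemma hemispherePolynomial_neg {k : κ} (hk : |y k| = 1) :
    hemispherePolynomial f (-y) = -hemispherePolynomial f y := by
  have hprod : ∏ k, (1 - y k ^ 2) = 0 :=
    Finset.prod_eq_zero (Finset.mem_univ k) (by rw [← sq_abs, hk]; ring)
  simp [hemispherePolynomial, Fintype.sum_option, hemisphereCoeff, hprod]

theorem exists_polynomial_family {ι β : Type*} [Fintype ι] [DecidableEq β] (b : ι → β) {n : ℕ}
    {d : β → ℕ} (hd : ∀ j, Fintype.card {a // b a = j} + 1 ≤ (n + d j).choose n) :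
    ∃ P : (ι → ℝ) → β → MvPolynomial (Fin n) ℝ,
      (∀ y j, P y j ≠ 0 ∧ (P y j).totalDegree ≤ d j) ∧
      (∀ j x, Continuous fun y => eval x (P y j)) ∧
      ∀ y a, |y a| = 1 → ∀ j,
        P (negBlock b (b a) y) j = if j = b a then -P y j else P y j := by
  choose f hinj hdeg using fun j =>
    exists_injective_degree_le ((Fintype.card_option (α := {a // b a = j})).trans_le (hd j))
  let restrict (j : β) (y : ι → ℝ) : {a // b a = j} → ℝ := fun a => y a
  refine ⟨fun y j => hemispherePolynomial (f j) (restrict j y),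
    fun y j => ⟨hemispherePolynomial_ne_zero (hinj j),
      totalDegree_hemispherePolynomial_le (hdeg j)⟩,
    fun j x => (continuous_eval_hemispherePolynomial (f j) x).comp (by fun_prop),
    fun y a ha j => ?_⟩
  split_ifs with hj
  · have hneg : restrict j (negBlock b (b a) y) = -restrict j y :=
      funext fun c => if_pos (c.2.trans hj)
    exact (congrArg _ hneg).trans (hemispherePolynomial_neg (k := ⟨a, hj.symm⟩) ha)
  · exact congrArg _ (funext fun c => if_neg (c.2.trans_ne hj))

lemma card_block_le {κ : Type*} [Fintype κ] [LinearOrder κ] [LocallyFiniteOrderBot κ] (j : κ) :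
    Fintype.card {A : {A : Finset κ // A.Nonempty} // block A = j} ≤ 2 ^ (Finset.Iio j).card := by
  rw [← Finset.card_powerset, ← Fintype.card_coe]
  have hmem (A : {A : Finset κ // A.Nonempty}) (hA : block A = j) : j ∈ A.1 :=
    hA ▸ A.1.max'_mem A.2
  refine Fintype.card_le_of_injective (fun A => ⟨A.1.1.erase j, Finset.mem_powerset.2 fun i hi =>
    Finset.mem_Iio.2 ?_⟩) fun A A' h => ?_
  · exact lt_of_le_of_ne (A.2 ▸ A.1.1.le_max' i (Finset.mem_of_mem_erase hi))
      (Finset.ne_of_mem_erase hi)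
  · have herase : A.1.1.erase j = A'.1.1.erase j := congrArg Subtype.val h
    refine Subtype.ext (Subtype.ext ?_)
    rw [← Finset.insert_erase (hmem A.1 A.2), herase, Finset.insert_erase (hmem A'.1 A'.2)]

end PolynomialFamilies

section Degrees

variable {n D : ℕ}

lemma pow_add_factorial_le_factorial_mul_choose (hn : 1 ≤ n) (d : ℕ) :
    d ^ n + n.factorial ≤ n.factorial * (n + d).choose n := by
  rw [add_comm n d, ← Nat.ascFactorial_eq_factorial_mul_choose]
  induction n, hn using Nat.le_induction with
  | base => simp [Nat.ascFactorial]
  | succ k _ ih =>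
    calc d ^ (k + 1) + (k + 1).factorial
        ≤ (d + 1 + k) * (d ^ k + k.factorial) := by
          rw [pow_succ, Nat.factorial_succ]
          nlinarith [Nat.zero_le (d ^ k), Nat.zero_le (k * d ^ k), Nat.zero_le (d * k.factorial)]
      _ ≤ (d + 1 + k) * (d + 1).ascFactorial k := Nat.mul_le_mul_left _ ih
      _ = (d + 1).ascFactorial (k + 1) := Nat.ascFactorial_succ.symm

/-- The least `d` with `n! * 2 ^ j ≤ d ^ n`; polynomials of this degree in `n` variables have more
than `2 ^ j` coefficients. -/
noncomputable def blockDegree (n j : ℕ) : ℕ := ⌈((n.factorial * 2 ^ j : ℕ) : ℝ) ^ (1 / n : ℝ)⌉₊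

lemma two_pow_add_one_le_choose (hn : 1 ≤ n) (j : ℕ) :
    2 ^ j + 1 ≤ (n + blockDegree n j).choose n := by
  have hpow : n.factorial * 2 ^ j ≤ blockDegree n j ^ n := by
    have : ((n.factorial * 2 ^ j : ℕ) : ℝ) ≤ (blockDegree n j : ℝ) ^ n := by
      rw [← Real.rpow_inv_natCast_pow (Nat.cast_nonneg (n.factorial * 2 ^ j))
        (Nat.one_le_iff_ne_zero.1 hn), ← one_div]
      exact pow_le_pow_left₀ (by positivity) (Nat.le_ceil _) n
    exact_mod_cast this
  refine Nat.le_of_mul_le_mul_left ?_ n.factorial_pos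
  calc n.factorial * (2 ^ j + 1) ≤ blockDegree n j ^ n + n.factorial := by
        rw [mul_add_one]
        gcongr
    _ ≤ _ := pow_add_factorial_le_factorial_mul_choose hn _

lemma blockDegree_le (n j : ℕ) :
    (blockDegree n j : ℝ) ≤ 2 * (n.factorial : ℝ) ^ (1 / n : ℝ) * ((2 : ℝ) ^ (1 / n : ℝ)) ^ j := by
  have hroot : (1 : ℝ) ≤ ((n.factorial * 2 ^ j : ℕ) : ℝ) ^ (1 / n : ℝ) :=
    Real.one_le_rpow (by exact_mod_cast Nat.mul_pos n.factorial_pos (by positivity)) (by positivity)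
  calc (blockDegree n j : ℝ) ≤ 2 * ((n.factorial * 2 ^ j : ℕ) : ℝ) ^ (1 / n : ℝ) :=
        Nat.ceil_le_two_mul (by linarith)
    _ = _ := by
      rw [Nat.cast_mul, Real.mul_rpow (by positivity) (by positivity), Nat.cast_pow,
        Nat.cast_ofNat, ← Real.rpow_pow_comm zero_le_two, mul_assoc]

lemma one_lt_two_rpow_one_div (hn : 1 ≤ n) : 1 < (2 : ℝ) ^ (1 / n : ℝ) :=
  Real.one_lt_rpow one_lt_two (by positivity)

lemma sum_blockDegree_le (hn : 1 ≤ n) {s : ℕ}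
    (h : 2 ^ n * (n.factorial : ℝ) * 2 ^ s ≤ (D * ((2 : ℝ) ^ (1 / n : ℝ) - 1)) ^ n) :
    ∑ j ∈ Finset.range s, blockDegree n j ≤ D := by
  have hn' : n ≠ 0 := Nat.one_le_iff_ne_zero.1 hn
  have hq := one_lt_two_rpow_one_div hn
  have hqn : ((2 : ℝ) ^ (1 / n : ℝ)) ^ n = 2 := by
    rw [one_div, Real.rpow_inv_natCast_pow zero_le_two hn']
  have han : ((n.factorial : ℝ) ^ (1 / n : ℝ)) ^ n = n.factorial := by
    rw [one_div, Real.rpow_inv_natCast_pow (by positivity) hn']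
  set q : ℝ := (2 : ℝ) ^ (1 / n : ℝ)
  set a : ℝ := (n.factorial : ℝ) ^ (1 / n : ℝ)
  have hq' : 0 < q - 1 := sub_pos.2 hq
  have hlast : 2 * a * q ^ s ≤ D * (q - 1) := by
    refine le_of_pow_le_pow_left₀ hn' (by positivity) ?_
    calc (2 * a * q ^ s) ^ n = 2 ^ n * a ^ n * (q ^ n) ^ s := by ring
      _ ≤ (D * (q - 1)) ^ n := by rwa [han, hqn]
  have hsum : ((∑ j ∈ Finset.range s, blockDegree n j : ℕ) : ℝ) ≤ D := by
    calc ((∑ j ∈ Finset.range s, blockDegree n j : ℕ) : ℝ)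
        ≤ ∑ j ∈ Finset.range s, 2 * a * q ^ j := by
          rw [Nat.cast_sum]
          exact Finset.sum_le_sum fun j _ => blockDegree_le n j
      _ = 2 * a * (q ^ s - 1) / (q - 1) := by
          rw [← Finset.mul_sum, geom_sum_eq hq.ne', mul_div_assoc]
      _ ≤ D := by
          rw [div_le_iff₀ hq', mul_sub_one]
          exact (sub_le_self _ (by positivity)).trans hlast
  exact_mod_cast hsum

lemma exists_sum_blockDegree_le (hn : 1 ≤ n) (hD : 1 ≤ D) :
    ∃ s, ∑ j ∈ Finset.range s, blockDegree n j ≤ D ∧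
      ((2 : ℝ) ^ s)⁻¹ ≤ 2 ^ (n + 1) * (Nat.factorial n : ℝ) / ((2 : ℝ) ^ ((1 : ℝ) / n) - 1) ^ n *
        ((D : ℝ) ^ n)⁻¹ := by
  have hq : 0 < (2 : ℝ) ^ (1 / n : ℝ) - 1 := sub_pos.2 (one_lt_two_rpow_one_div hn)
  set q : ℝ := (2 : ℝ) ^ (1 / n : ℝ)
  have hbound {s : ℕ} (hs : (D * (q - 1)) ^ n / (2 ^ n * n.factorial) < 2 ^ (s + 1)) :
      ((2 : ℝ) ^ s)⁻¹ ≤ 2 ^ (n + 1) * (Nat.factorial n : ℝ) / (q - 1) ^ n * ((D : ℝ) ^ n)⁻¹ := by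
    rw [div_lt_iff₀ (by positivity)] at hs
    rw [← div_eq_mul_inv, div_div, ← mul_pow, inv_eq_one_div,
      div_le_div_iff₀ (by positivity) (by positivity), one_mul, mul_comm (q - 1)]
    exact hs.le.trans_eq (by ring)
  rcases lt_or_ge ((D * (q - 1)) ^ n / (2 ^ n * n.factorial)) 1 with hsmall | hlarge
  · exact ⟨0, by simp, hbound (hsmall.trans (by norm_num))⟩
  · obtain ⟨s, hle, hlt⟩ := exists_nat_pow_near hlarge one_lt_two
    rw [le_div_iff₀' (by positivity)] at hle
    exact ⟨s, sum_blockDegree_le hn hle, hbound hlt⟩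

end Degrees

section Partitioning

open Finset MvPolynomial

lemma setOf_eval_prod_ne_zero {κ τ : Type*} [Fintype κ] (P : κ → MvPolynomial τ ℝ) :
    {x | eval x (∏ j, P j) ≠ 0} = {x | ∀ j, eval x (P j) ≠ 0} := by
  simp [map_prod, prod_ne_zero_iff]

open scoped Classical in
theorem exists_forall_two_pow_mul_card_components_le {κ : Type*} [Fintype κ] [LinearOrder κ]
    [LocallyFiniteOrderBot κ] {n : ℕ} {d : κ → ℕ}
    (hd : ∀ j, 2 ^ #(Iio j) + 1 ≤ (n + d j).choose n) {Γ : Finset (Set (Fin n → ℝ))} {B : ℝ}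
    (hB : ∀ q : MvPolynomial (Fin n) ℝ, q ≠ 0 → q.totalDegree ≤ ∑ j, d j → ∀ γ ∈ Γ,
      (crossedComponents γ {x | eval x q ≠ 0}).Finite ∧
        ((crossedComponents γ {x | eval x q ≠ 0}).ncard : ℝ) ≤ B) :
    ∃ p : MvPolynomial (Fin n) ℝ, p ≠ 0 ∧ p.totalDegree ≤ ∑ j, d j ∧ ∀ x, eval x p ≠ 0 →
      2 ^ Fintype.card κ *
        (#{γ ∈ Γ | (γ ∩ connectedComponentIn {x | eval x p ≠ 0} x).Nonempty} : ℝ) ≤ B * #Γ := by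
  obtain ⟨P, hP, hcont, hodd⟩ := exists_polynomial_family block fun j =>
    (Nat.add_le_add_right (card_block_le j) 1).trans (hd j)
  have hne (y) : ∏ j, P y j ≠ 0 := prod_ne_zero_iff.2 fun j _ => (hP y j).1
  have hdeg (y) : (∏ j, P y j).totalDegree ≤ ∑ j, d j :=
    (totalDegree_finsetProd _ _).trans (sum_le_sum fun j _ => (hP y j).2)
  let φ (y : {A : Finset κ // A.Nonempty} → ℝ) (j : κ) (x : Fin n → ℝ) : ℝ := eval x (P y j)
  have hφ (y) (j : κ) : Continuous (φ y j) := continuous_eval (P y j)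
  have htotal (y) : ∑ γ ∈ Γ, (#{σ | (γ ∩ signCell (φ y) σ).Nonempty} : ℝ) ≤ B * #Γ := by
    rw [mul_comm, ← nsmul_eq_mul]
    refine sum_le_card_nsmul _ _ _ fun γ hγ => ?_
    obtain ⟨hfin, hle⟩ := hB _ (hne y) (hdeg y) γ hγ
    rw [setOf_eval_prod_ne_zero] at hfin hle
    exact le_trans (mod_cast card_signCell_le_ncard_crossedComponents (hφ y) hfin) hle
  obtain ⟨y, hy⟩ := exists_forall_two_pow_mul_card_le (φ := φ) hcont
    (fun y A hA j => by
      funext x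
      simp only [φ, hodd y A hA j]
      split_ifs <;> simp) htotal
  refine ⟨∏ j, P y j, hne y, hdeg y, fun x hx => ?_⟩
  rw [setOf_eval_prod_ne_zero]
  obtain ⟨σ, hσ⟩ := exists_mem_signCell (φ := φ y) ((setOf_eval_prod_ne_zero (P y)).subset hx)
  refine le_trans ?_ (hy σ)
  gcongr
  exact connectedComponentIn_subset_signCell (hφ y) hσ

end Partitioning

end PolynomialPartitioning

open PolynomialPartitioning in
theorem polynomial_partitioning_varieties_general (n D : ℕ) (hn : 1 ≤ n) (hD : 1 ≤ D)
    (Γ : Finset (Set (Fin n → ℝ))) (B : ℝ)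
    (hB : ∀ q : MvPolynomial (Fin n) ℝ, q ≠ 0 → q.totalDegree ≤ D → ∀ γ ∈ Γ,
      (crossedComponents γ {y | MvPolynomial.eval y q ≠ 0}).Finite ∧
        ((crossedComponents γ {y | MvPolynomial.eval y q ≠ 0}).ncard : ℝ) ≤ B) :
    ∃ p : MvPolynomial (Fin n) ℝ, p ≠ 0 ∧ p.totalDegree ≤ D ∧
      ∀ x : Fin n → ℝ, MvPolynomial.eval x p ≠ 0 →
        ({γ ∈ (Γ : Set (Set (Fin n → ℝ))) |
            (γ ∩ connectedComponentIn {y | MvPolynomial.eval y p ≠ 0} x).Nonempty}.ncard : ℝ) ≤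
          (2 ^ (n + 1) * (Nat.factorial n : ℝ) / ((2 : ℝ) ^ ((1 : ℝ) / n) - 1) ^ n) *
            B * ((D : ℝ) ^ n)⁻¹ * Γ.card := by
  classical
  obtain ⟨s, hsum, hs⟩ := exists_sum_blockDegree_le hn hD
  rw [← Fin.sum_univ_eq_sum_range] at hsum
  obtain ⟨p, hp, hdeg, hcard⟩ := exists_forall_two_pow_mul_card_components_le (Γ := Γ) (B := B)
    (d := fun j : Fin s => blockDegree n j)
    (fun j => (Fin.card_Iio j).symm ▸ two_pow_add_one_le_choose hn j)
    fun q hq hqdeg => hB q hq (hqdeg.trans hsum)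
  refine ⟨p, hp, hdeg.trans hsum, fun x hx => ?_⟩
  have hx := hcard x hx
  rw [Fintype.card_fin] at hx
  have hBΓ : 0 ≤ B * Γ.card := le_trans (by positivity) hx
  simp only [Finset.mem_coe, ← Finset.coe_filter, Set.ncard_coe_finset]
  calc _ ≤ ((2 : ℝ) ^ s)⁻¹ * (B * Γ.card) := (le_inv_mul_iff₀ (by positivity)).2 hx
    _ ≤ _ := mul_le_mul_of_nonneg_right hs hBΓ
    _ = _ := by ring

/-- **Guth's polynomial partitioning for a single family of varieties**, with the
Solymosi–Tao crossing bound replaced by the explicit hypothesis that every member of `Γ`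
intersects at most `B` connected components of the complement of the zero set of any non-zero
polynomial of degree at most `D`, and with the explicit constant
`C_n = 2^(n+1)·n! / (2^(1/n) − 1)^n`. -/
theorem polynomial_partitioning_varieties (n D : ℕ) (hn : 1 ≤ n) (hD : 1 ≤ D)
    (Γ : Finset (Set (Fin n → ℝ)))
    (halg : ∀ γ ∈ Γ, ∃ (m : ℕ) (q : Fin m → MvPolynomial (Fin n) ℝ),
      γ = {x : Fin n → ℝ | ∀ k, MvPolynomial.eval x (q k) = 0})
    (B : ℝ) (hB1 : 1 ≤ B)
    (hB : ∀ q : MvPolynomial (Fin n) ℝ, q ≠ 0 → q.totalDegree ≤ D → ∀ γ ∈ Γ,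
      {S : Set (Fin n → ℝ) | ∃ x ∈ γ, MvPolynomial.eval x q ≠ 0 ∧
          S = connectedComponentIn {y : Fin n → ℝ | MvPolynomial.eval y q ≠ 0} x}.Finite ∧
        ({S : Set (Fin n → ℝ) | ∃ x ∈ γ, MvPolynomial.eval x q ≠ 0 ∧
          S = connectedComponentIn {y : Fin n → ℝ | MvPolynomial.eval y q ≠ 0} x}.ncard : ℝ) ≤ B) :
    ∃ p : MvPolynomial (Fin n) ℝ, p ≠ 0 ∧ p.totalDegree ≤ D ∧
      ∀ x : Fin n → ℝ, MvPolynomial.eval x p ≠ 0 →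
        ({γ ∈ (Γ : Set (Set (Fin n → ℝ))) |
            (γ ∩ connectedComponentIn {y : Fin n → ℝ | MvPolynomial.eval y p ≠ 0} x).Nonempty}.ncard : ℝ) ≤
          (2 ^ (n + 1) * (Nat.factorial n : ℝ) / ((2 : ℝ) ^ ((1 : ℝ) / n) - 1) ^ n) *
            B * ((D : ℝ) ^ n)⁻¹ * Γ.card :=
  polynomial_partitioning_varieties_general n D hn hD Γ B hB
end
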